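/- arXiv:math/0410246 — 2 statements merged into one kernel-verified Lean document; each statement's English description precedes it below -/
import Mathlib

section
/- For all integers n ≥ 3 and ℓ ≥ 1, liminf_{X→∞} (log |F_n^{(ℓ)}(X)|) / (log |F_n(X)|) ≥ 2/((n−1)(n+2)ℓ). -/
/-- A finite-dimensional intermediate field of `ℂ/ℚ` is a number field. -/
noncomputable instance (F : IntermediateField ℚ ℂ) [FiniteDimensional ℚ F] :
    NumberField F := ⟨⟩

/-- The set of number fields (realized as intermediate fields of `ℂ/ℚ`) of degree `n`
over `ℚ` whose discriminant has absolute value at most `X`. -/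
def NumberFieldSet (n : ℕ) (X : ℝ) : Set (IntermediateField ℚ ℂ) :=
  {F | ∃ h : FiniteDimensional ℚ F, Module.finrank ℚ F = n ∧
    (haveI := h; |(NumberField.discr F : ℝ)| ≤ X)}

/-- The subset of `NumberFieldSet n X` of those fields with class number divisible by `ℓ`. -/
def NumberFieldSetDvd (n ℓ : ℕ) (X : ℝ) : Set (IntermediateField ℚ ℂ) :=
  {F | ∃ h : FiniteDimensional ℚ F, Module.finrank ℚ F = n ∧
    (haveI := h; |(NumberField.discr F : ℝ)| ≤ X ∧ ℓ ∣ NumberField.classNumber F)}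

/-- The equivalence relation "being isomorphic as fields" on a set of intermediate
fields of `ℂ/ℚ`; the quotient is the set of isomorphism classes. -/
def isoSetoid (S : Set (IntermediateField ℚ ℂ)) : Setoid S :=
  ⟨fun K L => Nonempty ((K : IntermediateField ℚ ℂ) ≃+* (L : IntermediateField ℚ ℂ)),
    ⟨fun _ => ⟨RingEquiv.refl _⟩, fun ⟨e⟩ => ⟨e.symm⟩, fun ⟨e⟩ ⟨f⟩ => ⟨e.trans f⟩⟩⟩

/-- `|F_n(X)|`: the number of isomorphism classes of number fields of degree `n`
with discriminant of absolute value at most `X`. -/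
noncomputable def Fcard (n : ℕ) (X : ℝ) : ℕ :=
  Nat.card (Quotient (isoSetoid (NumberFieldSet n X)))

/-- `|F_n^{(ℓ)}(X)|`: the number of those classes with class number divisible by `ℓ`. -/
noncomputable def FcardDvd (n ℓ : ℕ) (X : ℝ) : ℕ :=
  Nat.card (Quotient (isoSetoid (NumberFieldSetDvd n ℓ X)))


section

open NumberField MeasureTheory Classical in
lemma aux_box_add (K : Type*) [Field K] [NumberField K] {r s : NNReal}
    {x y : mixedEmbedding.mixedSpace K}
    (hx : x ∈ mixedEmbedding.convexBodyLT K (fun _ => r))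
    (hy : y ∈ mixedEmbedding.convexBodyLT K (fun _ => s)) :
    x + y ∈ mixedEmbedding.convexBodyLT K (fun _ => r + s) := by
  simp only [Set.mem_prod, Set.mem_univ_pi, mem_ball_zero_iff, NNReal.coe_add] at hx hy ⊢
  refine ⟨fun w => ?_, fun w => ?_⟩
  · exact (norm_add_le _ _).trans_lt (add_lt_add (hx.1 w) (hy.1 w))
  · exact (norm_add_le _ _).trans_lt (add_lt_add (hx.2 w) (hy.2 w))

open NumberField in
lemma aux_eq_zero_of_lt_one (K : Type*) [Field K] [NumberField K] (x : 𝓞 K)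
    (hx : ∀ w : InfinitePlace K, w (x : K) < 1) : x = 0 := by
  by_contra h
  obtain ⟨w⟩ : Nonempty (InfinitePlace K) := inferInstance
  have := InfinitePlace.one_le_of_lt_one (w := w) h (fun w' _ => hx w')
  exact absurd (hx w) (not_lt.mpr this)

open NumberField MeasureTheory Classical in
lemma aux_box_vol (K : Type*) [Field K] [NumberField K] (r : NNReal) :
    volume (mixedEmbedding.convexBodyLT K (fun _ => r)) =
      ((mixedEmbedding.convexBodyLTFactor K * r ^ (Module.finrank ℚ K) : NNReal) : ENNReal) := by
  rw [mixedEmbedding.convexBodyLT_volume]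
  rw [Finset.prod_pow_eq_pow_sum, InfinitePlace.sum_mult_eq]
  push_cast; rfl

open NumberField MeasureTheory Classical in
lemma aux_box_meas (K : Type*) [Field K] [NumberField K] (r : NNReal) :
    MeasurableSet (mixedEmbedding.convexBodyLT K (fun _ => r)) := by
  apply IsOpen.measurableSet
  apply IsOpen.prod
  · exact isOpen_set_pi Set.finite_univ fun w _ => Metric.isOpen_ball
  · exact isOpen_set_pi Set.finite_univ fun w _ => Metric.isOpen_ball

open NumberField MeasureTheory Classical in
lemma packing (K : Type*) [Field K] [NumberField K] (B : NNReal) (s : Finset (𝓞 K))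
    (hs : ∀ x ∈ s, ∀ w : InfinitePlace K, w (x : K) < B) :
    (s.card : ℝ) ≤ (2 * B + 1) ^ (Module.finrank ℚ K) := by
  set b := mixedEmbedding.convexBodyLT K (fun _ => (1/2 : NNReal)) with hb
  let T : 𝓞 K → Set (mixedEmbedding.mixedSpace K) := fun x =>
    (fun y => mixedEmbedding K (x : K) + y) '' b
  have hT : ∀ x, T x = (fun y => -mixedEmbedding K (x : K) + y) ⁻¹' b := by
    intro x
    ext z
    simp only [T, Set.mem_image, Set.mem_preimage]
    constructor
    · rintro ⟨y, hy, rfl⟩; simpa using hy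
    · intro h; exact ⟨_, h, by simp⟩
  have hvolT : ∀ x, volume (T x) = volume b := by
    intro x
    rw [hT, measure_preimage_add]
  have hmeas : ∀ x, MeasurableSet (T x) := by
    intro x
    rw [hT]
    exact (measurable_const_add _) (aux_box_meas K _)
  have hdisj : (s : Set (𝓞 K)).PairwiseDisjoint T := by
    intro x _ y _ hxy
    rw [Function.onFun, Set.disjoint_left]
    rintro z ⟨u, hu, rfl⟩ ⟨v, hv, hzv⟩
    apply hxy
    have h1 : mixedEmbedding K ((x - y : 𝓞 K) : K) = v + -u := by
      push_cast
      rw [map_sub]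
      simp only at hzv
      have : mixedEmbedding K (x:K) = mixedEmbedding K (y:K) + v - u := by rw [hzv]; abel
      rw [this]; abel
    have h2 := aux_box_add K hv (mixedEmbedding.convexBodyLT_neg_mem K _ u hu)
    rw [← h1, mixedEmbedding.convexBodyLT_mem] at h2
    have h3 := aux_eq_zero_of_lt_one K (x - y) (fun w => by
      have := h2 w
      norm_num at this ⊢
      exact this)
    exact sub_eq_zero.mp h3
  have hsub : (⋃ x ∈ s, T x) ⊆ mixedEmbedding.convexBodyLT K (fun _ => B + 1/2) := by
    intro z hz
    simp only [Set.mem_iUnion] at hz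
    obtain ⟨x, hx, u, hu, rfl⟩ := hz
    exact aux_box_add K ((mixedEmbedding.convexBodyLT_mem K _).2 (hs x hx)) hu
  have hle := measure_mono (μ := volume) hsub
  rw [measure_biUnion_finset hdisj (fun x _ => hmeas x)] at hle
  simp only [hvolT, Finset.sum_const, hb, aux_box_vol, nsmul_eq_mul] at hle
  have h4 : (s.card : NNReal) * (mixedEmbedding.convexBodyLTFactor K * (1/2) ^ (Module.finrank ℚ K)) ≤
      mixedEmbedding.convexBodyLTFactor K * (B + 1/2) ^ (Module.finrank ℚ K) := by
    exact_mod_cast hle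
  have hpos : 0 < mixedEmbedding.convexBodyLTFactor K :=
    lt_of_lt_of_le one_pos (mixedEmbedding.one_le_convexBodyLTFactor K)
  have h5 : (s.card : NNReal) * (1/2) ^ (Module.finrank ℚ K) ≤ (B + 1/2) ^ (Module.finrank ℚ K) := by
    rw [mul_left_comm] at h4
    exact le_of_mul_le_mul_left h4 hpos
  have h6 : (s.card : ℝ) * (1/2) ^ (Module.finrank ℚ K) ≤ (B + 1/2) ^ (Module.finrank ℚ K) := by
    exact_mod_cast h5
  have h7 : ((B:ℝ) + 1/2) = (2 * B + 1) * (1/2) := by ring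
  rw [h7, mul_pow] at h6
  exact le_of_mul_le_mul_right h6 (by positivity)

open MeasureTheory Pointwise in
lemma blichfeldt {E L : Type*} [MeasurableSpace E] {μ : Measure E} {F s : Set E} [AddGroup L]
    [Countable L] [AddAction L E] [MeasurableSpace L] [MeasurableVAdd L E]
    [VAddInvariantMeasure L E μ] (fund : IsAddFundamentalDomain L F μ)
    (hS : MeasurableSet s) (m : ℕ) (h : m * μ F < μ s) :
    ∃ (x : E) (t : Finset L), t.card = m + 1 ∧ ∀ g ∈ t, x ∈ g +ᵥ s := by
  classical
  by_contra hcon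
  push Not at hcon
  have hcount : ∀ (x : E) (t : Finset L), (∀ g ∈ t, x ∈ g +ᵥ s) → t.card ≤ m := by
    intro x t ht
    by_contra hlt
    push Not at hlt
    obtain ⟨t', ht', hc⟩ := Finset.exists_subset_card_eq (Nat.succ_le_of_lt hlt)
    obtain ⟨g, hg, hg'⟩ := hcon x t' hc
    exact hg' (ht g (ht' hg))
  rw [fund.measure_eq_tsum s] at h
  have hm : ∀ g : L, MeasurableSet (g +ᵥ s) := fun g => hS.const_vadd g
  have h1 : ∀ g : L, μ ((g +ᵥ s) ∩ F) = ∫⁻ x in F, (g +ᵥ s).indicator 1 x ∂μ := by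
    intro g
    rw [lintegral_indicator_one (hm g), Measure.restrict_apply (hm g)]
  simp_rw [h1] at h
  rw [← lintegral_tsum (fun g => (measurable_one.indicator (hm g)).aemeasurable)] at h
  refine absurd h (not_lt.mpr ?_)
  calc ∫⁻ x in F, ∑' g : L, (g +ᵥ s).indicator 1 x ∂μ ≤ ∫⁻ x in F, (m : ENNReal) ∂μ := by
        apply lintegral_mono
        intro x
        simp only
        rw [ENNReal.tsum_eq_iSup_sum]
        apply iSup_le
        intro t
        have : ∑ a ∈ t, (a +ᵥ s).indicator (1 : E → ENNReal) x
            = ((t.filter (fun a => x ∈ a +ᵥ s)).card : ENNReal) := by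
          rw [Finset.card_filter]
          push_cast
          apply Finset.sum_congr rfl
          intro a _
          simp [Set.indicator_apply]
        rw [this]
        exact_mod_cast hcount x _ (fun g hg => (Finset.mem_filter.mp hg).2)
    _ = m * μ F := by simp

open NumberField MeasureTheory Classical in
lemma many_points (K : Type*) [Field K] [NumberField K] (B : NNReal) :
    ∃ s : Finset (𝓞 K), (∀ x ∈ s, ∀ w : InfinitePlace K, w (x : K) < B) ∧
      (B : ℝ) ^ (Module.finrank ℚ K) ≤ s.card * Real.sqrt |(discr K : ℝ)| := by
  classical
  set n := Module.finrank ℚ K with hn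
  set D := Real.sqrt |(discr K : ℝ)| with hD
  have hDpos : 0 < D := Real.sqrt_pos.mpr (abs_pos.mpr (by exact_mod_cast discr_ne_zero K))
  by_cases hB : B = 0
  · refine ⟨∅, by simp, ?_⟩
    have : n ≠ 0 := (Module.finrank_pos).ne'
    simp [hB, this]
  have hBpos : 0 < B := pos_iff_ne_zero.mpr hB
  -- number of points
  set k := ⌈(B:ℝ)^n / D⌉₊ with hk
  have hkpos : 0 < k := Nat.ceil_pos.mpr (by positivity)
  obtain ⟨m, hm⟩ : ∃ m, k = m + 1 := ⟨k - 1, by omega⟩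
  have hmlt : (m : ℝ) < (B:ℝ)^n / D := by
    have := Nat.ceil_lt_add_one (a := (B:ℝ)^n / D) (by positivity)
    rw [← hk, hm] at this
    push_cast at this; linarith
  have hfund := ZSpan.isAddFundamentalDomain' (mixedEmbedding.latticeBasis K) volume
  have : Countable (Submodule.span ℤ (Set.range (mixedEmbedding.latticeBasis K))).toAddSubgroup := by
    change Countable (Submodule.span ℤ (Set.range (mixedEmbedding.latticeBasis K)))
    infer_instance
  have hvol : (m : ENNReal) * volume (ZSpan.fundamentalDomain (mixedEmbedding.latticeBasis K)) <
      volume (mixedEmbedding.convexBodyLT K (fun _ => B / 2)) := by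
    rw [mixedEmbedding.volume_fundamentalDomain_latticeBasis, aux_box_vol]
    have : (m : NNReal) * (2⁻¹ ^ InfinitePlace.nrComplexPlaces K * (NNReal.sqrt ‖discr K‖₊)) <
        (mixedEmbedding.convexBodyLTFactor K * (B/2) ^ n) := by
      rw [← NNReal.coe_lt_coe]
      push_cast
      have e1 : √‖discr K‖ = D := by
        rw [hD, Int.norm_eq_abs]
      rw [e1]
      have hnn : n = InfinitePlace.nrRealPlaces K + 2 * InfinitePlace.nrComplexPlaces K :=
        (InfinitePlace.card_add_two_mul_card_eq_rank K).symm
      set r1 := InfinitePlace.nrRealPlaces K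
      set r2 := InfinitePlace.nrComplexPlaces K
      have hmD : (m:ℝ) * D < (B:ℝ)^n := by rwa [lt_div_iff₀ hDpos] at hmlt
      calc (m:ℝ) * (2⁻¹ ^ r2 * D) = 2⁻¹ ^ r2 * (m * D) := by ring
        _ < 2⁻¹ ^ r2 * (B:ℝ)^n := by gcongr
        _ ≤ 2 ^ r1 * Real.pi ^ r2 * (B / 2)^n := by
          rw [div_pow, mul_div_assoc', le_div_iff₀ (by positivity)]
          have : (2:ℝ)^n = 2^r1 * 4^r2 := by rw [hnn, pow_add, pow_mul]; norm_num
          rw [this]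
          calc 2⁻¹ ^ r2 * (B:ℝ)^n * (2^r1*4^r2) = 2^r1 * (B:ℝ)^n * (2⁻¹ ^ r2 * 4^r2) := by ring
            _ = 2^r1 * (B:ℝ)^n * 2 ^ r2 := by rw [← mul_pow]; norm_num
            _ ≤ 2^r1 * (B:ℝ)^n * Real.pi ^ r2 := by gcongr; exact Real.two_le_pi
            _ = _ := by ring
    have h2 := ENNReal.coe_lt_coe.mpr this
    refine lt_of_eq_of_lt ?_ h2
    rw [ENNReal.coe_mul, ENNReal.coe_mul, ENNReal.coe_pow, ENNReal.coe_inv two_ne_zero]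
    simp
  obtain ⟨x, t, htc, ht⟩ := blichfeldt hfund (aux_box_meas K (B/2)) m hvol
  have htne : t.Nonempty := by rw [← Finset.card_pos]; omega
  obtain ⟨g0, hg0⟩ := htne
  -- each lattice point comes from an integer
  have hint : ∀ g : (Submodule.span ℤ (Set.range (mixedEmbedding.latticeBasis K))).toAddSubgroup,
      ∃ a : 𝓞 K, mixedEmbedding K (a : K) = g := by
    intro g
    have := g.2
    rw [Submodule.mem_toAddSubgroup] at this
    have h2 := (mixedEmbedding.mem_span_latticeBasis K).mp this
    simpa using h2
  choose a ha using hint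
  refine ⟨t.image (fun g => a g0 - a g), ?_, ?_⟩
  · intro z hz w
    simp only [Finset.mem_image] at hz
    obtain ⟨g, hg, rfl⟩ := hz
    have h1 := ht g hg
    have h2 := ht g0 hg0
    rw [Set.mem_vadd_set] at h1 h2
    obtain ⟨y, hy, hxy⟩ := h1
    obtain ⟨y0, hy0, hxy0⟩ := h2
    have h3 := aux_box_add K hy (mixedEmbedding.convexBodyLT_neg_mem K _ y0 hy0)
    have e : y + -y0 = mixedEmbedding K ((a g0 - a g : 𝓞 K) : K) := by
      push_cast
      rw [map_sub, ha, ha]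
      have e1 : (g : mixedEmbedding.mixedSpace K) + y = x := hxy
      have e2 : (g0 : mixedEmbedding.mixedSpace K) + y0 = x := hxy0
      have e3 := e1.trans e2.symm
      have : y = (g0 : mixedEmbedding.mixedSpace K) + y0 - g := by rw [← e3]; abel
      rw [this]; abel
    rw [e, mixedEmbedding.convexBodyLT_mem] at h3
    have := h3 w
    simpa using this
  · rw [Finset.card_image_of_injective, htc, ← hm]
    · have := Nat.le_ceil ((B:ℝ)^n / D)
      rw [← hk] at this
      rwa [div_le_iff₀ hDpos] at this
    · intro g g' h
      simp only [sub_right_inj] at h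
      apply Subtype.ext
      rw [← ha, ← ha, h]

end

section

open NumberField in
lemma subfield_count (K : Type*) [Field K] [NumberField K] (F : IntermediateField ℚ K)
    (hF : F ≠ ⊤) (B : NNReal) (hB : 1 ≤ B) (s : Finset (𝓞 K))
    (hs : ∀ x ∈ s, ∀ w : InfinitePlace K, w (x : K) < B) (hsF : ∀ x ∈ s, (x : K) ∈ F) :
    (s.card : ℝ) ^ 2 ≤ (3 * B) ^ (Module.finrank ℚ K) := by
  classical
  have hint : ∀ x : s, IsIntegral ℤ (⟨(x.1 : K), hsF x.1 x.2⟩ : F) := by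
    intro x
    have h := RingOfIntegers.isIntegral_coe x.1
    exact (isIntegral_algHom_iff (F.val.restrictScalars ℤ) Subtype.val_injective).mp h
  let f : s → 𝓞 F := fun x => ⟨⟨(x.1 : K), hsF x.1 x.2⟩, hint x⟩
  have hf : Function.Injective f := by
    intro x y hxy
    have h1 : ((f x : F) : K) = ((f y : F) : K) := by rw [hxy]
    exact Subtype.ext (RingOfIntegers.ext h1)
  have hp := packing F B (Finset.univ.image f) (by
    intro z hz w
    simp only [Finset.mem_image, Finset.mem_univ, true_and] at hz
    obtain ⟨x, rfl⟩ := hz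
    obtain ⟨w', rfl⟩ := InfinitePlace.comap_surjective (K := K) w
    exact hs x.1 x.2 w')
  rw [Finset.card_image_of_injective _ hf, Finset.card_univ, Fintype.card_coe] at hp
  have hB' : (1:ℝ) ≤ B := by exact_mod_cast hB
  have hd : 2 * Module.finrank ℚ F ≤ Module.finrank ℚ K := by
    have h1 := Module.finrank_mul_finrank ℚ F K
    have h2 : Module.finrank F K ≠ 1 := by
      intro h
      exact hF (IntermediateField.finrank_eq_one_iff_eq_top.mp h)
    have h3 : 0 < Module.finrank F K := Module.finrank_pos
    rw [← h1, mul_comm]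
    exact Nat.mul_le_mul_left _ (by omega)
  calc (s.card : ℝ)^2 ≤ ((2 * (B:ℝ) + 1) ^ (Module.finrank ℚ F))^2 := by gcongr
    _ ≤ ((3 * (B:ℝ)) ^ (Module.finrank ℚ F))^2 := by gcongr; linarith
    _ = (3 * (B:ℝ)) ^ (2 * Module.finrank ℚ F) := by rw [← pow_mul, mul_comm 2]
    _ ≤ _ := pow_le_pow_right₀ (by linarith) hd

open NumberField IntermediateField in
lemma prim_small (K : Type*) [Field K] [NumberField K] (B : NNReal) (hB : 1 ≤ B)
    (h : (Module.finrank ℚ K : ℝ) ^ 2 * 3 ^ (Module.finrank ℚ K) * |(discr K : ℝ)| <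
      (B : ℝ) ^ (Module.finrank ℚ K)) :
    ∃ α : 𝓞 K, ℚ⟮(α : K)⟯ = ⊤ ∧ ∀ w : InfinitePlace K, w (α : K) < B := by
  classical
  obtain ⟨s, hs, hcard⟩ := many_points K B
  by_contra hcon
  push Not at hcon
  have hnp : ∀ x ∈ s, ℚ⟮(x : K)⟯ ≠ ⊤ := by
    intro x hx hx'
    obtain ⟨w, hw⟩ := hcon x hx'
    exact absurd (hs x hx w) (not_lt.mpr hw)
  set n := Module.finrank ℚ K with hn
  have hcardA : Fintype.card (K →ₐ[ℚ] ℂ) = n := AlgHom.card ℚ K ℂ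
  obtain ⟨φ⟩ : Nonempty (K →ₐ[ℚ] ℂ) := by
    rw [← Fintype.card_pos_iff, hcardA]; exact Module.finrank_pos
  let Fψ : (K →ₐ[ℚ] ℂ) → IntermediateField ℚ K := fun ψ =>
    { AlgHom.equalizer φ ψ with
      inv_mem' := by
        intro x hx
        change φ x⁻¹ = ψ x⁻¹
        have : φ x = ψ x := hx
        rw [map_inv₀, map_inv₀, this] }
  have hFψ : ∀ ψ x, x ∈ Fψ ψ ↔ φ x = ψ x := fun ψ x => Iff.rfl
  let sψ : (K →ₐ[ℚ] ℂ) → Finset (𝓞 K) := fun ψ => s.filter (fun x => ψ ≠ φ ∧ (x:K) ∈ Fψ ψ)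
  have hcover : s ⊆ Finset.univ.biUnion sψ := by
    intro x hx
    have := hnp x hx
    rw [Ne, Field.primitive_element_iff_algHom_eq_of_eval ℚ ℂ
      (fun x => IsAlgClosed.splits _) (x:K) φ] at this
    push Not at this
    obtain ⟨ψ, h1, h2⟩ := this
    simp only [Finset.mem_biUnion, Finset.mem_univ, true_and, sψ, Finset.mem_filter]
    exact ⟨ψ, hx, h2.symm, h1⟩
  have hb : ∀ ψ, ((sψ ψ).card : ℝ) ≤ Real.sqrt ((3 * B) ^ n) := by
    intro ψ
    by_cases hψ : ψ = φ
    · simp [sψ, hψ]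
    apply Real.le_sqrt_of_sq_le
    apply subfield_count K (Fψ ψ) _ B hB
    · intro x hx
      exact hs x (Finset.mem_filter.mp hx).1
    · intro x hx
      exact (Finset.mem_filter.mp hx).2.2
    · intro htop
      apply hψ
      ext x
      have : x ∈ Fψ ψ := by rw [htop]; trivial
      exact this.symm
  have h1 : (s.card : ℝ) ≤ n * Real.sqrt ((3 * B) ^ n) := by
    calc (s.card : ℝ) ≤ ((Finset.univ.biUnion sψ).card : ℝ) := by
          exact_mod_cast Finset.card_le_card hcover
      _ ≤ ∑ ψ, ((sψ ψ).card : ℝ) := by exact_mod_cast Finset.card_biUnion_le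
      _ ≤ ∑ ψ : (K →ₐ[ℚ] ℂ), Real.sqrt ((3 * B) ^ n) := Finset.sum_le_sum (fun ψ _ => hb ψ)
      _ = _ := by rw [Finset.sum_const, Finset.card_univ, hcardA, nsmul_eq_mul]
  have h2 : (s.card : ℝ)^2 ≤ n^2 * (3 * B) ^ n := by
    calc (s.card : ℝ)^2 ≤ (n * Real.sqrt ((3 * B) ^ n))^2 := by gcongr
      _ = _ := by rw [mul_pow, Real.sq_sqrt (by positivity)]
  have h3 : ((B:ℝ)^n)^2 ≤ (s.card:ℝ)^2 * |(discr K : ℝ)| := by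
    calc ((B:ℝ)^n)^2 ≤ (s.card * Real.sqrt |(discr K : ℝ)|)^2 := by gcongr
      _ = _ := by rw [mul_pow, Real.sq_sqrt (by positivity)]
  have hBp : (0:ℝ) < (B:ℝ)^n := by
    have : (1:ℝ) ≤ B := by exact_mod_cast hB
    positivity
  have h4 : ((B:ℝ)^n)*(B:ℝ)^n ≤ (n^2 * 3^n * |(discr K : ℝ)|) * (B:ℝ)^n := by
    calc ((B:ℝ)^n)*(B:ℝ)^n = ((B:ℝ)^n)^2 := by ring
      _ ≤ _ := h3
      _ ≤ (n^2 * (3 * B) ^ n) * |(discr K : ℝ)| := by gcongr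
      _ = _ := by rw [mul_pow]; ring
  have := le_of_mul_le_mul_right h4 hBp
  linarith

end

section

open NumberField IntermediateField in
lemma prim_pb {K : Type*} [Field K] [NumberField K] (α : K) (h : ℚ⟮α⟯ = ⊤) :
    ∃ pb : PowerBasis ℚ K, pb.gen = α := by
  have hα : IsIntegral ℚ α := Algebra.IsIntegral.isIntegral α
  have h2 : Algebra.adjoin ℚ {α} = ⊤ := by
    rw [← IntermediateField.adjoin_simple_toSubalgebra_of_isAlgebraic hα.isAlgebraic, h]
    rfl
  exact ⟨PowerBasis.ofAdjoinEqTop hα h2, PowerBasis.ofAdjoinEqTop_gen hα h2⟩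

open NumberField IntermediateField in
lemma same_minpoly_iso {K L : Type*} [Field K] [NumberField K] [Field L] [NumberField L]
    (α : K) (β : L) (hα : ℚ⟮α⟯ = ⊤) (hβ : ℚ⟮β⟯ = ⊤) (h : minpoly ℚ α = minpoly ℚ β) :
    Nonempty (K ≃+* L) := by
  obtain ⟨pa, rfl⟩ := prim_pb α hα
  obtain ⟨pb, rfl⟩ := prim_pb β hβ
  exact ⟨(pa.equivOfMinpoly pb h).toRingEquiv⟩

open NumberField IntermediateField in
lemma coeff_bound {K : Type*} [Field K] [NumberField K] (α : 𝓞 K) (h : ℚ⟮(α:K)⟯ = ⊤)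
    (B : ℝ) (hα : ∀ w : InfinitePlace K, w (α : K) ≤ B) :
    (minpoly ℤ (α:K)).natDegree = Module.finrank ℚ K ∧ 
    ∀ i, |((minpoly ℤ (α:K)).coeff i : ℝ)| ≤
      B ^ (Module.finrank ℚ K - i) * (Module.finrank ℚ K).choose i := by
  have hα' : IsIntegral ℤ (α:K) := RingOfIntegers.isIntegral_coe α
  have hdeg : (minpoly ℤ (α:K)).natDegree = Module.finrank ℚ K := by
    have h1 := (Field.primitive_element_iff_minpoly_natDegree_eq ℚ (α:K)).mp h
    rw [minpoly.isIntegrallyClosed_eq_field_fractions' ℚ hα',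
      (minpoly.monic hα').natDegree_map] at h1
    exact h1
  refine ⟨hdeg, fun i => ?_⟩
  have h2 := Polynomial.coeff_le_of_roots_le (p := minpoly ℤ (α:K)) (f := algebraMap ℤ ℂ) (B := B) i
    (minpoly.monic hα') (IsAlgClosed.splits _) (by
      intro z hz
      have h3 : (minpoly ℤ (α:K)).map (algebraMap ℤ ℂ) =
          (minpoly ℚ (α:K)).map (algebraMap ℚ ℂ) := by
        rw [minpoly.isIntegrallyClosed_eq_field_fractions' ℚ hα', Polynomial.map_map]
        rfl
      rw [h3] at hz
      classical
      have hz' : z ∈ (minpoly ℚ (α:K)).rootSet ℂ := by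
        rw [Polynomial.rootSet, Finset.mem_coe, Multiset.mem_toFinset]
        exact hz
      rw [← Embeddings.range_eval_eq_rootSet_minpoly K ℂ (α:K)] at hz'
      obtain ⟨φ, rfl⟩ := hz'
      have := hα (InfinitePlace.mk φ)
      simpa using this)
  rw [hdeg, Polynomial.coeff_map] at h2
  simpa using h2

noncomputable def auxN (n : ℕ) (B : ℝ) (i : ℕ) : ℕ := ⌊B ^ (n - i) * (n.choose i)⌋₊

open NumberField IntermediateField in
lemma exists_poly_small (n : ℕ) (B : NNReal) (hB : 1 ≤ B) (X : ℝ)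
    (h : (n : ℝ) ^ 2 * 3 ^ n * X < (B : ℝ) ^ n) 
    (F : IntermediateField ℚ ℂ) (hF : F ∈ NumberFieldSet n X) :
    ∃ (_ : NumberField F) (α : 𝓞 F), ℚ⟮(α:F)⟯ = ⊤ ∧ (minpoly ℤ (α:F)).natDegree = n ∧
      ∀ i, (minpoly ℤ (α:F)).coeff i ∈ Finset.Icc (-(auxN n B i : ℤ)) (auxN n B i) := by
  obtain ⟨hfd, hn, hd⟩ := hF
  have : NumberField F := ⟨⟩
  have h' : (Module.finrank ℚ F : ℝ) ^ 2 * 3 ^ (Module.finrank ℚ F) * |(discr F : ℝ)| <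
      (B : ℝ) ^ (Module.finrank ℚ F) := by
    rw [hn]
    refine lt_of_le_of_lt ?_ h
    gcongr
  obtain ⟨α, h1, h2⟩ := prim_small F B hB h'
  obtain ⟨h3, h4⟩ := coeff_bound α h1 B (fun w => (h2 w).le)
  refine ⟨this, α, h1, h3.trans hn, fun i => ?_⟩
  have h5 := h4 i
  rw [hn] at h5
  rw [Finset.mem_Icc, ← abs_le]
  have h6 : ((minpoly ℤ (α:F)).coeff i).natAbs ≤ auxN n B i := by
    apply Nat.le_floor
    rw [Nat.cast_natAbs, Int.cast_abs]
    exact h5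
  rw [Int.abs_eq_natAbs]
  exact_mod_cast h6

open NumberField IntermediateField in
lemma Fcard_le_aux (n : ℕ) (B : NNReal) (hB : 1 ≤ B) (X : ℝ)
    (h : (n : ℝ) ^ 2 * 3 ^ n * X < (B : ℝ) ^ n) :
    Finite (Quotient (isoSetoid (NumberFieldSet n X))) ∧
    Fcard n X ≤ ∏ i : Fin n, (2 * auxN n B i + 1) := by
  classical
  have key := fun q : Quotient (isoSetoid (NumberFieldSet n X)) =>
    exists_poly_small n B hB X h q.out.1 q.out.2
  choose inst α h1 h2 h3 using key
  let f : Quotient (isoSetoid (NumberFieldSet n X)) →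
      ((i : Fin n) → (Finset.Icc (-(auxN n B i : ℤ)) (auxN n B i))) :=
    fun q i => ⟨(minpoly ℤ (α q : q.out.1)).coeff i, h3 q i⟩
  have hf : Function.Injective f := by
    intro q q' hqq
    have hpoly : minpoly ℤ (α q : q.out.1) = minpoly ℤ (α q' : q'.out.1) := by
      ext i
      have hm := minpoly.monic (RingOfIntegers.isIntegral_coe (α q))
      have hm' := minpoly.monic (RingOfIntegers.isIntegral_coe (α q'))
      rcases lt_trichotomy i n with hi | hi | hi
      · have := congrFun hqq ⟨i, hi⟩
        exact congrArg Subtype.val this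
      · have e1 := hm.coeff_natDegree
        have e2 := hm'.coeff_natDegree
        rw [h2] at e1 e2
        rw [hi, e1, e2]
      · rw [Polynomial.coeff_eq_zero_of_natDegree_lt (by rw [h2]; exact hi),
          Polynomial.coeff_eq_zero_of_natDegree_lt (by rw [h2]; exact hi)]
    have hpolyQ : minpoly ℚ (α q : q.out.1) = minpoly ℚ (α q' : q'.out.1) := by
      rw [minpoly.isIntegrallyClosed_eq_field_fractions' ℚ (RingOfIntegers.isIntegral_coe (α q)),
        minpoly.isIntegrallyClosed_eq_field_fractions' ℚ (RingOfIntegers.isIntegral_coe (α q')),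
        hpoly]
    have e := same_minpoly_iso _ _ (h1 q) (h1 q') hpolyQ
    rw [← q.out_eq, ← q'.out_eq]
    exact Quotient.sound e
  refine ⟨Finite.of_injective f hf, ?_⟩
  unfold Fcard
  refine (Nat.card_le_card_of_injective f hf).trans ?_
  rw [Nat.card_eq_fintype_card, Fintype.card_pi]
  apply le_of_eq
  apply Finset.prod_congr rfl
  intro i _
  rw [Fintype.card_coe, Int.card_Icc]
  omega

lemma Fcard_upper (n : ℕ) (hn : 1 ≤ n) : ∃ C : ℝ, 0 < C ∧ ∀ X : ℝ, 1 ≤ X →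
    Finite (Quotient (isoSetoid (NumberFieldSet n X))) ∧
    (Fcard n X : ℝ) ≤ C * X ^ (((n:ℝ) + 1) / 2) := by
  set C0 : ℝ := 3 * ((n:ℝ)+1)^2 with hC0
  have hC0pos : 1 ≤ C0 := by rw [hC0]; nlinarith [sq_nonneg (n:ℝ), (Nat.cast_nonneg n : (0:ℝ) ≤ n)]
  refine ⟨(3 * 2^n)^n * C0 ^ ((n:ℝ) * ((n:ℝ)+1)/2), by positivity, ?_⟩
  intro X hX
  have hn0 : (n:ℝ) ≠ 0 := by positivity
  have hX0 : 0 ≤ X := by linarith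
  set B : ℝ := C0 * X ^ ((1:ℝ)/n) with hBdef
  have hX1 : (1:ℝ) ≤ X ^ ((1:ℝ)/n) := Real.one_le_rpow hX (by positivity)
  have hB : 1 ≤ B := by nlinarith
  have hBn : B ^ n = C0 ^ n * X := by
    rw [hBdef, mul_pow, ← Real.rpow_natCast (X ^ ((1:ℝ)/n)), ← Real.rpow_mul hX0]
    rw [one_div, inv_mul_cancel₀ hn0, Real.rpow_one]
  have hlt : (n:ℝ)^2 * 3^n * X < B ^ n := by
    rw [hBn]
    have : (n:ℝ)^2 * 3^n < C0 ^ n := by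
      rw [hC0, mul_pow, mul_comm]
      have h1 : ((n:ℝ))^2 < (((n:ℝ)+1)^2)^n := by
        calc (n:ℝ)^2 < ((n:ℝ)+1)^2 := by gcongr; linarith
          _ = (((n:ℝ)+1)^2)^1 := by ring
          _ ≤ _ := pow_le_pow_right₀ (by nlinarith [(Nat.cast_nonneg n : (0:ℝ) ≤ n)]) hn
      gcongr
    nlinarith
  obtain ⟨hfin, hle⟩ := Fcard_le_aux n ⟨B, by linarith⟩ hB X hlt
  refine ⟨hfin, ?_⟩
  have h1 : ∀ i : Fin n, ((2 * auxN n B i + 1 : ℕ) : ℝ) ≤ (3 * 2^n) * B ^ (n - (i:ℕ)) := by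
    intro i
    have h2 : (auxN n B i : ℝ) ≤ B ^ (n - (i:ℕ)) * (n.choose i) := Nat.floor_le (by positivity)
    have h3 : ((n.choose i : ℕ) : ℝ) ≤ 2^n := by exact_mod_cast Nat.choose_le_two_pow n i
    have h4 : 1 ≤ B ^ (n - (i:ℕ)) := one_le_pow₀ hB
    have h5 : (1:ℝ) ≤ 2^n := one_le_pow₀ (by norm_num)
    push_cast
    have h6 : B ^ (n - (i:ℕ)) * (n.choose i) ≤ B ^ (n - (i:ℕ)) * 2^n := by gcongr
    nlinarith
  calc (Fcard n X : ℝ) ≤ ((∏ i : Fin n, (2 * auxN n B i + 1) : ℕ) : ℝ) := by exact_mod_cast hle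
    _ = ∏ i : Fin n, ((2 * auxN n B i + 1 : ℕ) : ℝ) := by rw [Nat.cast_prod]
    _ ≤ ∏ i : Fin n, (3 * 2^n) * B ^ (n - (i:ℕ)) :=
        Finset.prod_le_prod (fun i _ => by positivity) (fun i _ => h1 i)
    _ = (3 * 2^n)^n * B ^ (∑ i : Fin n, (n - (i:ℕ))) := by
        rw [Finset.prod_mul_distrib, Finset.prod_const, Finset.prod_pow_eq_pow_sum]; simp
    _ = (3 * 2^n)^n * B ^ ((n:ℝ) * ((n:ℝ)+1)/2) := by
        congr 1
        rw [← Real.rpow_natCast]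
        congr 1
        have hs : ∑ i : Fin n, (n - (i:ℕ)) = ∑ i ∈ Finset.range (n+1), i := by
          rw [Fin.sum_univ_eq_sum_range (fun i => n - i) n, Finset.sum_range_succ',
            ← Finset.sum_range_reflect]
          simp only [add_zero]
          apply Finset.sum_congr rfl
          intro i hi
          rw [Finset.mem_range] at hi
          omega
        rw [hs]
        have h7 := Finset.sum_range_id_mul_two (n+1)
        have h8 : ((∑ i ∈ Finset.range (n+1), i : ℕ) : ℝ) * 2 = ((n:ℝ)+1) * n := by
          have := congrArg (Nat.cast : ℕ → ℝ) h7
          push_cast at this ⊢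
          simpa using this
        linarith
    _ = _ := by
        rw [hBdef, Real.mul_rpow (by linarith) (by linarith), ← Real.rpow_mul hX0, mul_assoc]
        congr 3
        field_simp

end

section

lemma mod_p_relation {M : Type*} [AddCommGroup M] {r k : ℕ} (b : Module.Basis (Fin r) ℤ M)
    (hk : r < k) (f : Fin k → M) (p : ℕ) [hp : Fact p.Prime] :
    ∃ (v : Fin k → ℕ) (m : M), (∃ i, ¬ p ∣ v i) ∧ ∑ j, v j • f j = p • m := by
  classical
  let c : Fin k → (Fin r → ZMod p) := fun j i => ((b.repr (f j) i : ℤ) : ZMod p)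
  have hdep : ¬ LinearIndependent (ZMod p) c := by
    intro h
    have := h.fintype_card_le_finrank
    simp at this
    omega
  rw [Fintype.not_linearIndependent_iff] at hdep
  obtain ⟨g, hg, i, hi⟩ := hdep
  have hdiv : ∀ t : Fin r, ∃ d : ℤ, b.repr (∑ j, (g j).val • f j) t = p * d := by
    intro t
    have h1 := congrFun hg t
    simp only [Finset.sum_apply, Pi.smul_apply, smul_eq_mul, Pi.zero_apply, c] at h1
    have h2 : ((b.repr (∑ j, (g j).val • f j) t : ℤ) : ZMod p) = 0 := by
      rw [map_sum, Finsupp.finsetSum_apply, ← h1]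
      push_cast
      apply Finset.sum_congr rfl
      intro j _
      rw [map_nsmul, Finsupp.smul_apply, nsmul_eq_mul]
      push_cast
      rw [ZMod.natCast_zmod_val]
    exact (ZMod.intCast_zmod_eq_zero_iff_dvd _ p).mp h2
  choose d hd using hdiv
  refine ⟨fun j => (g j).val, ∑ t, d t • b t, ⟨i, ?_⟩, ?_⟩
  · intro h
    apply hi
    rw [← ZMod.natCast_zmod_val (g i)]
    exact (ZMod.natCast_eq_zero_iff _ p).mpr h
  · rw [← b.sum_repr (∑ j, (g j).val • f j), Finset.smul_sum]
    apply Finset.sum_congr rfl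
    intro t _
    rw [hd, mul_smul, natCast_zsmul]

open NumberField in
lemma torsion_dvd (K : Type*) [Field K] [NumberField K] :
    Units.torsionOrder K ∣ (4 ^ Module.finrank ℚ K).factorial := by
  classical
  have : Fintype (Units.torsion K) := Fintype.ofFinite _
  have hle : Units.torsionOrder K ≤ 4 ^ Module.finrank ℚ K := by
    have h := packing K (3/2) (Finset.univ.image (fun ζ : Units.torsion K => ((ζ : (𝓞 K)ˣ) : 𝓞 K))) (by
      intro x hx w
      simp only [Finset.mem_image, Finset.mem_univ, true_and] at hx
      obtain ⟨ζ, rfl⟩ := hx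
      have := (Units.mem_torsion K).mp ζ.2 w
      rw [this]
      norm_num)
    rw [Finset.card_image_of_injective] at h
    · rw [Units.torsionOrder, Nat.card_eq_fintype_card]
      have e : (2 * ((3/2 : NNReal) : ℝ) + 1) = 4 := by norm_num
      rw [e, Finset.card_univ] at h
      exact_mod_cast h
    · intro a b hab
      exact Subtype.ext (Units.ext hab)
  exact Nat.dvd_factorial (by rw [Units.torsionOrder]; exact Nat.card_pos) hle

open NumberField in
lemma pth_power_up_to_unit (K : Type*) [Field K] [NumberField K] (p e m : ℕ) (hp : p.Prime)
    (hnd : ¬ p ^ (e+1) ∣ classNumber K) (x : 𝓞 K) (hx : x ≠ 0) (I : Ideal (𝓞 K))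
    (hI : Ideal.span {x} = I ^ (p ^ (e+1) * m)) :
    ∃ (u : (𝓞 K)ˣ) (y : 𝓞 K), x = u * y ^ p := by
  have hI0 : I ^ m ≠ 0 := by
    intro h
    have : I ^ (p^(e+1) * m) = 0 := by
      rw [mul_comm, pow_mul, h, zero_pow (pow_pos hp.pos _).ne']
    rw [this] at hI
    exact hx (by simpa using hI)
  have hmem : I ^ m ∈ nonZeroDivisors (Ideal (𝓞 K)) := mem_nonZeroDivisors_of_ne_zero hI0
  set c := ClassGroup.mk0 (⟨I^m, hmem⟩ : nonZeroDivisors (Ideal (𝓞 K))) with hc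
  have hcp : ∀ s : ℕ, c ^ s = 1 ↔ Submodule.IsPrincipal ((I^m)^s) := by
    intro s
    rw [hc, ← map_pow, ← ClassGroup.mk0_eq_one_iff (pow_mem hmem s)]
    rfl
  have h1 : c ^ (p^(e+1)) = 1 := by
    rw [hcp, ← pow_mul, mul_comm, ← hI]
    exact ⟨⟨x, rfl⟩⟩
  have h2 : c ^ (classNumber K) = 1 := pow_card_eq_one
  have h3 : orderOf c ∣ p^(e+1) := orderOf_dvd_of_pow_eq_one h1
  have h4 : orderOf c ∣ classNumber K := orderOf_dvd_of_pow_eq_one h2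
  obtain ⟨a, ha, hoa⟩ := (Nat.dvd_prime_pow hp).mp h3
  have ha' : a ≤ e := by
    by_contra h
    have : a = e + 1 := by omega
    rw [hoa, this] at h4
    exact hnd h4
  have h5 : c ^ (p^e) = 1 := by
    rw [← orderOf_dvd_iff_pow_eq_one, hoa]
    exact pow_dvd_pow p ha'
  obtain ⟨⟨y, hy⟩⟩ := (hcp _).mp h5
  have h6 : Ideal.span {x} = Ideal.span {y ^ p} := by
    rw [← Ideal.span_singleton_pow]
    change _ = (Submodule.span (𝓞 K) {y}) ^ p
    rw [← hy, hI]
    ring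
  obtain ⟨u, hu⟩ := (Ideal.span_singleton_eq_span_singleton.mp h6).symm
  exact ⟨u, y, by rw [← hu]; ring⟩

open NumberField in
lemma classnum_criterion (K : Type*) [Field K] [NumberField K] (ℓ k : ℕ)
    (hk : Units.rank K < k) (x : Fin k → 𝓞 K)
    (hx : ∀ j, ∃ I : Ideal (𝓞 K), Ideal.span {x j} = I ^ ℓ)
    (hloc : ∀ p : ℕ, p.Prime → p ∣ ℓ → ∀ i : Fin k, ∃ (q : ℕ) (_ : Fact q.Prime)
      (φ : 𝓞 K →+* ZMod q), p * Units.torsionOrder K ∣ q - 1 ∧ (∀ j, j ≠ i → φ (x j) = 1) ∧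
        orderOf (φ (x i)) = q - 1) : ℓ ∣ classNumber K := by
  classical
  rw [Nat.dvd_iff_prime_pow_dvd_dvd]
  intro p e' hp hpe
  by_contra hnd
  obtain ⟨e, rfl⟩ : ∃ e, e' = e + 1 := by
    cases e' with
    | zero => simp at hnd
    | succ e => exact ⟨e, rfl⟩
  obtain ⟨m, rfl⟩ := hpe
  have hpl : p ∣ p ^ (e+1) * m := Dvd.dvd.mul_right (dvd_pow_self p (by omega)) m
  have hne : ∀ (q : ℕ) (_ : Fact q.Prime) (g : ZMod q), orderOf g = q - 1 → g ≠ 0 := by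
    intro q hq g hg h0
    rw [h0] at hg
    have h1 : q - 1 ≠ 0 := by have := hq.out.two_le; omega
    have h2 : (0 : ZMod q) ^ (q-1) = 1 := by rw [← hg]; exact pow_orderOf_eq_one _
    rw [zero_pow h1] at h2
    exact zero_ne_one h2
  have hx0 : ∀ j, x j ≠ 0 := by
    intro j hj
    obtain ⟨q, hq, φ, -, -, h3⟩ := hloc p hp hpl j
    exact hne q hq _ h3 (by rw [hj, map_zero])
  have huy : ∀ j, ∃ (u : (𝓞 K)ˣ) (y : 𝓞 K), x j = u * y ^ p := by
    intro j
    obtain ⟨I, hI⟩ := hx j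
    exact pth_power_up_to_unit K p e m hp hnd (x j) (hx0 j) I hI
  choose u y huy using huy
  have : Fact p.Prime := ⟨hp⟩
  obtain ⟨v, M, ⟨i, hi⟩, hv⟩ := mod_p_relation
    (M := Additive ((𝓞 K)ˣ ⧸ Units.torsion K)) (Units.basisModTorsion K) hk
    (fun j => Additive.ofMul (QuotientGroup.mk (u j) : (𝓞 K)ˣ ⧸ Units.torsion K)) p
  obtain ⟨w, hw⟩ := QuotientGroup.mk_surjective (Additive.toMul M)
  have hprod : (QuotientGroup.mk (∏ j, u j ^ v j) : (𝓞 K)ˣ ⧸ Units.torsion K) = 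
      QuotientGroup.mk (w ^ p) := by
    have := congrArg Additive.toMul hv
    change ∏ j, (QuotientGroup.mk (u j) : (𝓞 K)ˣ ⧸ Units.torsion K) ^ v j =
      (Additive.toMul M) ^ p at this
    rw [← hw] at this
    rw [QuotientGroup.mk_pow, ← this]
    change QuotientGroup.mk' _ _ = _
    rw [map_prod]
    rfl
  rw [eq_comm, QuotientGroup.eq] at hprod
  set ζ := (w^p)⁻¹ * ∏ j, u j ^ v j with hζ
  have hprod2 : ∏ j, u j ^ v j = ζ * w ^ p := by rw [hζ, mul_comm, mul_inv_cancel_left]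
  set Y : 𝓞 K := w * ∏ j, y j ^ v j with hY
  have hmain : ∏ j, x j ^ v j = (ζ : 𝓞 K) * Y ^ p := by
    calc ∏ j, x j ^ v j = ∏ j, ((u j : 𝓞 K) ^ v j * (y j ^ v j) ^ p) := by
          apply Finset.prod_congr rfl
          intro j _
          rw [huy j]; ring
      _ = ((∏ j, u j ^ v j : (𝓞 K)ˣ) : 𝓞 K) * (∏ j, y j ^ v j) ^ p := by
          rw [Finset.prod_mul_distrib, Finset.prod_pow]
          push_cast; rfl
      _ = _ := by rw [hprod2, hY]; push_cast; ring
  obtain ⟨q, hq, φ, h1, h2, h3⟩ := hloc p hp hpl i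
  have hφ := congrArg φ hmain
  rw [map_prod, map_mul, map_pow] at hφ
  rw [Finset.prod_eq_single i (fun j _ hj => by rw [map_pow, h2 j hj, one_pow])
    (fun h => absurd (Finset.mem_univ i) h), map_pow] at hφ
  set g := φ (x i) with hg
  have hg0 : g ≠ 0 := hne q hq g h3
  obtain ⟨s, hs⟩ := h1
  set τ := Units.torsionOrder K with hτ
  have hζ1 : (ζ : 𝓞 K) ^ τ = 1 := by
    have h4 : (⟨ζ, hprod⟩ : Units.torsion K) ^ τ = 1 := by
      rw [hτ, Units.torsionOrder]; exact pow_card_eq_one'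
    have h5 := congrArg (fun z : Units.torsion K => ((z : (𝓞 K)ˣ) : 𝓞 K)) h4
    simpa using h5
  have hY0 : φ Y ≠ 0 := by
    intro h
    rw [h, zero_pow hp.ne_zero, mul_zero] at hφ
    exact hg0 (by_contra fun hh => pow_ne_zero (v i) hh hφ)
  have h6 : g ^ (v i * (τ * s)) = 1 := by
    rw [pow_mul, hφ, mul_pow, pow_mul, ← map_pow, hζ1, map_one, one_pow, one_mul, ← pow_mul,
      ← mul_assoc, ← hs, ZMod.pow_card_sub_one_eq_one hY0]
  have h7 := orderOf_dvd_of_pow_eq_one h6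
  rw [h3, hs, mul_assoc] at h7
  have hτs : 0 < τ * s := by
    rcases Nat.eq_zero_or_pos (τ * s) with h | h
    · exfalso
      rw [mul_assoc, h] at hs
      have := hq.out.two_le
      omega
    · exact h
  exact hi (Nat.dvd_of_mul_dvd_mul_right hτs h7)

end

section

open NumberField IntermediateField Polynomial in
lemma hensel_hom (K : Type*) [Field K] [NumberField K] (θ : 𝓞 K) (hprim : ℚ⟮(θ:K)⟯ = ⊤)
    (q : ℕ) [hq : Fact q.Prime] (f : ℤ[X]) (hf : minpoly ℤ (θ:K) = f)
    (h0 : (q:ℤ) ∣ f.eval 0) (h1 : ¬ (q:ℤ) ∣ f.derivative.eval 0) :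
    ∃ φ : 𝓞 K →+* ZMod q, φ θ = 0 := by
  have e0 : ∀ g : ℤ[X], aeval (0 : ℤ_[q]) g = ((g.eval 0 : ℤ) : ℤ_[q]) := by
    intro g
    have := aeval_algebraMap_apply ℤ_[q] (0:ℤ) g
    simpa using this
  have hd1 : ‖aeval (0 : ℤ_[q]) f.derivative‖ = 1 := by
    rw [e0]
    have h2 := (PadicInt.norm_int_lt_one_iff_dvd (p := q) (f.derivative.eval 0)).not.mpr h1
    exact le_antisymm (PadicInt.norm_le_one _) (not_lt.mp h2)
  have hf0 : ‖aeval (0 : ℤ_[q]) f‖ < 1 := by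
    rw [e0]
    exact (PadicInt.norm_int_lt_one_iff_dvd _).mpr h0
  obtain ⟨z, hz, hz1, -⟩ := hensels_lemma (p := q) (F := f) (a := 0) (by rw [hd1, one_pow]; exact hf0)
  rw [hd1, sub_zero] at hz1
  have hθ : IsIntegral ℤ (θ:K) := RingOfIntegers.isIntegral_coe θ
  obtain ⟨pb, hpb⟩ := prim_pb (θ:K) hprim
  have hroot : aeval (z : ℚ_[q]) (minpoly ℚ pb.gen) = 0 := by
    rw [hpb, minpoly.isIntegrallyClosed_eq_field_fractions' ℚ hθ, hf, aeval_map_algebraMap]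
    have : aeval (algebraMap ℤ_[q] ℚ_[q] z) f = 0 := by
      rw [aeval_algebraMap_apply, hz, map_zero]
    exact this
  let ψ : K →ₐ[ℚ] ℚ_[q] := pb.lift (z : ℚ_[q]) hroot
  have hψ : ψ (θ:K) = z := by
    have := pb.lift_gen (z : ℚ_[q]) hroot
    rwa [hpb] at this
  have hint : ∀ x : 𝓞 K, ‖ψ (x:K)‖ ≤ 1 := by
    intro x
    have hx : IsIntegral ℤ (ψ (x:K)) := map_isIntegral_int ψ (RingOfIntegers.isIntegral_coe x)
    have hx' : IsIntegral ℤ_[q] (ψ (x:K)) := hx.tower_top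
    obtain ⟨y, hy⟩ := IsIntegrallyClosed.isIntegral_iff.mp hx'
    rw [← hy]
    exact y.2
  let Φ : 𝓞 K →+* ℤ_[q] :=
    { toFun := fun x => ⟨ψ (x:K), hint x⟩
      map_one' := Subtype.ext (by simp)
      map_zero' := Subtype.ext (by simp)
      map_add' := fun a b => Subtype.ext (by simp; rfl)
      map_mul' := fun a b => Subtype.ext (by simp; rfl) }
  refine ⟨PadicInt.toZMod.comp Φ, ?_⟩
  have hΦ : Φ θ = z := Subtype.ext hψ
  rw [RingHom.comp_apply, hΦ, ← RingHom.mem_ker, PadicInt.ker_toZMod, IsLocalRing.mem_maximalIdeal,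
    PadicInt.mem_nonunits]
  exact hz1

end

section

open Polynomial in
noncomputable def polyF {n : ℕ} (A : Fin n → ℤ) (c : ℤ) : ℤ[X] := ∏ j, (X - C (A j)) + C c

open Polynomial in
lemma polyF_monic {n : ℕ} (hn : 1 ≤ n) (A : Fin n → ℤ) (c : ℤ) :
    (polyF A c).Monic ∧ (polyF A c).natDegree = n := by
  have h1 : (∏ j, (X - C (A j)) : ℤ[X]).Monic := monic_prod_of_monic _ _ fun j _ => monic_X_sub_C _
  have h2 : (∏ j, (X - C (A j)) : ℤ[X]).natDegree = n := by
    rw [natDegree_prod_of_monic _ _ fun j _ => monic_X_sub_C _]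
    simp only [natDegree_X_sub_C, Finset.sum_const, Finset.card_univ, Fintype.card_fin, smul_eq_mul,
      mul_one]
  have h3 : (C c : ℤ[X]).degree < (∏ j, (X - C (A j)) : ℤ[X]).degree := by
    refine lt_of_le_of_lt degree_C_le ?_
    rw [degree_eq_natDegree h1.ne_zero, h2]
    exact_mod_cast hn
  refine ⟨h1.add_of_left h3, ?_⟩
  rw [polyF, natDegree_add_eq_left_of_degree_lt h3, h2]

open Polynomial in
lemma polyF_aeval {n : ℕ} (A : Fin n → ℤ) (c : ℤ) {R : Type*} [CommRing R] (z : R) :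
    aeval z (polyF A c) = ∏ j, (z - (A j : R)) + (c : R) := by
  simp [polyF, map_prod]

lemma prod_sub_pow_le {n : ℕ} (z : ℂ) (a : Fin n → ℂ) (S : ℝ) (ha : ∀ j, ‖a j‖ ≤ S) :
    ‖∏ j, (z - a j) - z ^ n‖ ≤ (‖z‖ + S) ^ n - ‖z‖ ^ n ∧ ‖∏ j, (z - a j)‖ ≤ (‖z‖ + S) ^ n := by
  induction n with
  | zero => simp
  | succ n ih =>
    obtain ⟨h1, h2⟩ := ih (fun j => a j.castSucc) (fun j => ha _)
    have hS : 0 ≤ S := (norm_nonneg _).trans (ha (Fin.last n))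
    have h3 : ‖z - a (Fin.last n)‖ ≤ ‖z‖ + S := (norm_sub_le _ _).trans (by gcongr; exact ha _)
    constructor
    · rw [Fin.prod_univ_castSucc]
      have e : (∏ i : Fin n, (z - a i.castSucc)) * (z - a (Fin.last n)) - z ^ (n+1) =
        z * ((∏ i : Fin n, (z - a i.castSucc)) - z ^ n) -
          a (Fin.last n) * (∏ i : Fin n, (z - a i.castSucc)) := by ring
      rw [e]
      calc _ ≤ ‖z * ((∏ i : Fin n, (z - a i.castSucc)) - z ^ n)‖ +
            ‖a (Fin.last n) * (∏ i : Fin n, (z - a i.castSucc))‖ := norm_sub_le _ _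
        _ ≤ ‖z‖ * ((‖z‖ + S) ^ n - ‖z‖ ^ n) + S * (‖z‖ + S) ^ n := by
          rw [norm_mul, norm_mul]
          gcongr
          exact ha _
        _ = _ := by ring
    · rw [Fin.prod_univ_castSucc, norm_mul, pow_succ]
      gcongr

open NumberField IntermediateField Polynomial in
lemma root_bound {n : ℕ} (hn : 1 ≤ n) (A : Fin n → ℤ) (c : ℤ) (R S : ℝ) (hR : 0 ≤ R)
    (hRn : R ^ n = |(c:ℝ)|) (hS : ∀ j, |(A j : ℝ)| ≤ S) (z : ℂ) (hz : aeval z (polyF A c) = 0) :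
    ‖z‖ ≤ R + S := by
  rw [polyF_aeval] at hz
  by_contra h
  push Not at h
  have h1 : ∀ j, R < ‖z - (A j : ℂ)‖ := by
    intro j
    have h2 : ‖z‖ - ‖(A j : ℂ)‖ ≤ ‖z - (A j : ℂ)‖ := norm_sub_norm_le _ _
    have h3 : ‖(A j : ℂ)‖ ≤ S := by rw [Complex.norm_intCast]; exact hS j
    linarith
  have h4 : ‖∏ j, (z - (A j : ℂ))‖ = R ^ n := by
    rw [eq_neg_of_add_eq_zero_left hz, norm_neg, Complex.norm_intCast, hRn]
  rw [norm_prod] at h4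
  have h5 : ∏ _j : Fin n, R < ∏ j, ‖z - (A j : ℂ)‖ := by
    by_cases hR0 : R = 0
    · rw [hR0]
      have : (∏ _j : Fin n, (0:ℝ)) = 0 := by rw [Finset.prod_const]; exact zero_pow (by simp; omega)
      rw [this]
      exact Finset.prod_pos fun j _ => lt_of_le_of_lt hR (h1 j)
    · have : (Finset.univ : Finset (Fin n)).Nonempty := ⟨⟨0, by omega⟩, Finset.mem_univ _⟩
      exact Finset.prod_lt_prod_of_nonempty (fun j _ => lt_of_le_of_ne hR (Ne.symm hR0))
        (fun j _ => h1 j) this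
  rw [h4] at h5
  simp at h5

open NumberField IntermediateField Polynomial in
lemma not_totally_real {K : Type*} [Field K] [NumberField K] (θ : 𝓞 K) 
    {n : ℕ} (hn : 1 ≤ n) (A : Fin n → ℤ) (c : ℤ) 
    (hmin : minpoly ℤ (θ:K) = polyF A c) (R S : ℝ) (hR : 0 < R)
    (hRn : R ^ n = (c:ℝ)) (hS : ∀ j, |(A j : ℝ)| ≤ S)
    (hδ : (R + S) ^ n - R ^ n < (R * Real.sin (Real.pi / n)) ^ n) :
    ¬ IsTotallyReal K := by
  intro htr
  have hn0 : (n:ℂ) ≠ 0 := by exact_mod_cast (by omega : n ≠ 0)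
  set z : ℂ := R * Complex.exp ((Real.pi / n : ℝ) * Complex.I) with hz
  have hzn : z ^ n = -(c:ℂ) := by
    rw [hz, mul_pow, ← Complex.exp_nat_mul]
    have e : (n:ℂ) * (((Real.pi / n : ℝ):ℂ) * Complex.I) = Real.pi * Complex.I := by
      push_cast; field_simp
    rw [e, Complex.exp_pi_mul_I, ← Complex.ofReal_pow, hRn]
    push_cast; ring
  have hznorm : ‖z‖ = R := by
    rw [hz, norm_mul, Complex.norm_exp_ofReal_mul_I, Complex.norm_real, Real.norm_of_nonneg hR.le,
      mul_one]
  have hzim : z.im = R * Real.sin (Real.pi / n) := by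
    rw [hz, Complex.im_ofReal_mul, Complex.exp_ofReal_mul_I_im]
  have hup : ‖aeval z (polyF A c)‖ ≤ (R + S) ^ n - R ^ n := by
    have h1 := (prod_sub_pow_le z (fun j => (A j : ℂ)) S (fun j => by
      rw [Complex.norm_intCast]; exact hS j)).1
    rw [hznorm, hzn, sub_neg_eq_add] at h1
    rw [polyF_aeval]
    exact h1
  obtain ⟨hmon, hdeg⟩ := polyF_monic hn A c
  have hsin : 0 ≤ R * Real.sin (Real.pi / n) := by
    apply mul_nonneg hR.le
    apply Real.sin_nonneg_of_nonneg_of_le_pi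
    · positivity
    · apply div_le_self Real.pi_pos.le
      exact_mod_cast hn
  have hlow : (R * Real.sin (Real.pi / n)) ^ n ≤ ‖aeval z (polyF A c)‖ := by
    set F := (polyF A c).map (algebraMap ℤ ℂ) with hF
    have hs : F.Splits := IsAlgClosed.splits _
    have hFm : F.Monic := hmon.map _
    have e1 : aeval z (polyF A c) = (F.roots.map (fun r => z - r)).prod := by
      rw [aeval_def, ← eval_map, ← hF]
      conv_lhs => rw [hs.eq_prod_roots_of_monic hFm]
      rw [eval_multiset_prod, Multiset.map_map]
      simp
    have e2 : Multiset.card F.roots = n := by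
      rw [← hs.natDegree_eq_card_roots, hF, hmon.natDegree_map, hdeg]
    have hreal : ∀ r ∈ F.roots, r.im = 0 := by
      intro r hr
      have hθ : IsIntegral ℤ (θ:K) := RingOfIntegers.isIntegral_coe θ
      have h3 : F = (minpoly ℚ (θ:K)).map (algebraMap ℚ ℂ) := by
        rw [minpoly.isIntegrallyClosed_eq_field_fractions' ℚ hθ, Polynomial.map_map, hF, hmin]
        rfl
      rw [h3] at hr
      classical
      have hz' : r ∈ (minpoly ℚ (θ:K)).rootSet ℂ := by
        rw [Polynomial.rootSet, Finset.mem_coe, Multiset.mem_toFinset]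
        exact hr
      rw [← Embeddings.range_eval_eq_rootSet_minpoly K ℂ (θ:K)] at hz'
      obtain ⟨φ, rfl⟩ := hz'
      have := IsTotallyReal.complexEmbedding_isReal φ
      have h4 := RingHom.congr_fun this (θ:K)
      exact Complex.conj_eq_iff_im.mp h4
    rw [e1]
    have key : ∀ s : Multiset ℂ, (∀ r ∈ s, r.im = 0) →
        (R * Real.sin (Real.pi / n)) ^ (Multiset.card s) ≤ ‖(s.map (fun r => z - r)).prod‖ := by
      intro s
      induction s using Multiset.induction with
      | empty => simp
      | cons a s ih =>
        intro h
        rw [Multiset.card_cons, Multiset.map_cons, Multiset.prod_cons, norm_mul, pow_succ, mul_comm]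
        have h5 : R * Real.sin (Real.pi / n) ≤ ‖z - a‖ := by
          have h6 := Complex.abs_im_le_norm (z - a)
          rw [Complex.sub_im, h a (Multiset.mem_cons_self a s), sub_zero, hzim] at h6
          exact (le_abs_self _).trans h6
        exact mul_le_mul h5 (ih fun r hr => h r (Multiset.mem_cons_of_mem hr)) (by positivity)
          (norm_nonneg _)
    have := key F.roots hreal
    rwa [e2] at this
  linarith

open NumberField IntermediateField Polynomial in
lemma ideals_pow {K : Type*} [Field K] [NumberField K] (θ : 𝓞 K) 
    {n : ℕ} (A : Fin n → ℤ) (t : ℤ) (ℓ : ℕ) 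
    (hmin : minpoly ℤ (θ:K) = polyF A (t ^ ℓ))
    (hcop : ∀ i j, i ≠ j → IsCoprime t (A i - A j)) (i : Fin n) :
    ∃ I : Ideal (𝓞 K), Ideal.span {θ - (A i : 𝓞 K)} = I ^ ℓ := by
  have hroot : ∏ j, (θ - (A j : 𝓞 K)) + ((t^ℓ : ℤ) : 𝓞 K) = 0 := by
    rw [← polyF_aeval, ← hmin]
    apply RingOfIntegers.coe_injective
    have := minpoly.aeval ℤ (θ:K)
    rw [map_zero, ← this, ← aeval_algebraMap_apply]
  have hroot' : ∏ j, (θ - (A j : 𝓞 K)) = -((t:𝓞 K) ^ ℓ) := by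
    have := eq_neg_of_add_eq_zero_left hroot
    rw [this]; push_cast; rfl
  have hprod : ∏ j, Ideal.span {θ - (A j : 𝓞 K)} = (Ideal.span {(t : 𝓞 K)}) ^ ℓ := by
    rw [Ideal.prod_span_singleton, hroot', Ideal.span_singleton_pow, Ideal.span_singleton_neg]
  refine Finset.exists_eq_pow_of_mul_eq_pow_of_coprime (s := Finset.univ)
    (f := fun j => Ideal.span {θ - (A j : 𝓞 K)}) ?_ hprod i (Finset.mem_univ i)
  intro j _ k _ hjk
  rw [Ideal.isCoprime_span_singleton_iff]
  have h1 : IsCoprime ((t:𝓞 K)^ℓ) ((A j : 𝓞 K) - (A k : 𝓞 K)) := by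
    have := ((hcop j k hjk).pow_left (m := ℓ)).map (Int.castRingHom (𝓞 K))
    simpa using this
  obtain ⟨a, b, hab⟩ := h1
  have h2 : (θ - (A j : 𝓞 K)) ∣ (t:𝓞 K)^ℓ := by
    rw [← dvd_neg, ← hroot']
    exact Finset.dvd_prod_of_mem _ (Finset.mem_univ j)
  obtain ⟨d, hd⟩ := h2
  refine ⟨a * d - b, b, ?_⟩
  rw [← hab, hd]; ring

end

section

lemma sum_fin_rev (n : ℕ) : ∑ i : Fin n, 2 * (n - 1 - (i:ℕ)) = n * (n - 1) := by
  rw [← Finset.mul_sum, Fin.sum_univ_eq_sum_range (fun i => n - 1 - i) n,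
    Finset.sum_range_reflect (fun i => i) n, mul_comm, Finset.sum_range_id_mul_two]

open NumberField IntermediateField Polynomial in
lemma disc_bound {K : Type*} [Field K] [NumberField K] (θ : 𝓞 K) (hprim : ℚ⟮(θ:K)⟯ = ⊤)
    (B : ℝ) (hB : ∀ φ : K →+* ℂ, ‖φ (θ:K)‖ ≤ B) :
    |(discr K : ℝ)| ≤ (2 * B) ^ (Module.finrank ℚ K * (Module.finrank ℚ K - 1)) := by
  classical
  obtain ⟨pb, hpb⟩ := prim_pb (θ:K) hprim
  have hdim : pb.dim = Module.finrank ℚ K := pb.finrank.symm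
  set n := pb.dim with hn
  have hcard : Fintype.card (K →ₐ[ℚ] ℂ) = n := by rw [AlgHom.card, hdim]
  let e : Fin n ≃ (K →ₐ[ℚ] ℂ) := (Fintype.equivFinOfCardEq hcard).symm
  have hd := Algebra.discr_powerBasis_eq_prod ℚ ℂ pb e
  -- lower bound
  have hdet : ∃ d : ℤ, d ≠ 0 ∧ Algebra.discr ℚ pb.basis = (d:ℚ)^2 * discr K := by
    let b0 := RingOfIntegers.basis K
    have hc : Fintype.card (Module.Free.ChooseBasisIndex ℤ (𝓞 K)) = n := by
      rw [← Module.finrank_eq_card_chooseBasisIndex, RingOfIntegers.rank, hdim]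
    let b : Module.Basis (Fin n) ℤ (𝓞 K) := b0.reindex (Fintype.equivFinOfCardEq hc)
    let v : Fin n → 𝓞 K := fun i => θ ^ (i:ℕ)
    let P : Matrix (Fin n) (Fin n) ℤ := b.toMatrix v
    have h1 : Matrix.vecMul b (P.map (algebraMap ℤ (𝓞 K))) = v := b.toMatrix_map_vecMul v
    have h2 : Algebra.discr ℤ v = P.det ^ 2 * discr K := by
      rw [← h1, Algebra.discr_of_matrix_vecMul, NumberField.discr_eq_discr]
    have h3 : (Algebra.discr ℤ v : ℚ) = Algebra.discr ℚ pb.basis := by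
      rw [Algebra.discr_def, Algebra.discr_def]
      have e1 : ((Algebra.traceMatrix ℤ v).det : ℚ) =
          ((Algebra.traceMatrix ℤ v).map (Int.castRingHom ℚ)).det := by
        have := RingHom.map_det (Int.castRingHom ℚ) (Algebra.traceMatrix ℤ v)
        simpa using this
      rw [e1]
      congr 1
      ext i j
      rw [Matrix.map_apply, Algebra.traceMatrix_apply, Algebra.traceMatrix_apply,
        Algebra.traceForm_apply, Algebra.traceForm_apply, pb.basis_eq_pow, pb.basis_eq_pow, hpb]
      exact (Algebra.coe_trace_int (K := K) (v i * v j)).trans (by simp [v])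
    have h4 : Algebra.discr ℚ pb.basis ≠ 0 := Algebra.discr_not_zero_of_basis ℚ pb.basis
    refine ⟨P.det, ?_, ?_⟩
    · intro h
      rw [← h3, h2, h] at h4
      simp at h4
    · rw [← h3, h2]; push_cast; rfl
  obtain ⟨d, hd0, hdd⟩ := hdet
  have hd1 : (1:ℝ) ≤ (d:ℝ)^2 := by
    have : (1:ℤ) ≤ d^2 := by have := sq_nonneg d; have := pow_ne_zero 2 hd0; omega
    exact_mod_cast this
  have h5 : ‖(algebraMap ℚ ℂ) (Algebra.discr ℚ pb.basis)‖ = (d:ℝ)^2 * |(discr K : ℝ)| := by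
    rw [hdd]
    simp [Complex.norm_intCast]
  have h6 : ‖(algebraMap ℚ ℂ) (Algebra.discr ℚ pb.basis)‖ ≤ (2*B)^(n*(n-1)) := by
    rw [hd, norm_prod]
    calc ∏ i : Fin n, ‖∏ j ∈ Finset.Ioi i, ((e j) pb.gen - (e i) pb.gen) ^ 2‖ 
        ≤ ∏ i : Fin n, (2*B)^(2 * (n - 1 - (i:ℕ))) := by
          apply Finset.prod_le_prod (fun i _ => norm_nonneg _)
          intro i _
          rw [norm_prod]
          calc ∏ j ∈ Finset.Ioi i, ‖((e j) pb.gen - (e i) pb.gen) ^ 2‖ 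
              ≤ ∏ j ∈ Finset.Ioi i, (2*B)^2 := by
                apply Finset.prod_le_prod (fun i _ => norm_nonneg _)
                intro j _
                rw [norm_pow]
                gcongr
                rw [hpb]
                refine (norm_sub_le _ _).trans ?_
                have q1 := hB (e j).toRingHom
                have q2 := hB (e i).toRingHom
                simp only [AlgHom.toRingHom_eq_coe, RingHom.coe_coe] at q1 q2
                linarith
            _ = _ := by rw [Finset.prod_const, Fin.card_Ioi, ← pow_mul]
      _ = _ := by rw [Finset.prod_pow_eq_pow_sum, sum_fin_rev]
  rw [← hdim]
  calc |(discr K : ℝ)| ≤ (d:ℝ)^2 * |(discr K : ℝ)| := le_mul_of_one_le_left (abs_nonneg _) hd1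
    _ ≤ _ := by rw [← h5]; exact h6

/-- local conditions -/
def LocCond (m p : ℕ) (i : Fin m) (A : Fin (m+1) → ℤ) (c : ℤ) : Prop :=
  ∃ q : ℕ, q.Prime ∧ p * (4 ^ (m+1)).factorial ∣ q - 1 ∧ (q:ℤ) ∣ (polyF A c).eval 0 ∧
    ¬ (q:ℤ) ∣ (polyF A c).derivative.eval 0 ∧
    (∀ j : Fin m, j ≠ i → ((-A j.castSucc : ℤ) : ZMod q) = 1) ∧
    orderOf ((-A i.castSucc : ℤ) : ZMod q) = q - 1

open NumberField IntermediateField Polynomial in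
theorem field_props {K : Type*} [Field K] [NumberField K] (θ : 𝓞 K) (hprim : ℚ⟮(θ:K)⟯ = ⊤)
    {m : ℕ} (hm : 1 ≤ m) (A : Fin (m+1) → ℤ) (t : ℤ) (ℓ : ℕ) 
    (hmin : minpoly ℤ (θ:K) = polyF A (t ^ ℓ))
    (hcop : ∀ i j, i ≠ j → IsCoprime t (A i - A j)) (R S : ℝ) (hR : 0 < R)
    (hRn : R ^ (m+1) = (t:ℝ)^ℓ) (hS : ∀ j, |(A j : ℝ)| ≤ S)
    (hδ : (R + S) ^ (m+1) - R ^ (m+1) < (R * Real.sin (Real.pi / ((m+1 : ℕ):ℝ))) ^ (m+1))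
    (hloc : ∀ p : ℕ, p.Prime → p ∣ ℓ → ∀ i : Fin m, LocCond m p i A (t ^ ℓ)) :
    Module.finrank ℚ K = m + 1 ∧ ℓ ∣ classNumber K ∧ (∀ w : InfinitePlace K, w (θ:K) ≤ R + S) ∧ 
    |(discr K : ℝ)| ≤ (2 * (R + S)) ^ ((m+1) * m) := by
  have hn : Module.finrank ℚ K = m + 1 := by
    have h1 := (Field.primitive_element_iff_minpoly_natDegree_eq ℚ (θ:K)).mp hprim
    have hθ : IsIntegral ℤ (θ:K) := RingOfIntegers.isIntegral_coe θ
    rw [minpoly.isIntegrallyClosed_eq_field_fractions' ℚ hθ,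
      (minpoly.monic hθ).natDegree_map, hmin, (polyF_monic (by omega) A _).2] at h1
    exact h1.symm
  have hRn' : R ^ (m+1) = ((t^ℓ : ℤ) : ℝ) := by rw [hRn]; push_cast; rfl
  have hemb : ∀ φ : K →+* ℂ, ‖φ (θ:K)‖ ≤ R + S := by
    intro φ
    apply root_bound (by omega) A (t^ℓ) R S hR.le _ hS
    · rw [← hmin]
      have : aeval (φ (θ:K)) (minpoly ℤ (θ:K)) = φ (aeval (θ:K) (minpoly ℤ (θ:K))) := by
        exact aeval_algHom_apply (φ.toIntAlgHom) (θ:K) _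
      rw [this, minpoly.aeval, map_zero]
    · rw [← hRn', abs_of_nonneg (by positivity)]
  have hntr := not_totally_real θ (by omega) A (t^ℓ) hmin R S hR hRn' hS hδ
  refine ⟨hn, ?_, ?_, ?_⟩
  · apply classnum_criterion K ℓ m _ (fun j => θ - (A j.castSucc : 𝓞 K))
    · intro j
      exact ideals_pow θ A t ℓ hmin hcop j.castSucc
    · intro p hp hpl i
      obtain ⟨q, hq, h1, h2, h3, h4, h5⟩ := hloc p hp hpl i
      have : Fact q.Prime := ⟨hq⟩
      obtain ⟨φ, hφ⟩ := hensel_hom K θ hprim q _ hmin h2 h3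
      refine ⟨q, this, φ, ?_, ?_, ?_⟩
      · refine dvd_trans (mul_dvd_mul_left p ?_) h1
        have := torsion_dvd K
        rwa [hn] at this
      · intro j hj
        rw [map_sub, hφ, map_intCast, ← h4 j hj]
        push_cast; ring
      · rw [← h5, map_sub, hφ, map_intCast]
        push_cast; rw [zero_sub]
    · have h1 := InfinitePlace.card_add_two_mul_card_eq_rank K
      have h2 := InfinitePlace.card_eq_nrRealPlaces_add_nrComplexPlaces K
      have h3 : InfinitePlace.nrComplexPlaces K ≠ 0 := by
        rw [Ne, nrComplexPlaces_eq_zero_iff]; exact hntr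
      rw [Units.rank]
      omega
  · intro w
    rw [← InfinitePlace.norm_embedding_eq]
    exact hemb _
  · have := disc_bound θ hprim (R + S) hemb
    rw [hn] at this
    simpa using this

end

section

open NumberField IntermediateField Polynomial in
lemma exists_field_aux {K : Type*} [Field K] [NumberField K] (f : ℤ[X]) (hf : f.Monic)
    (hirr : Irreducible f) (α : K) (hα : f.eval₂ (Int.castRingHom K) α = 0)
    (hfin : Module.finrank ℚ K = f.natDegree) :
    ∃ θ : 𝓞 K, ℚ⟮(θ:K)⟯ = ⊤ ∧ minpoly ℤ (θ:K) = f := by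
  have hirr' : Irreducible (f.map (algebraMap ℤ ℚ)) :=
    (hf.irreducible_iff_irreducible_map_fraction_map).mp hirr
  have hmon : (f.map (algebraMap ℤ ℚ)).Monic := hf.map _
  have hα' : aeval α f = 0 := hα
  have hα'' : aeval α (f.map (algebraMap ℤ ℚ)) = 0 := by
    rw [aeval_map_algebraMap]; exact hα'
  have hintZ : IsIntegral ℤ α := ⟨f, hf, by rw [← aeval_def]; exact hα'⟩
  have hmp : minpoly ℚ α = f.map (algebraMap ℤ ℚ) := 
    (minpoly.eq_of_irreducible_of_monic hirr' hα'' hmon).symm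
  refine ⟨⟨α, hintZ⟩, ?_, ?_⟩
  · apply (Field.primitive_element_iff_minpoly_natDegree_eq ℚ _).mpr
    change (minpoly ℚ α).natDegree = _
    rw [hmp, hf.natDegree_map, hfin]
  · apply Polynomial.map_injective (algebraMap ℤ ℚ) (algebraMap ℤ ℚ).injective_int
    have := minpoly.isIntegrallyClosed_eq_field_fractions' ℚ hintZ
    exact this.symm.trans hmp

open NumberField IntermediateField Polynomial in
lemma exists_field (f : ℤ[X]) (hf : f.Monic) (hirr : Irreducible f) :
    ∃ F : IntermediateField ℚ ℂ, ∃ _ : FiniteDimensional ℚ F, ∃ θ : 𝓞 F,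
      ℚ⟮(θ:F)⟯ = ⊤ ∧ minpoly ℤ (θ:F) = f := by
  have hirr' : Irreducible (f.map (algebraMap ℤ ℚ)) :=
    (hf.irreducible_iff_irreducible_map_fraction_map).mp hirr
  have hmon : (f.map (algebraMap ℤ ℚ)).Monic := hf.map _
  obtain ⟨θ0, hθ0⟩ := IsAlgClosed.exists_aeval_eq_zero ℂ (f.map (algebraMap ℤ ℚ))
    (hirr'.degree_pos).ne'
  have hint : IsIntegral ℚ θ0 := ⟨_, hmon, by rw [← aeval_def]; exact hθ0⟩
  have hfd : FiniteDimensional ℚ ℚ⟮θ0⟯ := adjoin.finiteDimensional hint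
  have hmp : minpoly ℚ θ0 = f.map (algebraMap ℤ ℚ) := 
    (minpoly.eq_of_irreducible_of_monic hirr' hθ0 hmon).symm
  have h1 : Module.finrank ℚ ℚ⟮θ0⟯ = f.natDegree := by
    rw [adjoin.finrank hint, hmp, hf.natDegree_map]
  refine ⟨ℚ⟮θ0⟯, hfd, exists_field_aux (K := ℚ⟮θ0⟯) f hf hirr ⟨θ0, mem_adjoin_simple_self ℚ θ0⟩ ?_ h1⟩
  apply (algebraMap ℚ⟮θ0⟯ ℂ).injective
  rw [map_zero, hom_eval₂]
  rw [aeval_map_algebraMap, aeval_def] at hθ0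
  have e : (algebraMap ℚ⟮θ0⟯ ℂ).comp (Int.castRingHom ℚ⟮θ0⟯) = algebraMap ℤ ℂ :=
    RingHom.ext_int _ _
  rw [e]
  exact hθ0

end

section

def Solv {n : ℕ} (Q : (Fin n → ℤ) → ℤ → Prop) : Prop :=
  ∀ N : ℕ, 0 < N → ∃ M : ℕ, 0 < M ∧ Nat.Coprime M N ∧ ∃ α : Fin n → ℤ, ∀ (A : Fin n → ℤ) (c : ℤ),
    (∀ j, A j ≡ α j [ZMOD M]) → c ≡ 1 [ZMOD M] → Q A c

lemma Solv.and {n : ℕ} {Q1 Q2 : (Fin n → ℤ) → ℤ → Prop} (h1 : Solv Q1) (h2 : Solv Q2) :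
    Solv (fun A c => Q1 A c ∧ Q2 A c) := by
  intro N hN
  obtain ⟨M1, hM1, hc1, α1, H1⟩ := h1 N hN
  obtain ⟨M2, hM2, hc2, α2, H2⟩ := h2 (N * M1) (by positivity)
  have hc : IsCoprime (M2:ℤ) (M1:ℤ) := 
    Nat.isCoprime_iff_coprime.mpr (Nat.Coprime.coprime_mul_left_right hc2)
  have hc2' : Nat.Coprime M2 N := Nat.Coprime.coprime_mul_right_right hc2
  obtain ⟨u, v, huv⟩ := hc
  refine ⟨M1 * M2, by positivity, Nat.Coprime.mul_left hc1 hc2', 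
    fun j => α1 j * (u * M2) + α2 j * (v * M1), ?_⟩
  intro A c hA hcc
  push_cast at hA hcc
  constructor
  · apply H1
    · intro j
      refine ((hA j).of_dvd (Dvd.intro _ rfl)).trans ?_
      apply Int.modEq_iff_dvd.mpr
      refine ⟨v * (α1 j - α2 j), ?_⟩
      linear_combination (-α1 j) * huv
    · exact hcc.of_dvd (Dvd.intro _ rfl)
  · apply H2
    · intro j
      refine ((hA j).of_dvd (Dvd.intro_left _ rfl)).trans ?_
      apply Int.modEq_iff_dvd.mpr
      refine ⟨u * (α2 j - α1 j), ?_⟩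
      linear_combination (-α2 j) * huv
    · exact hcc.of_dvd (Dvd.intro_left _ rfl)

lemma Solv.ball {n : ℕ} {ι : Type*} (s : Finset ι) (Q : ι → (Fin n → ℤ) → ℤ → Prop)
    (h : ∀ x ∈ s, Solv (Q x)) : Solv (fun A c => ∀ x ∈ s, Q x A c) := by
  classical
  induction s using Finset.induction_on with
  | empty => 
    intro N hN
    exact ⟨1, by simp, by simp, fun _ => 0, by simp⟩
  | insert a s ha ih =>
    have h1 := h a (Finset.mem_insert_self _ _)
    have h2 := ih (fun x hx => h x (Finset.mem_insert_of_mem hx))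
    intro N hN
    obtain ⟨M, hM, hc, α, H⟩ := (h1.and h2) N hN
    refine ⟨M, hM, hc, α, fun A c hA hcc x hx => ?_⟩
    rcases Finset.mem_insert.mp hx with rfl | hx
    · exact (H A c hA hcc).1
    · exact (H A c hA hcc).2 x hx

open Polynomial in
lemma loc_solv (m : ℕ) (hm : 2 ≤ m) (p : ℕ) (hp : p.Prime) (i : Fin m) :
    Solv (n := m+1) (fun A c => LocCond m p i A c) := by
  classical
  intro N hN
  have hk : p * (4^(m+1)).factorial ≠ 0 := mul_ne_zero hp.ne_zero (Nat.factorial_ne_zero _)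
  obtain ⟨q, hq, hqgt, hq1⟩ := Nat.exists_prime_gt_modEq_one (k := p * (4^(m+1)).factorial)
    (N + 2 * m) hk
  have hqN : Nat.Coprime q N := by
    apply (Nat.Prime.coprime_iff_not_dvd hq).mpr
    intro h
    have := Nat.le_of_dvd hN h
    omega
  have : Fact q.Prime := ⟨hq⟩
  obtain ⟨g, hg⟩ := IsCyclic.exists_generator (α := (ZMod q)ˣ)
  have hgo : orderOf g = q - 1 := by
    rw [orderOf_eq_card_of_forall_mem_zpowers hg, Nat.card_eq_fintype_card, ZMod.card_units]
  have hne : ((2 * (m - 1) : ℕ) : ZMod q) ≠ 0 := by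
    rw [Ne, ZMod.natCast_eq_zero_iff]
    intro h
    have := Nat.le_of_dvd (by omega) h
    omega
  have hm1 : ((m - 1 : ℕ) : ZMod q) = (m : ZMod q) - 1 := by
    rw [Nat.cast_sub (by omega)]; simp
  obtain ⟨h, hho, hh⟩ : ∃ h : (ZMod q)ˣ, orderOf h = q - 1 ∧ 
      ((m:ZMod q) - 1) + ((h⁻¹ : (ZMod q)ˣ) : ZMod q) - (h : ZMod q) ≠ 0 := by
    by_contra hcon
    push Not at hcon
    have e1 := hcon g hgo
    have e2 := hcon g⁻¹ (by rw [orderOf_inv, hgo])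
    rw [inv_inv] at e2
    apply hne
    push_cast
    rw [hm1]
    linear_combination e1 + e2
  let b : Fin (m+1) → (ZMod q)ˣ := Fin.snoc (fun j : Fin m => if j = i then h else 1) (-h⁻¹)
  have hbl : b (Fin.last m) = -h⁻¹ := by simp [b]
  have hbc : ∀ j : Fin m, b j.castSucc = if j = i then h else 1 := by intro j; simp [b]
  have hbprod : ∏ j, b j = -1 := by
    rw [Fin.prod_univ_castSucc, hbl]
    simp_rw [hbc]
    simp
  refine ⟨q, hq.pos, hqN, fun j => -((b j : ZMod q).val : ℤ), ?_⟩
  intro A c hA hc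
  have hA' : ∀ j, ((-A j : ℤ) : ZMod q) = b j := by
    intro j
    have := (ZMod.intCast_eq_intCast_iff _ _ _).mpr (hA j)
    push_cast at this ⊢
    rw [this]
    simp
  have hA'' : ∀ j, (A j : ZMod q) = - (b j : ZMod q) := by
    intro j
    rw [← hA' j]; push_cast; ring
  have hc' : (c : ZMod q) = 1 := by
    have := (ZMod.intCast_eq_intCast_iff _ _ _).mpr hc
    simpa using this
  have hbprod' : ∏ j, (b j : ZMod q) = -1 := by
    have := congrArg (Units.val) hbprod
    rw [Units.coe_prod] at this
    rw [this]; simp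
  refine ⟨q, hq, ?_, ?_, ?_, ?_, ?_⟩
  · exact (Nat.modEq_iff_dvd' hq.one_lt.le).mp hq1.symm
  · rw [← ZMod.intCast_zmod_eq_zero_iff_dvd]
    have : ((eval 0 (polyF A c) : ℤ) : ZMod q) = ∏ j, (b j : ZMod q) + 1 := by
      simp [polyF, eval_prod, hA'', hc']
    rw [this, hbprod']; ring
  · rw [← ZMod.intCast_zmod_eq_zero_iff_dvd]
    have : ((eval 0 (derivative (polyF A c)) : ℤ) : ZMod q) = 
        ∑ j, ∏ k ∈ Finset.univ.erase j, (b k : ZMod q) := by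
      rw [polyF, derivative_add, derivative_C, add_zero, derivative_prod_finset, eval_finsetSum,
        Int.cast_sum]
      refine Finset.sum_congr rfl fun j _ => ?_
      rw [derivative_X_sub_C, mul_one, eval_prod, Int.cast_prod]
      refine Finset.prod_congr rfl fun k _ => ?_
      rw [← hA' k, eval_sub, eval_X, eval_C, zero_sub]
    rw [this]
    have h2 : ∀ j, ∏ k ∈ Finset.univ.erase j, (b k : ZMod q) = - ((b j)⁻¹ : (ZMod q)ˣ) := by
      intro j
      have := Finset.mul_prod_erase Finset.univ (fun k => (b k : ZMod q)) (Finset.mem_univ j)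
      rw [hbprod'] at this
      rw [← Units.mul_right_inj (b j), this, mul_neg, Units.mul_inv]
    simp_rw [h2]
    rw [Finset.sum_neg_distrib, neg_eq_zero, Fin.sum_univ_castSucc, hbl]
    simp_rw [hbc]
    have h3 : ∀ j : Fin m, ((((if j = i then h else 1)⁻¹ : (ZMod q)ˣ)) : ZMod q) = 
        1 + if j = i then (((h⁻¹ : (ZMod q)ˣ) : ZMod q) - 1) else 0 := by
      intro j
      split_ifs
      · ring
      · rw [inv_one, Units.val_one, add_zero]
    simp_rw [h3]
    rw [Finset.sum_add_distrib, Finset.sum_ite_eq' Finset.univ i]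
    intro h4
    apply hh
    rw [← h4, if_pos (Finset.mem_univ i), Finset.sum_const, Finset.card_univ, Fintype.card_fin,
      inv_neg, inv_inv, Units.val_neg, nsmul_eq_mul]
    ring
  · intro j hj
    rw [hA', hbc, if_neg hj]; simp
  · rw [hA', hbc, if_pos rfl, orderOf_units, hho]

end

section

open Polynomial in
lemma eis_solv (n : ℕ) (hn : 2 ≤ n) :
    Solv (n := n) (fun A c => Irreducible (polyF A c) ∧ Function.Injective A) := by
  classical
  intro N hN
  obtain ⟨q, hq, hqgt, hq1⟩ := Nat.exists_prime_gt_modEq_one (k := n) N (by omega)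
  have hqN : Nat.Coprime q N := by
    apply (Nat.Prime.coprime_iff_not_dvd hq).mpr
    intro h
    have := Nat.le_of_dvd hN h
    omega
  have : Fact q.Prime := ⟨hq⟩
  have hdvd : n ∣ q - 1 := (Nat.modEq_iff_dvd' hq.one_lt.le).mp hq1.symm
  obtain ⟨g, hg⟩ := IsCyclic.exists_generator (α := (ZMod q)ˣ)
  have hgo : orderOf g = q - 1 := by
    rw [orderOf_eq_card_of_forall_mem_zpowers hg, Nat.card_eq_fintype_card, ZMod.card_units]
  have hζ : ∃ ζ : ZMod q, IsPrimitiveRoot ζ n := by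
    obtain ⟨k, hk⟩ := hdvd
    have hk0 : 0 < q - 1 := by have := hq.one_lt; omega
    have h1 : IsPrimitiveRoot (g : ZMod q) (q - 1) := by
      rw [← hgo, ← orderOf_units]; exact IsPrimitiveRoot.orderOf _
    exact ⟨_, h1.pow hk0 (hk.trans (mul_comm _ _))⟩
  obtain ⟨ζ, hζ⟩ := hζ
  have hn0 : 0 < n := by omega
  let e : Fin n ≃ nthRootsFinset n (1 : ZMod q) :=
    (Fintype.equivFinOfCardEq (by rw [Fintype.card_coe, hζ.card_nthRootsFinset])).symm
  let r : Fin n → ZMod q := fun j => (e j : ZMod q)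
  have hrinj : Function.Injective r := fun i j h => e.injective (Subtype.ext h)
  have hrprod : ∏ j, (X - C (r j)) = X ^ n - 1 := by
    rw [X_pow_sub_one_eq_prod hn0 hζ, ← Finset.prod_coe_sort (nthRootsFinset n (1 : ZMod q))]
    exact Fintype.prod_equiv e _ _ (fun j => rfl)
  have hr0 : ∀ j, r j ≠ 0 := by
    intro j h
    have := (mem_nthRootsFinset hn0 (1 : ZMod q)).mp (e j).2
    rw [show ((e j : ZMod q)) = 0 from h, zero_pow hn0.ne'] at this
    exact zero_ne_one this
  -- choice of lifts
  have hα : ∃ α : Fin n → ℤ, (∀ j, (α j : ZMod q) = r j) ∧ ¬ ((q:ℤ)^2 ∣ ∏ j, (-α j) + 1) := by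
    let α : Fin n → ℤ := fun j => ((r j).val : ℤ)
    have hα : ∀ j, (α j : ZMod q) = r j := by intro j; simp [α]
    by_cases h : (q:ℤ)^2 ∣ ∏ j, (-α j) + 1
    · let j0 : Fin n := ⟨0, hn0⟩
      refine ⟨Function.update α j0 (α j0 - q), ?_, ?_⟩
      · intro j
        by_cases hj : j = j0
        · subst hj; simp [hα]
        · simp [hj, hα]
      · intro h'
        have e1 := Finset.mul_prod_erase Finset.univ (fun j => -α j) (Finset.mem_univ j0)
        have e2 := Finset.mul_prod_erase Finset.univ 
          (fun j => -(Function.update α j0 (α j0 - q)) j) (Finset.mem_univ j0)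
        have e3 : ∏ j ∈ Finset.univ.erase j0, (-(Function.update α j0 (α j0 - q)) j) =
            ∏ j ∈ Finset.univ.erase j0, (-α j) := by
          refine Finset.prod_congr rfl fun j hj => ?_
          rw [Function.update_of_ne (Finset.ne_of_mem_erase hj)]
        simp only [Function.update_self] at e2
        rw [e3] at e2
        have h3 := dvd_sub h' h
        rw [← e1, ← e2] at h3
        have h4 : (q:ℤ) * q ∣ q * ∏ j ∈ Finset.univ.erase j0, (-α j) := by
          have e5 : (-(α j0 - (q:ℤ)) * ∏ j ∈ Finset.univ.erase j0, (-α j) + 1) -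
              (-α j0 * ∏ j ∈ Finset.univ.erase j0, (-α j) + 1) =
              q * ∏ j ∈ Finset.univ.erase j0, (-α j) := by ring
          rw [← e5, ← sq]
          exact h3
        have h5 := Int.dvd_of_mul_dvd_mul_left (by exact_mod_cast hq.ne_zero) h4
        rw [← ZMod.intCast_zmod_eq_zero_iff_dvd, Int.cast_prod, Finset.prod_eq_zero_iff] at h5
        obtain ⟨j, _, hj⟩ := h5
        rw [Int.cast_neg, hα, neg_eq_zero] at hj
        exact hr0 j hj
    · exact ⟨α, hα, h⟩
  obtain ⟨α, hα1, hα2⟩ := hα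
  refine ⟨q ^ 2, by have := hq.pos; positivity, Nat.Coprime.pow_left 2 hqN, α, ?_⟩
  intro A c hA hc
  push_cast at hA hc
  have hqq : (q:ℤ) ∣ (q:ℤ)^2 := ⟨q, by ring⟩
  have hA' : ∀ j, (A j : ZMod q) = r j := by
    intro j
    rw [← hα1 j]
    exact (ZMod.intCast_eq_intCast_iff _ _ _).mpr ((hA j).of_dvd hqq)
  have hc' : (c : ZMod q) = 1 := by
    have := (ZMod.intCast_eq_intCast_iff _ _ _).mpr (hc.of_dvd hqq)
    simpa using this
  obtain ⟨hmon, hdeg⟩ := polyF_monic (by omega) A c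
  constructor
  · have hred : (polyF A c).map (Int.castRingHom (ZMod q)) = X ^ n := by
      have e6 : ∀ z : ℤ, (C z : ℤ[X]).map (Int.castRingHom (ZMod q)) = C (z : ZMod q) := by
        intro z; rw [map_C]; rfl
      rw [polyF, Polynomial.map_add, Polynomial.map_prod, e6, hc']
      simp_rw [Polynomial.map_sub, map_X, e6, hA']
      rw [hrprod, C_1]; ring
    have hprime : (Ideal.span {(q:ℤ)}).IsPrime := by
      rw [Ideal.span_singleton_prime (by exact_mod_cast hq.ne_zero)]
      exact Nat.prime_iff_prime_int.mp hq
    have hE : (polyF A c).IsEisensteinAt (Ideal.span {(q:ℤ)}) := by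
      refine ⟨?_, ?_, ?_⟩
      · rw [hmon.leadingCoeff]
        exact fun h => hprime.ne_top ((Ideal.eq_top_iff_one _).mpr h)
      · intro k hk
        rw [hdeg] at hk
        rw [Ideal.mem_span_singleton, ← ZMod.intCast_zmod_eq_zero_iff_dvd]
        have := congrArg (fun f => coeff f k) hred
        simp only [coeff_map, eq_intCast, coeff_X_pow] at this
        rw [this, if_neg (by omega)]
      · rw [Ideal.span_singleton_pow, Ideal.mem_span_singleton]
        intro h
        apply hα2
        have h0 : (polyF A c).coeff 0 = ∏ j, (-A j) + c := by
          rw [coeff_zero_eq_eval_zero, polyF, eval_add, eval_prod, eval_C]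
          simp
        rw [h0] at h
        have h1 : ∏ j, (-A j) + c ≡ ∏ j, (-α j) + 1 [ZMOD (q:ℤ)^2] :=
          Int.ModEq.add (Int.ModEq.prod fun j _ => (hA j).neg) hc
        exact (Int.modEq_zero_iff_dvd).mp (h1.symm.trans (Int.modEq_zero_iff_dvd.mpr h))
    exact hE.irreducible hprime hmon.isPrimitive (by omega)
  · intro i j hij
    apply hrinj
    rw [← hA', ← hA', hij]

/-- The residue class. -/
theorem params (m ℓ : ℕ) (hm : 2 ≤ m) (hℓ : 1 ≤ ℓ) (w : ℕ) :
    ∃ M : ℕ, 0 < M ∧ w.factorial ∣ M ∧ ∃ α : Fin (m+1) → ℤ, 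
      (∀ i j, α i ≡ α j [ZMOD M] → i = j) ∧ (∀ j, 0 ≤ α j ∧ α j < M) ∧
      ∀ (A : Fin (m+1) → ℤ) (t : ℤ), (∀ j, A j ≡ α j [ZMOD M]) → t ≡ 1 [ZMOD M] →
        Irreducible (polyF A (t^ℓ)) ∧
        ∀ p : ℕ, p.Prime → p ∣ ℓ → ∀ i : Fin m, LocCond m p i A (t ^ ℓ) := by
  have h1 := eis_solv (m+1) (by omega)
  have h2 := Solv.ball (n := m+1) (ℓ.primeFactors ×ˢ (Finset.univ : Finset (Fin m))) 
    (fun x A c => LocCond m x.1 x.2 A c) (by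
      intro x hx
      apply loc_solv m hm
      exact (Nat.mem_primeFactors.mp (Finset.mem_product.mp hx).1).1)
  obtain ⟨M, hM, -, α, H⟩ := (h1.and h2) 1 one_pos
  have hM' : (0:ℤ) < M := by exact_mod_cast hM
  have hF : (0:ℤ) < w.factorial := by exact_mod_cast w.factorial_pos
  have hmod : ∀ j, α j % (M:ℤ) ≡ α j [ZMOD M] := fun j => Int.mod_modEq _ _
  refine ⟨M * w.factorial, by positivity, Dvd.intro_left _ rfl, fun j => α j % M, ?_, ?_, ?_⟩
  · intro i j hij
    push_cast at hij
    have hij' : α i ≡ α j [ZMOD M] := 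
      (hmod i).symm.trans ((hij.of_dvd (Dvd.intro _ rfl)).trans (hmod j))
    have := (H (Function.update α i (α j)) 1 (by
      intro k
      by_cases hk : k = i
      · subst hk; simp only [Function.update_self]; exact hij'.symm
      · simp only [Function.update_of_ne hk]; rfl) rfl).1.2
    by_contra hne
    apply hne
    apply this
    rw [Function.update_self, Function.update_of_ne (Ne.symm hne)]
  · intro j
    refine ⟨Int.emod_nonneg _ hM'.ne', (Int.emod_lt_of_pos _ hM').trans_le ?_⟩
    push_cast
    nlinarith
  · intro A t hA ht
    push_cast at hA ht
    have hd : (M:ℤ) ∣ M * w.factorial := Dvd.intro _ rfl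
    have := H A (t^ℓ) (fun j => ((hA j).of_dvd hd).trans (hmod j)) (by
      simpa using (ht.of_dvd hd).pow ℓ)
    refine ⟨this.1.1, fun p hp hpl i => this.2 (p, i) ?_⟩
    exact Finset.mem_product.mpr ⟨Nat.mem_primeFactors.mpr ⟨hp, hpl, by omega⟩, Finset.mem_univ _⟩

end

section

open NumberField in
lemma transfer {K L : Type*} [Field K] [NumberField K] [Field L] [NumberField L] (e : K ≃+* L)
    (θ : 𝓞 K) (B : ℝ) (h : ∀ w : InfinitePlace K, w (θ:K) ≤ B) :
    ∃ θ' : 𝓞 L, minpoly ℤ (θ':L) = minpoly ℤ (θ:K) ∧ ∀ w : InfinitePlace L, w (θ':L) ≤ B := by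
  refine ⟨RingOfIntegers.mapRingEquiv e θ, ?_, ?_⟩
  · have : ((RingOfIntegers.mapRingEquiv e θ : 𝓞 L) : L) = e.toIntAlgEquiv (θ:K) := rfl
    rw [this]
    exact minpoly.algEquiv_eq _ _
  · intro w
    exact h (w.comap e.toRingHom)

lemma dvd_finite (n ℓ : ℕ) (X : ℝ) (h : Finite (Quotient (isoSetoid (NumberFieldSet n X)))) :
    Finite (Quotient (isoSetoid (NumberFieldSetDvd n ℓ X))) ∧ FcardDvd n ℓ X ≤ Fcard n X := by
  have hsub : NumberFieldSetDvd n ℓ X ⊆ NumberFieldSet n X := by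
    rintro F ⟨h, h1, h2⟩
    exact ⟨h, h1, h2.1⟩
  let φ : Quotient (isoSetoid (NumberFieldSetDvd n ℓ X)) → Quotient (isoSetoid (NumberFieldSet n X)) :=
    Quotient.map' (fun F => ⟨F.1, hsub F.2⟩) (fun _ _ h => h)
  have hφ : Function.Injective φ := by
    intro a b
    refine Quotient.inductionOn₂' a b ?_
    intro x y h
    apply Quotient.sound'
    have h' : (Quotient.mk'' ⟨x.1, hsub x.2⟩ : Quotient (isoSetoid (NumberFieldSet n X))) =
      Quotient.mk'' ⟨y.1, hsub y.2⟩ := h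
    have h2 := Quotient.eq''.mp h'
    exact h2
  exact ⟨Finite.of_injective φ hφ, Nat.card_le_card_of_injective φ hφ⟩

open NumberField in
lemma fibre_bound {K : Type*} [Field K] [NumberField K] {ι : Type*} (G : Finset ι)
    (f : ι → Polynomial ℤ) (hf : Set.InjOn f G) (B : ℝ) (hB : 0 ≤ B)
    (h : ∀ g ∈ G, ∃ θ : 𝓞 K, minpoly ℤ (θ:K) = f g ∧ ∀ w : InfinitePlace K, w (θ:K) ≤ B) :
    (G.card : ℝ) ≤ (2 * (B + 1) + 1) ^ (Module.finrank ℚ K) := by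
  classical
  choose! θ h1 h2 using h
  have hinj : Set.InjOn θ G := by
    intro a ha b hb hab
    apply hf ha hb
    rw [← h1 a ha, ← h1 b hb, hab]
  have := packing K ⟨B + 1, by linarith⟩ (G.image θ) (by
    intro x hx w
    obtain ⟨g, hg, rfl⟩ := Finset.mem_image.mp hx
    have := h2 g hg w
    change _ < B + 1
    linarith)
  rw [Finset.card_image_of_injOn hinj] at this
  exact this

open NumberField in
theorem count_lower (n ℓ : ℕ) (X B : ℝ) (hB : 0 ≤ B)
    (hfin : Finite (Quotient (isoSetoid (NumberFieldSet n X)))) {ι : Type*} (G : Finset ι)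
    (f : ι → Polynomial ℤ) (hf : Set.InjOn f G)
    (h : ∀ g ∈ G, ∃ F : IntermediateField ℚ ℂ, ∃ _ : FiniteDimensional ℚ F, ∃ θ : 𝓞 F,
      minpoly ℤ (θ:F) = f g ∧ Module.finrank ℚ F = n ∧ ℓ ∣ classNumber F ∧
      (∀ w : InfinitePlace F, w (θ:F) ≤ B) ∧ |(discr F : ℝ)| ≤ X) :
    (G.card : ℝ) ≤ FcardDvd n ℓ X * (2 * (B + 1) + 1) ^ n := by
  classical
  obtain ⟨hfin', -⟩ := dvd_finite n ℓ X hfin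
  have : Fintype (Quotient (isoSetoid (NumberFieldSetDvd n ℓ X))) := Fintype.ofFinite _
  have h' : ∀ g : G, ∃ F : NumberFieldSetDvd n ℓ X, ∃ _ : FiniteDimensional ℚ F.1, ∃ θ : 𝓞 F.1,
      minpoly ℤ (θ:F.1) = f g ∧ (∀ w : InfinitePlace F.1, w (θ:F.1) ≤ B) := by
    intro g
    obtain ⟨F, h1, θ, h2, h3, h4, h5, h6⟩ := h g g.2
    exact ⟨⟨F, h1, h3, h6, h4⟩, h1, θ, h2, h5⟩
  choose F hF θ hθ hw using h'
  let q : G → Quotient (isoSetoid (NumberFieldSetDvd n ℓ X)) := fun g => Quotient.mk'' (F g)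
  have hfib : ∀ c : Quotient (isoSetoid (NumberFieldSetDvd n ℓ X)), 
      (((Finset.univ.filter fun g => q g = c).card : ℕ) : ℝ) ≤ (2 * (B + 1) + 1) ^ n := by
    intro c
    obtain ⟨L, rfl⟩ := Quotient.exists_rep c
    obtain ⟨L, hL⟩ := L
    obtain ⟨hLf, hLn, -⟩ := id hL
    have := fibre_bound (K := L) (Finset.univ.filter fun g => q g = Quotient.mk _ ⟨L, hL⟩) 
      (fun g => f g) (by
        intro a _ b _ hab
        exact Subtype.ext (hf a.2 b.2 hab)) B hB (by
        intro g hg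
        have hg' := (Finset.mem_filter.mp hg).2
        obtain ⟨e⟩ := Quotient.eq''.mp hg'
        have : NumberField (F g).1 := ⟨⟩
        obtain ⟨θ', h1, h2⟩ := transfer (K := (F g).1) (L := L) e (θ g) B (hw g)
        exact ⟨θ', h1.trans (hθ g), h2⟩)
    have e1 : Module.finrank ℚ L = n := hLn
    refine this.trans_eq ?_
    congr 1
  have hsum : G.card = ∑ c : Quotient (isoSetoid (NumberFieldSetDvd n ℓ X)), 
      (Finset.univ.filter fun g => q g = c).card := by
    rw [← Finset.card_eq_sum_card_fiberwise (fun _ _ => Finset.mem_univ _)]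
    simp
  rw [hsum, Nat.cast_sum]
  refine (Finset.sum_le_sum fun c _ => hfib c).trans_eq ?_
  rw [Finset.sum_const, nsmul_eq_mul, FcardDvd, Nat.card_eq_fintype_card, Finset.card_univ]

end

section

lemma pow_bound (r : ℕ) : ∃ K : ℕ, 1 ≤ K ∧ ∀ k : ℕ, (k+1)^r ≤ K * 2^k := by
  have h := tendsto_pow_const_div_const_pow_of_one_lt r (r := (2:ℝ)) (by norm_num)
  obtain ⟨B, hB⟩ := h.bddAbove_range
  obtain ⟨K, hK⟩ := exists_nat_ge (2 * B)
  refine ⟨K + 1, by omega, fun k => ?_⟩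
  have h1 : ((k+1 : ℕ):ℝ)^r / 2^(k+1) ≤ B := hB ⟨k+1, rfl⟩
  rw [div_le_iff₀ (by positivity)] at h1
  have : (((k+1)^r : ℕ) : ℝ) ≤ ((K+1 : ℕ) * 2^k : ℕ) := by
    push_cast at h1 ⊢
    rw [pow_succ] at h1
    have h2 : (0:ℝ) < 2^k := by positivity
    nlinarith
  exact_mod_cast this

lemma divisor_bound (r : ℕ) : ∃ C : ℕ, 1 ≤ C ∧ ∀ c : ℕ, c ≠ 0 → c.divisors.card ^ r ≤ C * c := by
  obtain ⟨K, hK, hb⟩ := pow_bound r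
  refine ⟨K ^ (2^r), Nat.one_le_pow _ _ (by omega), fun c hc => ?_⟩
  rw [Nat.card_divisors hc, ← Finset.prod_pow]
  calc ∏ p ∈ c.primeFactors, (c.factorization p + 1)^r 
      ≤ ∏ p ∈ c.primeFactors, (if p < 2^r then K else 1) * p ^ c.factorization p := by
        apply Finset.prod_le_prod' 
        intro p hp
        have hp2 := (Nat.prime_of_mem_primeFactors hp).two_le
        split_ifs with h
        · exact (hb _).trans (Nat.mul_le_mul_left _ (Nat.pow_le_pow_left hp2 _))
        · rw [one_mul]
          push Not at h
          calc (c.factorization p + 1)^r ≤ (2 ^ c.factorization p)^r := 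
                Nat.pow_le_pow_left (Nat.lt_two_pow_self) _
            _ = (2^r)^c.factorization p := by rw [← pow_mul, ← pow_mul, mul_comm]
            _ ≤ _ := Nat.pow_le_pow_left h _
    _ = (∏ p ∈ c.primeFactors, (if p < 2^r then K else 1)) * c := by
        rw [Finset.prod_mul_distrib]
        congr 1
        exact Nat.prod_factorization_pow_eq_self hc
    _ ≤ K ^ (2^r) * c := by
        apply Nat.mul_le_mul_right
        rw [Finset.prod_ite, Finset.prod_const, Finset.prod_const_one, mul_one]
        apply Nat.pow_le_pow_right (by omega)
        calc _ ≤ (Finset.range (2^r)).card := Finset.card_le_card (by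
              intro p hp
              exact Finset.mem_range.mpr (Finset.mem_filter.mp hp).2)
          _ = _ := Finset.card_range _

end

section

def Av {n : ℕ} (α : Fin n → ℤ) (M : ℕ) (a : Fin n → ℕ) : Fin n → ℤ := fun j => α j + M * (a j : ℤ)
def tv (M T s : ℕ) : ℤ := 1 + M * ((T:ℤ) + s)
def Om (n S T : ℕ) : Finset ((Fin n → ℕ) × ℕ) :=
  (Fintype.piFinset fun _ : Fin n => Finset.range S) ×ˢ Finset.range T

lemma Om_card (n S T : ℕ) : (Om n S T).card = S ^ n * T := by
  simp [Om, Finset.card_product]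

lemma eq_of_div_mod {w M : ℕ} (hc : Nat.Coprime w M) {b : ℤ} {s s' : ℕ}
    (h : (w:ℤ) ∣ b + M * s) (h' : (w:ℤ) ∣ b + M * s') (hd : s / w = s' / w) : s = s' := by
  have h1 : (w:ℤ) ∣ M * ((s:ℤ) - s') := by
    have := dvd_sub h h'
    have e : b + M * (s:ℤ) - (b + M * s') = M * ((s:ℤ) - s') := by ring
    rwa [e] at this
  have h2 : (w:ℤ) ∣ (s:ℤ) - s' := 
    IsCoprime.dvd_of_dvd_mul_left (Nat.isCoprime_iff_coprime.mpr hc) h1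
  have h3 : s' ≡ s [MOD w] := (Nat.modEq_iff_dvd).mpr h2
  rw [← Nat.div_add_mod s w, ← Nat.div_add_mod s' w, hd, h3]

lemma cnt_s {w M : ℕ} (hc : Nat.Coprime w M) (b : ℤ) (T : ℕ) :
    ((Finset.range T).filter (fun s : ℕ => (w:ℤ) ∣ b + M * s)).card ≤ T / w + 1 := by
  rw [← Finset.card_range (T / w + 1)]
  apply Finset.card_le_card_of_injOn (fun s => s / w)
  · intro s hs
    have := (Finset.mem_filter.mp hs).1
    rw [Finset.mem_range] at this
    simp only [Finset.coe_range, Set.mem_Iio]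
    have := Nat.div_le_div_right (c := w) this.le
    omega
  · intro s hs s' hs' h
    exact eq_of_div_mod hc (Finset.mem_filter.mp hs).2 (Finset.mem_filter.mp hs').2 h

lemma cnt_a {n : ℕ} {w M : ℕ} (hc : Nat.Coprime w M) (α : Fin n → ℤ) (S : ℕ) (i j : Fin n)
    (hij : i ≠ j) :
    ((Fintype.piFinset fun _ : Fin n => Finset.range S).filter 
      (fun a => (w:ℤ) ∣ Av α M a i - Av α M a j)).card ≤ S ^ (n-1) * (S / w + 1) := by
  classical
  have hcard : (Fintype.piFinset fun k : Fin n => Finset.range (if k = i then S / w + 1 else S)).card 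
      = S ^ (n-1) * (S / w + 1) := by
    rw [Fintype.card_piFinset]
    simp only [Finset.card_range]
    rw [← Finset.mul_prod_erase Finset.univ _ (Finset.mem_univ i), if_pos rfl, mul_comm]
    congr 1
    rw [Finset.prod_congr rfl (g := fun _ => S)]
    · rw [Finset.prod_const, Finset.card_erase_of_mem (Finset.mem_univ i)]; simp
    · intro k hk
      rw [if_neg (Finset.ne_of_mem_erase hk)]
  rw [← hcard]
  apply Finset.card_le_card_of_injOn (fun a => Function.update a i (a i / w))
  · intro a ha
    have h1 := (Finset.mem_filter.mp ha).1
    rw [Fintype.mem_piFinset] at h1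
    rw [Finset.mem_coe, Fintype.mem_piFinset]
    intro k
    have hk := h1 k
    rw [Finset.mem_range] at hk ⊢
    by_cases h : k = i
    · subst h
      simp only [Function.update_self, if_true]
      have := Nat.div_le_div_right (c := w) hk.le
      omega
    · simp only [Function.update_of_ne h, if_neg h]; exact hk
  · intro a ha a' ha' h
    have h1 := (Finset.mem_filter.mp ha).2
    have h2 := (Finset.mem_filter.mp ha').2
    have hne : ∀ k, k ≠ i → a k = a' k := by
      intro k hk
      have := congrFun h k
      simpa [hk] using this
    have hi : a i / w = a' i / w := by
      have := congrFun h i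
      simpa using this
    funext k
    by_cases hk : k = i
    · subst hk
      simp only [Av] at h1 h2
      rw [← hne j hij.symm] at h2
      apply eq_of_div_mod hc (b := α k - (α j + M * (a j : ℤ))) _ _ hi
      · convert h1 using 1; ring
      · convert h2 using 1; ring
    · exact hne k hk

def Bad1 {n : ℕ} (α : Fin n → ℤ) (M S T : ℕ) : Set ((Fin n → ℕ) × ℕ) :=
  {x | ∃ i j, i ≠ j ∧ ¬ IsCoprime (tv M T x.2) (Av α M x.1 i - Av α M x.1 j)}

lemma Av_bounds {n : ℕ} (α : Fin n → ℤ) (M S : ℕ) (hα : ∀ j, 0 ≤ α j ∧ α j < M) 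
    (a : Fin n → ℕ) (ha : ∀ j, a j < S) (j : Fin n) : 0 ≤ Av α M a j ∧ Av α M a j < M * S := by
  obtain ⟨h1, h2⟩ := hα j
  simp only [Av]
  constructor
  · positivity
  · have : (a j : ℤ) + 1 ≤ S := by exact_mod_cast ha j
    have hM : (0:ℤ) ≤ M := by positivity
    nlinarith

open Classical in
lemma bad1_card {n : ℕ} (α : Fin n → ℤ) (M S T w0 : ℕ) (hw0 : w0.factorial ∣ M) 
    (hα : ∀ j, 0 ≤ α j ∧ α j < M) (hαd : ∀ i j, α i ≡ α j [ZMOD M] → i = j) :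
    ((Om n S T).filter (fun x => x ∈ Bad1 α M S T)).card ≤ 
      n ^ 2 * ∑ w ∈ Finset.Ioc w0 (M * S), S ^ (n-1) * (S / w + 1) * (T / w + 1) := by
  let I : Finset ((Fin n × Fin n) × ℕ) := 
    ((Finset.univ : Finset (Fin n × Fin n)) ×ˢ Finset.Ioc w0 (M * S))
  let U : (Fin n × Fin n) × ℕ → Finset ((Fin n → ℕ) × ℕ) := fun y =>
    if y.1.1 ≠ y.1.2 ∧ Nat.Coprime y.2 M then
    ((Fintype.piFinset fun _ : Fin n => Finset.range S).filter 
      (fun a => (y.2:ℤ) ∣ Av α M a y.1.1 - Av α M a y.1.2)) ×ˢ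
      ((Finset.range T).filter (fun s : ℕ => (y.2:ℤ) ∣ (1 + M * T) + M * s)) else ∅
  have hsub : (Om n S T).filter (fun x => x ∈ Bad1 α M S T) ⊆ I.biUnion U := by
    intro x hx
    obtain ⟨hxO, i, j, hij, hnc⟩ := Finset.mem_filter.mp hx
    rw [Om, Finset.mem_product, Fintype.mem_piFinset] at hxO
    obtain ⟨hxa, hxs⟩ := hxO
    rw [Int.isCoprime_iff_gcd_eq_one] at hnc
    obtain ⟨w, hwp, hwd⟩ := Nat.exists_prime_and_dvd hnc
    have hwd' := (Int.natCast_dvd_natCast.mpr hwd)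
    have hwt : (w:ℤ) ∣ tv M T x.2 := hwd'.trans (Int.gcd_dvd_left _ _)
    have hwA : (w:ℤ) ∣ Av α M x.1 i - Av α M x.1 j := hwd'.trans (Int.gcd_dvd_right _ _)
    have hwM : Nat.Coprime w M := by
      apply (Nat.Prime.coprime_iff_not_dvd hwp).mpr
      intro h
      have h1 : (w:ℤ) ∣ M * ((T:ℤ) + x.2) := (Int.natCast_dvd_natCast.mpr h).mul_right _
      have h2 : (w:ℤ) ∣ 1 := (dvd_add_left h1).mp hwt
      have := Int.natCast_dvd_natCast.mp (by simpa using h2 : (w:ℤ) ∣ ((1:ℕ):ℤ))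
      exact hwp.one_lt.ne' (Nat.dvd_one.mp this)
    have hgt : w0 < w := by
      by_contra h
      push Not at h
      have : w ∣ M := ((Nat.Prime.dvd_factorial hwp).mpr h).trans hw0
      exact (Nat.Prime.coprime_iff_not_dvd hwp).mp hwM this
    have hle : w ≤ M * S := by
      obtain ⟨h1, h2⟩ := Av_bounds α M S hα x.1 (fun k => Finset.mem_range.mp (hxa k)) i
      obtain ⟨h3, h4⟩ := Av_bounds α M S hα x.1 (fun k => Finset.mem_range.mp (hxa k)) j
      have hne : Av α M x.1 i - Av α M x.1 j ≠ 0 := by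
        intro h
        apply hij
        apply hαd
        apply Int.modEq_iff_dvd.mpr
        refine ⟨(x.1 i : ℤ) - x.1 j, ?_⟩
        simp only [Av] at h
        linear_combination -h
      have := Int.le_of_dvd (abs_pos.mpr hne) ((dvd_abs _ _).mpr hwA)
      have h5 : |Av α M x.1 i - Av α M x.1 j| ≤ M * S := by
        rw [abs_le]; constructor <;> linarith
      exact_mod_cast this.trans h5
    refine Finset.mem_biUnion.mpr ⟨((i,j),w), ?_, ?_⟩
    · exact Finset.mem_product.mpr ⟨Finset.mem_univ _, Finset.mem_Ioc.mpr ⟨hgt, hle⟩⟩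
    · simp only [U]
      rw [if_pos ⟨hij, hwM⟩]
      refine Finset.mem_product.mpr ⟨Finset.mem_filter.mpr ⟨Fintype.mem_piFinset.mpr hxa, hwA⟩,
        Finset.mem_filter.mpr ⟨hxs, ?_⟩⟩
      convert hwt using 1
      simp only [tv]; ring
  calc _ ≤ (I.biUnion U).card := Finset.card_le_card hsub
    _ ≤ ∑ y ∈ I, (U y).card := Finset.card_biUnion_le
    _ ≤ ∑ y ∈ I, S ^ (n-1) * (S / y.2 + 1) * (T / y.2 + 1) := by
      apply Finset.sum_le_sum
      intro y _
      simp only [U]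
      split_ifs with h
      · rw [Finset.card_product]
        exact Nat.mul_le_mul (cnt_a h.2 α S _ _ h.1) (cnt_s h.2 _ T)
      · simp
    _ = _ := by
      rw [Finset.sum_product]
      simp only [Finset.sum_const, Finset.card_univ, Fintype.card_prod, Fintype.card_fin, smul_eq_mul]
      ring

end

section

open Classical in
lemma bad1_real {n : ℕ} (hn : 1 ≤ n) (α : Fin n → ℤ) (M S T w0 : ℕ) (hw0 : w0.factorial ∣ M) 
    (hw1 : 1 ≤ w0) (hM : 1 ≤ M) (hS : 1 ≤ S) (hT : 1 ≤ T)
    (hα : ∀ j, 0 ≤ α j ∧ α j < M) (hαd : ∀ i j, α i ≡ α j [ZMOD M] → i = j) :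
    (((Om n S T).filter (fun x => x ∈ Bad1 α M S T)).card : ℝ) ≤ 
      n ^ 2 * ((S:ℝ) ^ n * T) * (1 / w0 + (1 / S + 1 / T) * (1 + Real.log (M * S)) + M / T) := by
  have hS' : (0:ℝ) < S := by exact_mod_cast hS
  have hT' : (0:ℝ) < T := by exact_mod_cast hT
  have hW1 : 1 ≤ M * S := Nat.mul_pos hM hS
  have h1 : (((Om n S T).filter (fun x => x ∈ Bad1 α M S T)).card : ℝ) ≤
      ((n ^ 2 * ∑ w ∈ Finset.Ioc w0 (M * S), S ^ (n-1) * (S / w + 1) * (T / w + 1) : ℕ) : ℝ) := by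
    exact_mod_cast bad1_card α M S T w0 hw0 hα hαd
  refine h1.trans ?_
  push_cast
  rw [mul_assoc ((n:ℝ)^2)]
  apply mul_le_mul_of_nonneg_left _ (by positivity)
  have hsn : (S:ℝ)^n = S^(n-1) * S := by rw [← pow_succ]; congr 1; omega
  have hsq : ∑ w ∈ Finset.Ioc w0 (M * S), ((w:ℝ)^2)⁻¹ ≤ 1 / w0 := by
    rcases le_or_gt w0 (M * S) with h | h
    · refine (sum_Ioc_inv_sq_le_sub (by omega) h).trans ?_
      have : (0:ℝ) ≤ ((M * S : ℕ) : ℝ)⁻¹ := by positivity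
      rw [one_div]; linarith
    · rw [Finset.Ioc_eq_empty (by omega)]; simp
  have hhar : ∑ w ∈ Finset.Ioc w0 (M * S), ((w:ℝ))⁻¹ ≤ 1 + Real.log (M * S) := by
    have h2 := harmonic_le_one_add_log (M * S)
    rw [harmonic_eq_sum_Icc] at h2
    push_cast at h2
    refine le_trans ?_ h2
    apply Finset.sum_le_sum_of_subset_of_nonneg
    · intro w hw
      rw [Finset.mem_Ioc] at hw
      rw [Finset.mem_Icc]; omega
    · intro w _ _; positivity
  have hone : ∑ w ∈ Finset.Ioc w0 (M * S), (1:ℝ) ≤ M * S := by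
    rw [Finset.sum_const, Nat.card_Ioc, nsmul_eq_mul, mul_one]
    exact_mod_cast Nat.sub_le _ _
  calc ∑ w ∈ Finset.Ioc w0 (M * S), (S:ℝ) ^ (n-1) * (((S / w : ℕ):ℝ) + 1) * (((T / w : ℕ):ℝ) + 1)
      ≤ ∑ w ∈ Finset.Ioc w0 (M * S), (S:ℝ) ^ (n-1) * 
          ((S * T) * ((w:ℝ)^2)⁻¹ + (S + T) * ((w:ℝ))⁻¹ + 1) := by
        apply Finset.sum_le_sum
        intro w hw
        have e1 : ((S / w : ℕ):ℝ) ≤ (S:ℝ) * (w:ℝ)⁻¹ := by rw [← div_eq_mul_inv]; exact Nat.cast_div_le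
        have e2 : ((T / w : ℕ):ℝ) ≤ (T:ℝ) * (w:ℝ)⁻¹ := by rw [← div_eq_mul_inv]; exact Nat.cast_div_le
        rw [mul_assoc]
        apply mul_le_mul_of_nonneg_left _ (by positivity)
        calc _ ≤ ((S:ℝ) * (w:ℝ)⁻¹ + 1) * ((T:ℝ) * (w:ℝ)⁻¹ + 1) := by gcongr
          _ = _ := by rw [← inv_pow]; ring
    _ = (S:ℝ) ^ (n-1) * ((S * T) * (∑ w ∈ Finset.Ioc w0 (M * S), ((w:ℝ)^2)⁻¹) + 
          (S + T) * (∑ w ∈ Finset.Ioc w0 (M * S), ((w:ℝ))⁻¹) + ∑ w ∈ Finset.Ioc w0 (M * S), (1:ℝ)) := by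
        rw [← Finset.mul_sum, Finset.sum_add_distrib, Finset.sum_add_distrib, ← Finset.mul_sum,
          ← Finset.mul_sum]
    _ ≤ (S:ℝ) ^ (n-1) * ((S * T) * (1 / w0) + (S + T) * (1 + Real.log (M * S)) + M * S) := by
        gcongr
    _ = _ := by
        rw [hsn]
        field_simp
        ring

def Bad2 {n : ℕ} (α : Fin n → ℤ) (M S T ℓ : ℕ) : Set ((Fin n → ℕ) × ℕ) :=
  {x | ∃ s' < T, s' ≠ x.2 ∧ ∃ a' : Fin n → ℕ, (∀ k, a' k < S) ∧ 
    polyF (Av α M x.1) (tv M T x.2 ^ ℓ) = polyF (Av α M a') (tv M T s' ^ ℓ)}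

lemma prod_count {n : ℕ} (α : Fin n → ℤ) (M S : ℕ) (hM : 1 ≤ M) (x c : ℤ) (hc : c ≠ 0) (D : ℕ)
    (hD : c.natAbs.divisors.card ≤ D) :
    ((Fintype.piFinset fun _ : Fin n => Finset.range S).filter 
      (fun a => ∏ j, (x - Av α M a j) = c)).card ≤ (2 * D) ^ n := by
  classical
  let Z : Finset ℤ := c.natAbs.divisors.image (fun d : ℕ => (d:ℤ)) ∪ 
    c.natAbs.divisors.image (fun d : ℕ => -(d:ℤ))
  have hZ : Z.card ≤ 2 * D := by
    refine (Finset.card_union_le _ _).trans ?_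
    have h1 := Finset.card_image_le (s := c.natAbs.divisors) (f := fun d : ℕ => (d:ℤ))
    have h2 := Finset.card_image_le (s := c.natAbs.divisors) (f := fun d : ℕ => -(d:ℤ))
    omega
  calc _ ≤ (Fintype.piFinset fun _ : Fin n => Z).card := by
        apply Finset.card_le_card_of_injOn (fun a j => x - Av α M a j)
        · intro a ha
          have h := (Finset.mem_filter.mp ha).2
          rw [Finset.mem_coe, Fintype.mem_piFinset]
          intro j
          have hd : x - Av α M a j ∣ c := by
            rw [← h]; exact Finset.dvd_prod_of_mem _ (Finset.mem_univ j)
          have hd' : (x - Av α M a j).natAbs ∈ c.natAbs.divisors := 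
            Nat.mem_divisors.mpr ⟨Int.natAbs_dvd_natAbs.mpr hd, by simpa using hc⟩
          rcases Int.natAbs_eq (x - Av α M a j) with e | e
          · exact Finset.mem_union_left _ (Finset.mem_image.mpr ⟨_, hd', e.symm⟩)
          · exact Finset.mem_union_right _ (Finset.mem_image.mpr ⟨_, hd', e.symm⟩)
        · intro a _ a' _ h
          funext j
          have := congrFun h j
          simp only [Av] at this
          have h2 : (M:ℤ) * (a j) = M * (a' j) := by linarith
          have h3 := mul_left_cancel₀ (by exact_mod_cast (by omega : M ≠ 0)) h2
          exact_mod_cast h3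
    _ = Z.card ^ n := by rw [Fintype.card_piFinset]; simp
    _ ≤ _ := Nat.pow_le_pow_left hZ n

lemma tv_bounds (M T s : ℕ) (hM : 1 ≤ M) (hs : s < T) :
    (M * T : ℤ) < tv M T s ∧ tv M T s ≤ 2 * M * T := by
  have h1 : (1:ℤ) ≤ M := by exact_mod_cast hM
  have h2 : (s:ℤ) + 1 ≤ T := by exact_mod_cast hs
  have h3 : (0:ℤ) ≤ s := by positivity
  simp only [tv]
  constructor <;> nlinarith

open Classical in
lemma bad2_card {n : ℕ} (hn : 1 ≤ n) (α : Fin n → ℤ) (M S T ℓ D : ℕ) (hM : 1 ≤ M) (hℓ : 1 ≤ ℓ)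
    (hD : ∀ c : ℕ, c ≠ 0 → c ≤ (2 * M * T) ^ ℓ → c.divisors.card ≤ D) :
    ((Om n S T).filter (fun x => x ∈ Bad2 α M S T ℓ)).card ≤ T * T * S * (2 * D) ^ n := by
  let I : Finset ((ℕ × ℕ) × ℕ) := (Finset.range T ×ˢ Finset.range T) ×ˢ Finset.range S
  let cc : ℕ → ℕ → ℤ := fun s s' => tv M T s' ^ ℓ - tv M T s ^ ℓ
  let j0 : Fin n := ⟨0, hn⟩
  let U : (ℕ × ℕ) × ℕ → Finset ((Fin n → ℕ) × ℕ) := fun y =>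
    if y.1.1 < T ∧ y.1.2 < T ∧ y.1.2 ≠ y.1.1 then
      ((Fintype.piFinset fun _ : Fin n => Finset.range S).filter 
      (fun a => ∏ j, ((α j0 + M * (y.2:ℤ)) - Av α M a j) = cc y.1.1 y.1.2)) ×ˢ {y.1.1} else ∅
  have hsub : (Om n S T).filter (fun x => x ∈ Bad2 α M S T ℓ) ⊆ I.biUnion U := by
    intro x hx
    obtain ⟨hxO, s', hs', hne, a', ha', hpoly⟩ := Finset.mem_filter.mp hx
    rw [Om, Finset.mem_product] at hxO
    obtain ⟨hxa, hxs⟩ := hxO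
    refine Finset.mem_biUnion.mpr ⟨((x.2, s'), a' j0), ?_, ?_⟩
    · exact Finset.mem_product.mpr ⟨Finset.mem_product.mpr ⟨hxs, Finset.mem_range.mpr hs'⟩, 
        Finset.mem_range.mpr (ha' j0)⟩
    · simp only [U]
      rw [if_pos ⟨Finset.mem_range.mp hxs, hs', hne⟩]
      refine Finset.mem_product.mpr ⟨Finset.mem_filter.mpr ⟨hxa, ?_⟩, Finset.mem_singleton.mpr rfl⟩
      have h := congrArg (Polynomial.eval (Av α M a' j0)) hpoly
      simp only [polyF, Polynomial.eval_add, Polynomial.eval_prod, Polynomial.eval_sub, 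
        Polynomial.eval_X, Polynomial.eval_C] at h
      have h0 : ∏ j, (Av α M a' j0 - Av α M a' j) = 0 :=
        Finset.prod_eq_zero (Finset.mem_univ j0) (sub_self _)
      rw [h0] at h
      have e : Av α M a' j0 = α j0 + M * (a' j0 : ℤ) := rfl
      rw [e] at h
      simp only [cc]
      linarith
  calc _ ≤ (I.biUnion U).card := Finset.card_le_card hsub
    _ ≤ ∑ y ∈ I, (U y).card := Finset.card_biUnion_le
    _ ≤ ∑ y ∈ I, (2 * D) ^ n := by
      apply Finset.sum_le_sum
      intro y _
      simp only [U]
      split_ifs with h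
      · rw [Finset.card_product, Finset.card_singleton, mul_one]
        obtain ⟨h1, h2, h3⟩ := h
        obtain ⟨b1, b2⟩ := tv_bounds M T y.1.1 hM h1
        obtain ⟨b3, b4⟩ := tv_bounds M T y.1.2 hM h2
        have hpos : (0:ℤ) ≤ M * T := by positivity
        have hcne : cc y.1.1 y.1.2 ≠ 0 := by
          intro h0
          have h5 : tv M T y.1.2 ^ ℓ = tv M T y.1.1 ^ ℓ := sub_eq_zero.mp h0
          have h6 := (pow_left_inj₀ (by linarith) (by linarith) (by omega)).mp h5
          simp only [tv] at h6
          have h7 : (M:ℤ) * ((T:ℤ) + y.1.2) = M * ((T:ℤ) + y.1.1) := by linarith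
          have h8 := mul_left_cancel₀ (by exact_mod_cast (by omega : M ≠ 0)) h7
          apply h3
          exact_mod_cast add_left_cancel h8
        apply prod_count α M S hM _ _ hcne
        apply hD _ (by simpa using hcne)
        have p1 : tv M T y.1.2 ^ ℓ ≤ (2 * M * T : ℤ)^ℓ := pow_le_pow_left₀ (by linarith) b4 ℓ
        have p2 : tv M T y.1.1 ^ ℓ ≤ (2 * M * T : ℤ)^ℓ := pow_le_pow_left₀ (by linarith) b2 ℓ
        have p3 : 0 ≤ tv M T y.1.2 ^ ℓ := pow_nonneg (by linarith) _
        have p4 : 0 ≤ tv M T y.1.1 ^ ℓ := pow_nonneg (by linarith) _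
        have : ((cc y.1.1 y.1.2).natAbs : ℤ) ≤ (((2 * M * T) ^ ℓ : ℕ) : ℤ) := by
          rw [Int.natCast_natAbs, abs_le]
          push_cast
          simp only [cc]
          constructor <;> linarith
        exact_mod_cast this
      · simp
    _ = _ := by
      rw [Finset.sum_const, Finset.card_product, Finset.card_product]
      simp

lemma poly_inj {n : ℕ} (α : Fin n → ℤ) (M S T ℓ : ℕ) (hM : 1 ≤ M)
    (hαd : ∀ i j, α i ≡ α j [ZMOD M] → i = j) (x y : (Fin n → ℕ) × ℕ) (hx : x ∈ Om n S T)
    (hy : y ∈ Om n S T) (hxb : x ∉ Bad2 α M S T ℓ)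
    (h : polyF (Av α M x.1) (tv M T x.2 ^ ℓ) = polyF (Av α M y.1) (tv M T y.2 ^ ℓ)) : x = y := by
  rw [Om, Finset.mem_product, Fintype.mem_piFinset] at hx hy
  have hs : y.2 = x.2 := by
    by_contra hne
    exact hxb ⟨y.2, Finset.mem_range.mp hy.2, hne, y.1, fun k => Finset.mem_range.mp (hy.1 k), h⟩
  refine Prod.ext ?_ hs.symm
  rw [hs] at h
  have h' := add_right_cancel h
  funext i
  have h2 := congrArg (Polynomial.eval (Av α M y.1 i)) h'
  simp only [Polynomial.eval_prod, Polynomial.eval_sub, Polynomial.eval_X, Polynomial.eval_C] at h2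
  have h0 : ∏ j, (Av α M y.1 i - Av α M y.1 j) = 0 :=
    Finset.prod_eq_zero (Finset.mem_univ i) (sub_self _)
  rw [h0, Finset.prod_eq_zero_iff] at h2
  obtain ⟨k, _, hk⟩ := h2
  simp only [Av] at hk
  have : k = i := by
    apply hαd
    apply Int.modEq_iff_dvd.mpr
    refine ⟨(x.1 k : ℤ) - y.1 i, ?_⟩
    linear_combination hk
  subst this
  have h3 : (M:ℤ) * (x.1 k) = M * (y.1 k) := by linarith
  have h4 := mul_left_cancel₀ (by exact_mod_cast (by omega : M ≠ 0)) h3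
  exact_mod_cast h4

end

section

lemma bad1_limit (M ℓ n : ℝ) :
    Filter.Tendsto (fun u : ℕ => n^2 * ((2 / (u:ℝ)) * (1 + (Real.log M + ℓ * Real.log u)) + M / u))
      Filter.atTop (nhds 0) := by
  have h1 : Filter.Tendsto (fun u : ℕ => (u:ℝ)) Filter.atTop Filter.atTop := tendsto_natCast_atTop_atTop
  have h2 : Filter.Tendsto (fun u : ℕ => Real.log (u:ℝ) / u) Filter.atTop (nhds 0) :=
    (Real.isLittleO_log_id_atTop.tendsto_div_nhds_zero).comp h1
  have h3 : Filter.Tendsto (fun u : ℕ => ((u:ℝ))⁻¹) Filter.atTop (nhds 0) := 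
    tendsto_inv_atTop_zero.comp h1
  have := ((h3.const_mul (n^2 * (2 * (1 + Real.log M) + M))).add (h2.const_mul (n^2 * 2 * ℓ)))
  simp only [mul_zero, add_zero] at this
  refine this.congr fun u => ?_
  rw [div_eq_mul_inv, div_eq_mul_inv, div_eq_mul_inv]
  ring

lemma choose_D (n : ℕ) (hn : 2 ≤ n) (M : ℝ) : ∃ D : ℕ, 1 ≤ D ∧
    (1 + M / D) ^ n - 1 < Real.sin (Real.pi / n) ^ n := by
  have hs : 0 < Real.sin (Real.pi / n) ^ n := by
    apply pow_pos
    apply Real.sin_pos_of_pos_of_lt_pi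
    · have := Real.pi_pos; positivity
    · apply div_lt_self Real.pi_pos
      exact_mod_cast hn
  have h : Filter.Tendsto (fun D : ℕ => (1 + M / (D:ℝ)) ^ n - 1) Filter.atTop (nhds ((1 + 0)^n - 1)) :=
    ((tendsto_const_div_atTop_nhds_zero_nat M).const_add 1 |>.pow n).sub_const 1
  simp only [add_zero, one_pow, sub_self] at h
  obtain ⟨D, h1, h2⟩ := ((h.eventually (gt_mem_nhds hs)).and (Filter.eventually_ge_atTop 1)).exists
  exact ⟨D, h2, h1⟩

lemma divisor_bound2 (n ℓ M D : ℕ) (hn : 1 ≤ n) (hℓ : 1 ≤ ℓ) : ∃ C : ℕ, 1 ≤ C ∧ ∀ u : ℕ, 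
    ∃ Dm : ℕ, Dm ^ (2 * n) ≤ C * u ∧ 
      ∀ c : ℕ, c ≠ 0 → c ≤ (2 * M * (D * u)^n) ^ ℓ → c.divisors.card ≤ Dm := by
  obtain ⟨C, hC, h⟩ := divisor_bound (2 * n * (n * ℓ))
  set C' : ℕ := C * (2 * M + 1) * (D + 1) with hC'
  have hC'1 : 1 ≤ C' := by
    rw [hC']; exact Nat.succ_le_of_lt (by positivity)
  refine ⟨C', hC'1, fun u => ?_⟩
  refine ⟨Nat.findGreatest (fun d => d ^ (2*n) ≤ C' * u) (C' * u), ?_, ?_⟩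
  · have := Nat.findGreatest_spec (P := fun d => d ^ (2*n) ≤ C' * u) (m := 0) (n := C' * u) 
      (Nat.zero_le _) (by rw [zero_pow (by omega)]; exact Nat.zero_le _)
    exact this
  · intro c hc hcle
    have h1 := h c hc
    have h2 : (c.divisors.card ^ (2 * n)) ^ (n * ℓ) ≤ (C' * u) ^ (n * ℓ) := by
      rw [← pow_mul]
      refine h1.trans ?_
      calc C * c ≤ C * (2 * M * (D * u)^n) ^ ℓ := Nat.mul_le_mul_left _ hcle
        _ = C * (2 * M) ^ ℓ * (D * u) ^ (n * ℓ) := by rw [mul_pow, ← pow_mul]; ring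
        _ ≤ C ^ (n * ℓ) * (2 * M + 1) ^ (n * ℓ) * ((D + 1) * u) ^ (n * ℓ) := by
          have e1 : C ≤ C ^ (n * ℓ) := Nat.le_self_pow (by positivity) _
          have e2 : (2 * M) ^ ℓ ≤ (2 * M + 1) ^ (n * ℓ) :=
            (Nat.pow_le_pow_left (by omega) ℓ).trans 
              (Nat.pow_le_pow_right (by omega) (Nat.le_mul_of_pos_left _ hn))
          have e3 : (D * u) ^ (n * ℓ) ≤ ((D + 1) * u) ^ (n * ℓ) :=
            Nat.pow_le_pow_left (Nat.mul_le_mul_right _ (by omega)) _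
          exact Nat.mul_le_mul (Nat.mul_le_mul e1 e2) e3
        _ = _ := by rw [hC', ← mul_pow, ← mul_pow]; congr 1; ring
    have h3 : c.divisors.card ^ (2 * n) ≤ C' * u := 
      (Nat.pow_le_pow_iff_left (by positivity)).mp h2
    refine Nat.le_findGreatest (P := fun d => d ^ (2*n) ≤ C' * u) ?_ h3
    exact (Nat.le_self_pow (by omega) _).trans h3

lemma bad2_small (n ℓ D C Dm u : ℕ) (hn : 3 ≤ n) (hℓ : 2 ≤ ℓ) (hu1 : 1 ≤ u)
    (hDm : Dm ^ (2 * n) ≤ C * u)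
    (hu : 16 * 4 ^ n * D ^ (2*n) * C ≤ u) :
    4 * ((D * u)^n * (D * u)^n * u ^ ℓ * (2 * Dm) ^ n) ≤ (u ^ ℓ)^n * (D * u)^n := by
  have h1 : 4 * 2 ^ n * D ^ n * Dm ^ n ≤ u := by
    apply (Nat.pow_le_pow_iff_left (n := 2) (by norm_num)).mp
    calc (4 * 2 ^ n * D ^ n * Dm ^ n)^2 = 16 * 4 ^ n * D ^ (2*n) * Dm ^ (2 * n) := by
          rw [mul_pow, mul_pow, mul_pow, ← pow_mul, ← pow_mul, ← pow_mul, mul_comm n 2, pow_mul 2]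
          norm_num
      _ ≤ 16 * 4 ^ n * D ^ (2*n) * (C * u) := Nat.mul_le_mul_left _ hDm
      _ = (16 * 4 ^ n * D ^ (2*n) * C) * u := by ring
      _ ≤ u * u := Nat.mul_le_mul_right _ hu
      _ = u ^ 2 := by ring
  have h2 : u ^ (n + 1) * u ^ ℓ ≤ (u ^ ℓ) ^ n := by
    rw [← pow_add, ← pow_mul]
    apply Nat.pow_le_pow_right hu1
    obtain ⟨k, rfl⟩ : ∃ k, n = k + 3 := ⟨n - 3, by omega⟩
    obtain ⟨j, rfl⟩ : ∃ j, ℓ = j + 2 := ⟨ℓ - 2, by omega⟩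
    nlinarith [Nat.zero_le (j * k)]
  calc 4 * ((D * u)^n * (D * u)^n * u ^ ℓ * (2 * Dm) ^ n) 
      = (4 * 2 ^ n * D ^ n * Dm ^ n) * (u ^ n * u ^ ℓ) * (D * u)^n := by
        rw [mul_pow D u, mul_pow 2]; ring
    _ ≤ u * (u ^ n * u ^ ℓ) * (D * u)^n := by gcongr
    _ = (u ^ (n+1) * u ^ ℓ) * (D * u)^n := by ring
    _ ≤ _ := Nat.mul_le_mul_right _ h2

end

section

open NumberField in
lemma good_field (m ℓ M D u T S : ℕ) (hm : 2 ≤ m) (hℓ : 2 ≤ ℓ) (hM : 1 ≤ M) (hD : 1 ≤ D)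
    (hu : 1 ≤ u) (hT : T = (D * u)^(m+1)) (hS : S = u ^ ℓ)
    (hDs : (1 + (M:ℝ) / D) ^ (m+1) - 1 < Real.sin (Real.pi / ((m+1 : ℕ):ℝ)) ^ (m+1))
    (α : Fin (m+1) → ℤ) (hα : ∀ j, 0 ≤ α j ∧ α j < M)
    (H : ∀ (A : Fin (m+1) → ℤ) (t : ℤ), (∀ j, A j ≡ α j [ZMOD M]) → t ≡ 1 [ZMOD M] →
        Irreducible (polyF A (t^ℓ)) ∧
        ∀ p : ℕ, p.Prime → p ∣ ℓ → ∀ i : Fin m, LocCond m p i A (t ^ ℓ))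
    (x : (Fin (m+1) → ℕ) × ℕ) (hx : x ∈ Om (m+1) S T) (hx1 : x ∉ Bad1 α M S T) :
    ∃ F : IntermediateField ℚ ℂ, ∃ _ : FiniteDimensional ℚ F, ∃ θ : 𝓞 F,
      minpoly ℤ (θ:F) = polyF (Av α M x.1) (tv M T x.2 ^ ℓ) ∧ Module.finrank ℚ F = m+1 ∧ 
      ℓ ∣ classNumber F ∧
      (∀ w : InfinitePlace F, w (θ:F) ≤ ((2 * M * D : ℝ)^ℓ + M) * (u:ℝ)^ℓ) ∧ 
      |(discr F : ℝ)| ≤ (2 * (((2 * M * D : ℝ)^ℓ + M) * (u:ℝ)^ℓ)) ^ ((m+1) * m) := by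
  rw [Om, Finset.mem_product, Fintype.mem_piFinset] at hx
  set A := Av α M x.1 with hA
  set t := tv M T x.2 with ht
  obtain ⟨hirr, hloc⟩ := H A t (by
    intro j
    apply Int.modEq_iff_dvd.mpr
    refine ⟨-(x.1 j : ℤ), ?_⟩
    simp only [hA, Av]; ring) (by
    apply Int.modEq_iff_dvd.mpr
    refine ⟨-((T:ℤ) + x.2), ?_⟩
    simp only [ht, tv]; ring)
  obtain ⟨hmon, -⟩ := polyF_monic (by omega : 1 ≤ m + 1) A (t^ℓ)
  obtain ⟨F, hF, θ, hprim, hmin⟩ := exists_field _ hmon hirr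
  obtain ⟨b1, b2⟩ := tv_bounds M T x.2 hM (Finset.mem_range.mp hx.2)
  have hM' : (1:ℝ) ≤ M := by exact_mod_cast hM
  have hD' : (1:ℝ) ≤ D := by exact_mod_cast hD
  have hu' : (1:ℝ) ≤ u := by exact_mod_cast hu
  have hTr : (T:ℝ) = ((D:ℝ) * u)^(m+1) := by rw [hT]; push_cast; rfl
  have b1' : (M:ℝ) * T < t := by exact_mod_cast b1
  have b2' : (t:ℝ) ≤ 2 * M * T := by exact_mod_cast b2
  have hT0 : (0:ℝ) ≤ T := by positivity
  have b3 : (T:ℝ) ≤ t := by nlinarith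
  have ht0 : (0:ℝ) < t := by
    have : (0:ℝ) ≤ M * T := by positivity
    linarith
  set R : ℝ := ((t:ℝ)^ℓ) ^ ((1:ℝ) / ((m+1 : ℕ):ℝ)) with hR
  have hR0 : 0 < R := by positivity
  have hRn : R ^ (m+1) = (t:ℝ)^ℓ := by
    rw [hR, one_div]; exact Real.rpow_inv_natCast_pow (by positivity) (by omega)
  have hRlow : (D:ℝ)^ℓ * (u:ℝ)^ℓ ≤ R := by
    rw [← pow_le_pow_iff_left₀ (n := m+1) (by positivity) hR0.le (by omega), hRn, ← mul_pow,
      ← pow_mul, mul_comm ℓ, pow_mul, ← hTr]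
    gcongr
  have hRup : R ≤ (2 * M * D : ℝ)^ℓ * (u:ℝ)^ℓ := by
    rw [← pow_le_pow_iff_left₀ (n := m+1) hR0.le (by positivity) (by omega), hRn, ← mul_pow,
      ← pow_mul, mul_comm ℓ, pow_mul]
    apply pow_le_pow_left₀ ht0.le
    refine b2'.trans ?_
    rw [hTr, mul_assoc (2 * (M:ℝ)), mul_pow (2 * (M:ℝ))]
    gcongr
    exact le_self_pow₀ (by linarith) (by omega)
  have hSr : (S:ℝ) = (u:ℝ)^ℓ := by rw [hS]; push_cast; rfl
  have hMS : (M:ℝ) * S ≤ M / D * R := by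
    have h1 : (D:ℝ) * (u:ℝ)^ℓ ≤ R := by
      refine le_trans ?_ hRlow
      gcongr
      exact le_self_pow₀ hD' (by omega)
    rw [hSr, div_mul_eq_mul_div, le_div_iff₀ (by positivity)]
    nlinarith
  have hcop : ∀ i j, i ≠ j → IsCoprime t (A i - A j) := by
    intro i j hij
    by_contra h
    exact hx1 ⟨i, j, hij, h⟩
  have hAS : ∀ j, |(A j : ℝ)| ≤ (M:ℝ) * S := by
    intro j
    obtain ⟨h1, h2⟩ := Av_bounds α M S hα x.1 (fun k => Finset.mem_range.mp (hx.1 k)) j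
    have h1' : (0:ℝ) ≤ A j := by exact_mod_cast h1
    have h2' : (A j : ℝ) < M * S := by exact_mod_cast h2
    rw [abs_of_nonneg h1']; exact h2'.le
  have hδ : (R + M * S) ^ (m+1) - R ^ (m+1) < (R * Real.sin (Real.pi / ((m+1 : ℕ):ℝ))) ^ (m+1) := by
    have h1 : (R + M * S) ^ (m+1) ≤ R ^ (m+1) * (1 + (M:ℝ) / D) ^ (m+1) := by
      rw [← mul_pow]
      apply pow_le_pow_left₀ (by positivity)
      linarith
    have h2 : 0 < R ^ (m+1) := by positivity
    rw [mul_pow]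
    nlinarith
  have : NumberField F := ⟨⟩
  obtain ⟨p1, p2, p3, p4⟩ := field_props θ hprim (by omega) A t ℓ hmin hcop R (M * S) hR0 hRn hAS hδ hloc
  have hB : R + M * S ≤ ((2 * M * D : ℝ)^ℓ + M) * (u:ℝ)^ℓ := by
    rw [hSr]; linarith
  refine ⟨F, hF, θ, hmin, p1, p2, fun w => (p3 w).trans hB, p4.trans ?_⟩
  apply pow_le_pow_left₀ (by positivity)
  linarith

theorem main_lower (m ℓ : ℕ) (hm : 2 ≤ m) (hℓ : 2 ≤ ℓ) : 
    ∃ C c : ℝ, 1 ≤ C ∧ 0 < c ∧ ∀ᶠ u : ℕ in Filter.atTop, 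
      c * (u:ℝ)^(m+1) ≤ FcardDvd (m+1) ℓ (C * (u:ℝ)^(ℓ * ((m+1) * m))) := by
  classical
  obtain ⟨M, hM, hw0, α, hαd, hα, H⟩ := params m ℓ hm (by omega) (4 * (m+1)^2)
  obtain ⟨D, hD, hDs⟩ := choose_D (m+1) (by omega) (M:ℝ)
  obtain ⟨C, hC, hdiv⟩ := divisor_bound2 (m+1) ℓ M D (by omega) (by omega)
  obtain ⟨C4, hC4, hfin⟩ := Fcard_upper (m+1) (by omega)
  have hM' : (1:ℝ) ≤ M := by exact_mod_cast hM
  have hD' : (1:ℝ) ≤ D := by exact_mod_cast hD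
  set C2 : ℝ := (2 * M * D : ℝ)^ℓ + M with hC2
  have hC21 : 1 ≤ C2 := by
    have : 0 ≤ (2 * M * D : ℝ)^ℓ := by positivity
    linarith
  have hC1 : 1 ≤ (2 * C2) ^ ((m+1) * m) := one_le_pow₀ (by linarith)
  refine ⟨(2 * C2) ^ ((m+1) * m), (D:ℝ)^(m+1) / (4 * (5 * C2)^(m+1)), hC1, by positivity, ?_⟩
  have hlim := bad1_limit (M:ℝ) ℓ ((m+1 : ℕ):ℝ)
  filter_upwards [hlim.eventually (gt_mem_nhds (by norm_num : (0:ℝ) < 1/4)), 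
    Filter.eventually_ge_atTop 1, 
    Filter.eventually_ge_atTop (16 * 4 ^ (m+1) * D ^ (2*(m+1)) * C)] with u hu1 hu2 hu3
  have hu' : (1:ℝ) ≤ u := by exact_mod_cast hu2
  have hul : (1:ℝ) ≤ (u:ℝ)^ℓ := one_le_pow₀ hu'
  obtain ⟨Dm, hDm, hdiv⟩ := hdiv u
  set S := u ^ ℓ with hS
  set T := (D * u) ^ (m+1) with hT
  have hS1 : 1 ≤ S := Nat.one_le_pow _ _ hu2
  have hT1 : 1 ≤ T := Nat.one_le_pow _ _ (Nat.mul_pos hD hu2)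
  have huS : (u:ℝ) ≤ S := by exact_mod_cast Nat.le_self_pow (by omega) u
  have huT : (u:ℝ) ≤ T := by
    have h1 : u ≤ D * u := Nat.le_mul_of_pos_left _ hD
    exact_mod_cast h1.trans (Nat.le_self_pow (by omega) _)
  have hu0 : (0:ℝ) < u := by linarith
  set Om' := Om (m+1) S T with hOm
  have hOc : (Om'.card : ℝ) = (S:ℝ)^(m+1) * T := by rw [hOm, Om_card]; push_cast; rfl
  have hO0 : 0 < (S:ℝ)^(m+1) * T := by
    have : (0:ℝ) < S := by linarith
    have : (0:ℝ) < T := by linarith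
    positivity
  -- bad sets
  have hb1 : ((Om'.filter (fun x => x ∈ Bad1 α M S T)).card : ℝ) ≤ Om'.card * (1/2) := by
    refine (bad1_real (by omega) α M S T _ hw0 (Nat.succ_le_of_lt (by positivity)) hM hS1 hT1 hα hαd).trans ?_
    rw [hOc, mul_comm (((m+1 : ℕ):ℝ)^2), mul_assoc]
    apply mul_le_mul_of_nonneg_left _ hO0.le
    have e1 : (1:ℝ)/S ≤ 1 / u := one_div_le_one_div_of_le hu0 huS
    have e2 : (1:ℝ)/T ≤ 1 / u := one_div_le_one_div_of_le hu0 huT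
    have e3 : (M:ℝ)/T ≤ M / u := div_le_div_of_nonneg_left (by linarith) hu0 huT
    have e4 : Real.log (M * S) = Real.log M + ℓ * Real.log u := by
      rw [Real.log_mul (by positivity) (by positivity), hS, Nat.cast_pow, Real.log_pow]
    have e5 : 0 ≤ 1 + (Real.log M + ℓ * Real.log u) := by
      have := Real.log_nonneg hM'
      have := Real.log_nonneg hu'
      positivity
    have e6 : (1 / (S:ℝ) + 1 / T) * (1 + (Real.log M + ℓ * Real.log u)) ≤ 
        2 / u * (1 + (Real.log M + ℓ * Real.log u)) := by
      apply mul_le_mul_of_nonneg_right _ e5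
      have : (2:ℝ) / u = 1 / u + 1 / u := by ring
      linarith
    rw [e4]
    have e7 : (((m+1 : ℕ):ℝ)^2) * (1 / ((4 * (m+1)^2 : ℕ) : ℝ)) = 1 / 4 := by
      push_cast
      field_simp
    have e8 : (0:ℝ) < ((m+1 : ℕ):ℝ)^2 := by positivity
    calc (((m+1 : ℕ):ℝ)^2) * (1 / ((4 * (m+1)^2 : ℕ) : ℝ) + 
          (1 / (S:ℝ) + 1 / T) * (1 + (Real.log M + ℓ * Real.log u)) + M / T) 
        ≤ (((m+1 : ℕ):ℝ)^2) * (1 / ((4 * (m+1)^2 : ℕ) : ℝ) + 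
          2 / u * (1 + (Real.log M + ℓ * Real.log u)) + M / u) := by gcongr
      _ = (((m+1 : ℕ):ℝ)^2) * (1 / ((4 * (m+1)^2 : ℕ) : ℝ)) + (((m+1 : ℕ):ℝ)^2) * (
          2 / u * (1 + (Real.log M + ℓ * Real.log u)) + M / u) := by ring
      _ ≤ 1/2 := by rw [e7]; linarith
  have hb2 : ((Om'.filter (fun x => x ∈ Bad2 α M S T ℓ)).card : ℝ) ≤ Om'.card * (1/4) := by
    have h1 := bad2_card (n := m+1) (by omega) α M S T ℓ Dm hM (by omega) hdiv
    have h2 := bad2_small (m+1) ℓ D C Dm u (by omega) hℓ hu2 hDm hu3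
    have h3 : 4 * (Om'.filter (fun x => x ∈ Bad2 α M S T ℓ)).card ≤ Om'.card := by
      rw [hOm, Om_card]
      exact (Nat.mul_le_mul_left 4 h1).trans h2
    have h4 : (4:ℝ) * ((Om'.filter (fun x => x ∈ Bad2 α M S T ℓ)).card : ℝ) ≤ Om'.card := by
      exact_mod_cast h3
    linarith
  let G := Om'.filter (fun x => x ∉ Bad1 α M S T ∧ x ∉ Bad2 α M S T ℓ)
  have hG : (Om'.card : ℝ) / 4 ≤ G.card := by
    have hsub : Om' ⊆ G ∪ (Om'.filter (fun x => x ∈ Bad1 α M S T) ∪ 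
        Om'.filter (fun x => x ∈ Bad2 α M S T ℓ)) := by
      intro x hx
      simp only [G, Finset.mem_union, Finset.mem_filter]
      tauto
    have h1 := (Finset.card_le_card hsub).trans ((Finset.card_union_le _ _).trans 
      (Nat.add_le_add_left (Finset.card_union_le _ _) _))
    have h2 : (Om'.card : ℝ) ≤ G.card + (((Om'.filter (fun x => x ∈ Bad1 α M S T)).card : ℝ) + 
        ((Om'.filter (fun x => x ∈ Bad2 α M S T ℓ)).card : ℝ)) := by exact_mod_cast h1
    linarith
  have hXeq : (2 * C2) ^ ((m+1) * m) * (u:ℝ)^(ℓ * ((m+1) * m)) = 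
      (2 * (C2 * (u:ℝ)^ℓ)) ^ ((m+1) * m) := by
    rw [pow_mul (u:ℝ), ← mul_pow, mul_assoc]
  have hX1 : (1:ℝ) ≤ (2 * (C2 * (u:ℝ)^ℓ)) ^ ((m+1) * m) := by
    apply one_le_pow₀; nlinarith
  rw [hXeq]
  have key := count_lower (m+1) ℓ ((2 * (C2 * (u:ℝ)^ℓ)) ^ ((m+1) * m)) (C2 * (u:ℝ)^ℓ) 
    (by positivity) (hfin _ hX1).1 G (fun x => polyF (Av α M x.1) (tv M T x.2 ^ ℓ)) (by
      intro x hx y hy hxy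
      have hx' := Finset.mem_filter.mp hx
      have hy' := Finset.mem_filter.mp hy
      exact poly_inj α M S T ℓ hM hαd x y hx'.1 hy'.1 hx'.2.2 hxy) (by
      intro x hx
      have hx' := Finset.mem_filter.mp hx
      exact good_field m ℓ M D u T S hm hℓ hM hD hu2 hT hS hDs α hα H x hx'.1 hx'.2.1)
  set Fc : ℝ := ((FcardDvd (m+1) ℓ ((2 * (C2 * (u:ℝ)^ℓ)) ^ ((m+1) * m)) : ℕ) : ℝ) with hFc
  have hFc0 : 0 ≤ Fc := by positivity
  have hB1 : 1 ≤ C2 * (u:ℝ)^ℓ := by nlinarith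
  have k1 : (2 * (C2 * (u:ℝ)^ℓ + 1) + 1) ^ (m+1) ≤ (5 * C2)^(m+1) * ((u:ℝ)^ℓ)^(m+1) := by
    rw [← mul_pow]
    apply pow_le_pow_left₀ (by positivity)
    linarith
  have k2 : ((u:ℝ)^ℓ)^(m+1) * ((D:ℝ)^(m+1) * (u:ℝ)^(m+1)) / 4 ≤ 
      Fc * ((5 * C2)^(m+1) * ((u:ℝ)^ℓ)^(m+1)) := by
    have h1 : (Om'.card : ℝ) = ((u:ℝ)^ℓ)^(m+1) * ((D:ℝ)^(m+1) * (u:ℝ)^(m+1)) := by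
      rw [hOc, hS, hT]; push_cast; rw [mul_pow (D:ℝ)]
    rw [← h1]
    exact hG.trans (key.trans (mul_le_mul_of_nonneg_left k1 hFc0))
  have k3 : 0 < ((u:ℝ)^ℓ)^(m+1) := by positivity
  have k4 : (D:ℝ)^(m+1) * (u:ℝ)^(m+1) ≤ Fc * (4 * (5 * C2)^(m+1)) := by
    have : ((u:ℝ)^ℓ)^(m+1) * ((D:ℝ)^(m+1) * (u:ℝ)^(m+1)) ≤ 
      ((u:ℝ)^ℓ)^(m+1) * (Fc * (4 * (5 * C2)^(m+1))) := by linarith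
    exact le_of_mul_le_mul_left this k3
  rw [div_mul_eq_mul_div, div_le_iff₀ (by positivity)]
  exact k4

end

section

lemma dvd_mono (n ℓ : ℕ) (X Y : ℝ) (hXY : X ≤ Y)
    (hf : Finite (Quotient (isoSetoid (NumberFieldSet n Y)))) :
    FcardDvd n ℓ X ≤ FcardDvd n ℓ Y := by
  have hfin := (dvd_finite n ℓ Y hf).1
  have hsub : NumberFieldSetDvd n ℓ X ⊆ NumberFieldSetDvd n ℓ Y := by
    rintro F ⟨h, h1, h2⟩
    exact ⟨h, h1, h2.1.trans hXY, h2.2⟩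
  let φ : Quotient (isoSetoid (NumberFieldSetDvd n ℓ X)) →
      Quotient (isoSetoid (NumberFieldSetDvd n ℓ Y)) :=
    Quotient.map' (fun F => ⟨F.1, hsub F.2⟩) (fun _ _ h => h)
  have hφ : Function.Injective φ := by
    intro a b
    refine Quotient.inductionOn₂' a b ?_
    intro x y h
    apply Quotient.sound'
    have h' : (Quotient.mk'' ⟨x.1, hsub x.2⟩ : Quotient (isoSetoid (NumberFieldSetDvd n ℓ Y))) =
      Quotient.mk'' ⟨y.1, hsub y.2⟩ := h
    have h2 := Quotient.eq''.mp h'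
    exact h2
  exact Nat.card_le_card_of_injective φ hφ

lemma dvd_one (n : ℕ) (X : ℝ) : FcardDvd n 1 X = Fcard n X := by
  have : NumberFieldSetDvd n 1 X = NumberFieldSet n X := by
    ext F
    constructor
    · rintro ⟨h, h1, h2⟩
      exact ⟨h, h1, h2.1⟩
    · rintro ⟨h, h1, h2⟩
      exact ⟨h, h1, h2, one_dvd _⟩
  rw [FcardDvd, Fcard, this]

lemma log_lower (m ℓ : ℕ) (hm : 2 ≤ m) (hℓ : 2 ≤ ℓ) :
    ∃ K : ℝ, ∀ᶠ X : ℝ in Filter.atTop,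
      K + 1 / ((ℓ:ℝ) * m) * Real.log X ≤ Real.log (FcardDvd (m+1) ℓ X) := by
  obtain ⟨C, c, hC, hc, hev⟩ := main_lower m ℓ hm hℓ
  obtain ⟨C', hC', hup⟩ := Fcard_upper (m+1) (by omega)
  have hN : ℓ * ((m+1) * m) ≠ 0 := by
    have : 0 < m := by omega
    have : 0 < ℓ := by omega
    positivity
  set N := ℓ * ((m+1) * m) with hNd
  have hm0 : (0:ℝ) < m := by exact_mod_cast (by omega : 0 < m)
  have hl0 : (0:ℝ) < ℓ := by exact_mod_cast (by omega : 0 < ℓ)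
  have hC0 : 0 < C := by linarith
  have hN0 : (0:ℝ) < N := by exact_mod_cast Nat.pos_of_ne_zero hN
  have ht : Filter.Tendsto (fun X : ℝ => (X / C) ^ (1 / (N:ℝ))) Filter.atTop Filter.atTop :=
    (tendsto_rpow_atTop (by positivity)).comp (Filter.tendsto_id.atTop_div_const hC0)
  have ht2 := tendsto_nat_floor_atTop.comp ht
  refine ⟨Real.log (c / 2 ^ (m+1)) - 1 / ((ℓ:ℝ) * m) * Real.log C, ?_⟩
  filter_upwards [ht2.eventually hev, ht.eventually_ge_atTop 1, Filter.eventually_ge_atTop 1]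
    with X h1 h2 hX
  set y := (X / C) ^ (1 / (N:ℝ)) with hy
  have hXC : 0 < X / C := by positivity
  simp only [Function.comp] at h1
  rw [← hy] at h1
  have hfl : (⌊y⌋₊ : ℝ) ≤ y := Nat.floor_le (by linarith)
  have hfl2 : y / 2 ≤ (⌊y⌋₊ : ℝ) := by
    have a := Nat.lt_floor_add_one y
    have b : (1:ℝ) ≤ (⌊y⌋₊ : ℝ) := by exact_mod_cast Nat.one_le_floor_iff y |>.mpr h2
    linarith
  have hyN : y ^ N = X / C := by
    rw [hy, ← Real.rpow_natCast, ← Real.rpow_mul hXC.le, one_div, inv_mul_cancel₀ hN0.ne',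
      Real.rpow_one]
  have hle : C * (⌊y⌋₊ : ℝ) ^ N ≤ X := by
    have : (⌊y⌋₊ : ℝ) ^ N ≤ X / C := by
      rw [← hyN]; exact pow_le_pow_left₀ (by positivity) hfl _
    calc _ ≤ C * (X / C) := by gcongr
      _ = X := by field_simp
  have h3 := dvd_mono (m+1) ℓ _ X hle (hup X hX).1
  have h4 : c / 2 ^ (m+1) * y ^ (m+1) ≤ (FcardDvd (m+1) ℓ X : ℝ) := by
    have h5 : (y/2)^(m+1) ≤ (⌊y⌋₊ : ℝ) ^ (m+1) := pow_le_pow_left₀ (by linarith) hfl2 _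
    have h6 : ((FcardDvd (m+1) ℓ (C * (⌊y⌋₊ : ℝ) ^ N) : ℕ) : ℝ) ≤ (FcardDvd (m+1) ℓ X : ℝ) := by
      exact_mod_cast h3
    calc c / 2 ^ (m+1) * y ^ (m+1) = c * (y/2)^(m+1) := by rw [div_pow]; ring
      _ ≤ c * (⌊y⌋₊ : ℝ) ^ (m+1) := by gcongr
      _ ≤ _ := h1.trans h6
  have hy0 : 0 < y := by linarith
  have h7 := Real.log_le_log (by positivity) h4
  refine le_trans (le_of_eq ?_) h7
  rw [Real.log_mul (by positivity) (by positivity), Real.log_pow, hy, Real.log_rpow hXC,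
    Real.log_div (x := X) (y := C) (by positivity) (by positivity), hNd]
  push_cast
  field_simp
  ring

lemma final_ge_two (m ℓ : ℕ) (hm : 2 ≤ m) (hℓ : 2 ≤ ℓ) :
    ∀ᶠ X : ℝ in Filter.atTop, 0 < Real.log (Fcard (m+1) X) ∧
      (2:ℝ) / ((m:ℝ) * ((m:ℝ)+3) * ℓ) ≤
        Real.log (FcardDvd (m+1) ℓ X) / Real.log (Fcard (m+1) X) := by
  obtain ⟨K, hK⟩ := log_lower m ℓ hm hℓ
  obtain ⟨C', hC', hup⟩ := Fcard_upper (m+1) (by omega)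
  have hm0 : (0:ℝ) < m := by exact_mod_cast (by omega : 0 < m)
  have hl0 : (0:ℝ) < ℓ := by exact_mod_cast (by omega : 0 < ℓ)
  set r : ℝ := (2:ℝ) / ((m:ℝ) * ((m:ℝ)+3) * ℓ) with hr
  have hr0 : 0 < r := by positivity
  set a : ℝ := 1 / ((ℓ:ℝ) * m) with ha
  have ha0 : 0 < a := by positivity
  have hgap : a - r * (((m:ℝ) + 2)/2) = 1 / (ℓ * m * (m + 3)) := by
    rw [ha, hr]; field_simp; ring
  have hgap0 : 0 < a - r * (((m:ℝ) + 2)/2) := by rw [hgap]; positivity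
  have t1 := (Real.tendsto_log_atTop.const_mul_atTop ha0).eventually_gt_atTop (-K)
  have t2 := (Real.tendsto_log_atTop.const_mul_atTop hgap0).eventually_ge_atTop
    (r * Real.log C' - K)
  filter_upwards [hK, t1, t2, Filter.eventually_ge_atTop 1] with X h1 h2 h3 hX
  obtain ⟨hfin, hub⟩ := hup X hX
  have hle := (dvd_finite (m+1) ℓ X hfin).2
  have hD : 0 < Real.log (FcardDvd (m+1) ℓ X) := by linarith
  have hD0 : 0 < FcardDvd (m+1) ℓ X := by
    rcases Nat.eq_zero_or_pos (FcardDvd (m+1) ℓ X) with h | h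
    · rw [h] at hD; simp at hD
    · exact h
  have hF0 : (0:ℝ) < Fcard (m+1) X := by exact_mod_cast lt_of_lt_of_le hD0 hle
  have hlog : Real.log (FcardDvd (m+1) ℓ X) ≤ Real.log (Fcard (m+1) X) :=
    Real.log_le_log (by exact_mod_cast hD0) (by exact_mod_cast hle)
  have hF : 0 < Real.log (Fcard (m+1) X) := by linarith
  refine ⟨hF, ?_⟩
  rw [le_div_iff₀ hF]
  have hX0 : 0 < X := by linarith
  have h5 := Real.log_le_log hF0 hub
  rw [Real.log_mul hC'.ne' (Real.rpow_pos_of_pos hX0 _).ne', Real.log_rpow hX0] at h5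
  push_cast at h5
  have h6 : r * Real.log (Fcard (m+1) X) ≤
      r * (Real.log C' + ((m:ℝ) + 1 + 1) / 2 * Real.log X) :=
    mul_le_mul_of_nonneg_left h5 hr0.le
  have h7 : r * (Real.log C' + ((m:ℝ) + 1 + 1) / 2 * Real.log X) =
    r * Real.log C' + a * Real.log X - (a - r * (((m:ℝ) + 2)/2)) * Real.log X := by ring
  linarith

end

theorem liminf_log_card_ratio (n ℓ : ℕ) (hn : 3 ≤ n) (hℓ : 1 ≤ ℓ) :
    (2 : ℝ) / (((n : ℝ) - 1) * ((n : ℝ) + 2) * (ℓ : ℝ)) ≤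
      Filter.liminf
        (fun X : ℝ => Real.log (FcardDvd n ℓ X) / Real.log (Fcard n X))
        Filter.atTop := by
  obtain ⟨m, rfl⟩ : ∃ m, n = m + 1 := ⟨n - 1, by omega⟩
  have hm : 2 ≤ m := by omega
  obtain ⟨C', hC', hup⟩ := Fcard_upper (m+1) (by omega)
  have hm0 : (2:ℝ) ≤ m := by exact_mod_cast hm
  have heq : (2 : ℝ) / ((((m+1 : ℕ) : ℝ) - 1) * (((m+1 : ℕ) : ℝ) + 2) * (ℓ : ℝ)) =
      (2:ℝ) / ((m:ℝ) * ((m:ℝ)+3) * ℓ) := by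
    push_cast
    congr 3 <;> ring
  rw [heq]
  apply Filter.le_liminf_of_le
  · refine Filter.IsBoundedUnder.isCoboundedUnder_ge ⟨1, ?_⟩
    rw [Filter.eventually_map]
    filter_upwards [Filter.eventually_ge_atTop 1] with X hX
    obtain ⟨hfin, hub⟩ := hup X hX
    have hle := (dvd_finite (m+1) ℓ X hfin).2
    apply div_le_one_of_le₀
    · rcases Nat.eq_zero_or_pos (FcardDvd (m+1) ℓ X) with h | h
      · rw [h]; simp [Real.log_natCast_nonneg]
      · exact Real.log_le_log (by exact_mod_cast h) (by exact_mod_cast hle)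
    · exact Real.log_natCast_nonneg _
  · rcases Nat.lt_or_ge ℓ 2 with h | h
    · obtain rfl : ℓ = 1 := by omega
      filter_upwards [final_ge_two m 2 hm le_rfl] with X hX
      rw [dvd_one, div_self hX.1.ne', div_le_one (by positivity)]
      push_cast
      nlinarith
    · filter_upwards [final_ge_two m ℓ hm h] with X hX
      exact hX.2
end

section
/- Let K be a field of characteristic 0, let L be a finitely generated field extension of K, let n ≥ 1, and let Υ be a thin subset of L^n. Then Υ ∩ K^n is a thin subset of K^n. -/
/-- `S ⊆ K^n` is a basic thin set of the first type: the zero locus of a nonzero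
polynomial `F ∈ K[t_1,…,t_n]`. -/
def IsBasicThinOne (K : Type*) [Field K] (n : ℕ) (S : Set (Fin n → K)) : Prop :=
  ∃ F : MvPolynomial (Fin n) K, F ≠ 0 ∧ S = {τ | MvPolynomial.eval τ F = 0}

/-- `S ⊆ K^n` is a basic thin set of the second type: there is an irreducible
polynomial `F ∈ K[t_1,…,t_n][x]` with `deg_x F ≥ 2` such that `S` is the set of
`τ` for which the specialization `F(τ, x) ∈ K[x]` has a root in `K`. -/
def IsBasicThinTwo (K : Type*) [Field K] (n : ℕ) (S : Set (Fin n → K)) : Prop :=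
  ∃ F : Polynomial (MvPolynomial (Fin n) K), Irreducible F ∧ 2 ≤ F.natDegree ∧
    S = {τ | ∃ r : K, (F.map (MvPolynomial.eval τ)).eval r = 0}

/-- `S ⊆ K^n` is thin: it is contained in a finite union of basic thin sets. -/
def IsThin (K : Type*) [Field K] (n : ℕ) (S : Set (Fin n → K)) : Prop :=
  ∃ (m : ℕ) (B : Fin m → Set (Fin n → K)),
    (∀ i, IsBasicThinOne K n (B i) ∨ IsBasicThinTwo K n (B i)) ∧ S ⊆ ⋃ i, B i


open MvPolynomial in
theorem isThin_iff_finite {K : Type*} [Field K] {n : ℕ} {S : Set (Fin n → K)} :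
    IsThin K n S ↔ ∃ T : Set (Set (Fin n → K)), T.Finite ∧
      (∀ b ∈ T, IsBasicThinOne K n b ∨ IsBasicThinTwo K n b) ∧ S ⊆ ⋃₀ T := by
  constructor
  · rintro ⟨m, B, hB, hS⟩
    refine ⟨Set.range B, Set.finite_range B, ?_, ?_⟩
    · rintro _ ⟨i, rfl⟩; exact hB i
    · simpa [Set.sUnion_range] using hS
  · rintro ⟨T, hT, hB, hS⟩
    obtain ⟨m, B, hBinj, rfl⟩ := hT.fin_param
    refine ⟨m, B, fun i => hB _ ⟨i, rfl⟩, ?_⟩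
    simpa [Set.sUnion_range] using hS

theorem IsThin.mono {K : Type*} [Field K] {n : ℕ} {S T : Set (Fin n → K)}
    (hT : IsThin K n T) (h : S ⊆ T) : IsThin K n S := by
  obtain ⟨m, B, hB, hS⟩ := hT
  exact ⟨m, B, hB, h.trans hS⟩

theorem IsThin.iUnion {K : Type*} [Field K] {n : ℕ} {ι : Type*} [Finite ι]
    {S : ι → Set (Fin n → K)} (h : ∀ i, IsThin K n (S i)) : IsThin K n (⋃ i, S i) := by
  simp only [isThin_iff_finite] at h ⊢
  choose T hT hB hS using h
  refine ⟨⋃ i, T i, Set.finite_iUnion hT, ?_, ?_⟩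
  · intro b hb
    obtain ⟨i, hi⟩ := Set.mem_iUnion.1 hb
    exact hB i b hi
  · refine Set.iUnion_subset fun i => (hS i).trans ?_
    exact Set.sUnion_subset_sUnion (Set.subset_iUnion T i)

theorem IsThin.union {K : Type*} [Field K] {n : ℕ}
    {S T : Set (Fin n → K)} (hS : IsThin K n S) (hT : IsThin K n T) : IsThin K n (S ∪ T) := by
  rw [Set.union_eq_iUnion]
  exact IsThin.iUnion (fun b => by cases b <;> assumption)

theorem IsThin.of_basic {K : Type*} [Field K] {n : ℕ} {S : Set (Fin n → K)}
    (h : IsBasicThinOne K n S ∨ IsBasicThinTwo K n S) : IsThin K n S :=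
  ⟨1, fun _ => S, fun _ => h, Set.subset_iUnion (fun _ : Fin 1 => S) 0⟩

theorem IsThin.empty {K : Type*} [Field K] {n : ℕ} : IsThin K n (∅ : Set (Fin n → K)) :=
  ⟨0, fun _ => ∅, fun i => i.elim0, by simp⟩

theorem IsThin.zeros {K R : Type*} [Field K] [CommRing R] [Algebra K R] {n : ℕ}
    (h : MvPolynomial (Fin n) R) (h0 : h ≠ 0) :
    IsThin K n {τ | MvPolynomial.eval (fun i => algebraMap K R (τ i)) h = 0} := by
  obtain ⟨m, hm⟩ := MvPolynomial.ne_zero_iff.1 h0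
  obtain ⟨f, hf⟩ : ∃ f : Module.Dual K R, f (h.coeff m) ≠ 0 := by
    by_contra! hc
    exact hm ((Module.forall_dual_apply_eq_zero_iff K _).1 hc)
  let g : MvPolynomial (Fin n) K := ∑ k ∈ h.support, MvPolynomial.monomial k (f (h.coeff k))
  have hg : g ≠ 0 := by
    rw [MvPolynomial.ne_zero_iff]
    refine ⟨m, ?_⟩
    simp only [g, MvPolynomial.coeff_sum, MvPolynomial.coeff_monomial]
    rw [Finset.sum_ite_eq' , if_pos]
    · exact hf
    · simpa using hm
  refine (IsThin.of_basic (Or.inl ⟨g, hg, rfl⟩)).mono ?_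
  intro τ hτ
  have h1 : f (MvPolynomial.eval (fun i => algebraMap K R (τ i)) h) = MvPolynomial.eval τ g := by
    rw [MvPolynomial.eval_eq, map_sum]
    simp only [g, map_sum, MvPolynomial.eval_monomial]
    refine Finset.sum_congr rfl fun k _ => ?_
    have : (∏ i ∈ k.support, algebraMap K R (τ i) ^ k i)
        = algebraMap K R (∏ i ∈ k.support, τ i ^ k i) := by simp
    rw [this, mul_comm, ← Algebra.smul_def, map_smul, smul_eq_mul, mul_comm, Finsupp.prod]
  have h2 : MvPolynomial.eval (fun i => algebraMap K R (τ i)) h = 0 := hτ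
  show MvPolynomial.eval τ g = 0
  rw [← h1, h2, map_zero]

/-- roots of a monic polynomial come from polynomial roots outside a thin set -/
theorem exists_thin_of_monic {K : Type*} [Field K] {n : ℕ}
    (G : Polynomial (MvPolynomial (Fin n) K)) (hG : G.Monic) :
    ∃ Z, IsThin K n Z ∧ ∀ τ (ρ : K), (G.map (MvPolynomial.eval τ)).eval ρ = 0 →
      τ ∈ Z ∨ ∃ r, G.eval r = 0 ∧ MvPolynomial.eval τ r = ρ := by
  classical
  obtain ⟨s, hs, hp⟩ := UniqueFactorizationMonoid.exists_prime_factors G hG.ne_zero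
  refine ⟨⋃ P : {P // P ∈ s.toFinset.filter (fun P => 2 ≤ P.natDegree)},
    {τ | ∃ r : K, (P.1.map (MvPolynomial.eval τ)).eval r = 0}, ?_, ?_⟩
  · refine IsThin.iUnion fun P => IsThin.of_basic (Or.inr ⟨P.1, ?_, ?_, rfl⟩)
    · have := P.2
      simp only [Finset.mem_filter, Multiset.mem_toFinset] at this
      exact (hs _ this.1).irreducible
    · have := P.2
      simp only [Finset.mem_filter, Multiset.mem_toFinset] at this
      exact this.2
  · intro τ ρ h
    obtain ⟨P, hPs, hP⟩ : ∃ P ∈ s, (P.map (MvPolynomial.eval τ)).eval ρ = 0 := by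
      let φ : Polynomial (MvPolynomial (Fin n) K) →+* K :=
        (Polynomial.evalRingHom ρ).comp (Polynomial.mapRingHom (MvPolynomial.eval τ))
      have h1 : φ s.prod = 0 := by
        obtain ⟨u, hu⟩ := hp
        have h2 : φ G = 0 := h
        rw [← hu, map_mul] at h2
        exact (mul_eq_zero.1 h2).resolve_right (u.isUnit.map φ).ne_zero
      rw [map_multiset_prod, Multiset.prod_eq_zero_iff, Multiset.mem_map] at h1
      exact h1
    have hdvd : P ∣ G := (Multiset.dvd_prod hPs).trans hp.dvd
    have hlc : IsUnit P.leadingCoeff := by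
      obtain ⟨Q, hQ⟩ := hdvd
      have := hG
      rw [Polynomial.Monic, hQ, Polynomial.leadingCoeff_mul] at this
      exact IsUnit.of_mul_eq_one _ this
    have hirr := (hs P hPs).irreducible
    by_cases h2 : 2 ≤ P.natDegree
    · left
      exact Set.mem_iUnion.2 ⟨⟨P, by simp [hPs, h2]⟩, ρ, hP⟩
    · right
      have h1 : P.natDegree = 1 := by
        have : P.natDegree ≠ 0 := by
          intro h0
          apply hirr.not_isUnit
          rw [Polynomial.eq_C_of_natDegree_eq_zero h0]
          rw [Polynomial.leadingCoeff, h0] at hlc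
          exact hlc.map Polynomial.C
        omega
      obtain ⟨u, hu⟩ := hlc
      have hPe : P = Polynomial.C (u : MvPolynomial (Fin n) K) * Polynomial.X
          + Polynomial.C (P.coeff 0) := by
        rw [hu, Polynomial.leadingCoeff, h1]
        exact Polynomial.eq_X_add_C_of_natDegree_le_one h1.le
      refine ⟨-(↑u⁻¹ * P.coeff 0), ?_, ?_⟩
      · refine Polynomial.eval_eq_zero_of_dvd_of_eval_eq_zero hdvd ?_
        rw [hPe]; simp
      · rw [hPe] at hP
        simp at hP
        have hu' : MvPolynomial.eval τ (u : MvPolynomial (Fin n) K)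
            * MvPolynomial.eval τ ((u⁻¹ : _ˣ) : MvPolynomial (Fin n) K) = 1 := by
          rw [← map_mul]; simp
        rw [map_neg, map_mul]
        linear_combination (-(MvPolynomial.eval τ ((u⁻¹ : _ˣ) : MvPolynomial (Fin n) K))) * hP
          + ρ * hu'

theorem exists_clear_denoms (R L : Type*) [CommRing R] [IsDomain R] [Field L] [Algebra R L]
    [IsFractionRing R L] {n : ℕ} (F : Polynomial (MvPolynomial (Fin n) L)) :
    ∃ (F1 : Polynomial (MvPolynomial (Fin n) R)) (b : L), b ≠ 0 ∧
      F1.map (MvPolynomial.map (algebraMap R L)) =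
        Polynomial.C (MvPolynomial.C b) * F := by
  let := MvPolynomial.algebraMvPolynomial (σ := Fin n) (R := R) (S := L)
  have := MvPolynomial.isLocalization (σ := Fin n) (nonZeroDivisors R) L
  obtain ⟨b, hbm, hb⟩ := IsLocalization.integerNormalization_spec
    ((nonZeroDivisors R).map (MvPolynomial.C (σ := Fin n))) F
  obtain ⟨r, hr, rfl⟩ := hbm
  refine ⟨_, algebraMap R L r, ?_, hb.trans ?_⟩
  · exact IsFractionRing.to_map_ne_zero_of_mem_nonZeroDivisors hr
  · rw [← IsScalarTower.algebraMap_smul (MvPolynomial (Fin n) L) _ F, Polynomial.smul_eq_C_mul]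
    congr 2
    exact MvPolynomial.map_C _ _

theorem monic_reduction (R L : Type*) [CommRing R] [IsDomain R] [Field L] [Algebra R L]
    [IsFractionRing R L] {n : ℕ} (F : Polynomial (MvPolynomial (Fin n) L))
    (hF : Irreducible F) (hd : 2 ≤ F.natDegree) :
    ∃ G : Polynomial (MvPolynomial (Fin n) R), G.Monic ∧ (∀ Q, G.eval Q ≠ 0) ∧
      ∀ τ : Fin n → R,
        (∃ ρ : L, (F.map (MvPolynomial.eval (fun i => algebraMap R L (τ i)))).eval ρ = 0) →
        ∃ ρ : L, G.eval₂ ((algebraMap R L).comp (MvPolynomial.eval τ)) ρ = 0 := by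
  obtain ⟨F1, b, hb, h1⟩ := exists_clear_denoms R L F
  have hinj : Function.Injective (MvPolynomial.map (σ := Fin n) (algebraMap R L)) :=
    MvPolynomial.map_injective _ (IsFractionRing.injective R L)
  have hCb : (MvPolynomial.C b : MvPolynomial (Fin n) L) ≠ 0 := by simpa using hb
  have hdeg : F1.natDegree = F.natDegree := by
    rw [← Polynomial.natDegree_map_eq_of_injective hinj, h1, Polynomial.natDegree_C_mul hCb]
  have hF10 : F1 ≠ 0 := by
    rintro rfl
    simp at hdeg; omega
  refine ⟨F1.integralNormalization, Polynomial.monic_integralNormalization hF10, ?_, ?_⟩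
  · intro Q hQ
    let k := FractionRing (MvPolynomial (Fin n) L)
    let j : MvPolynomial (Fin n) L →+* k := algebraMap _ _
    have hj : Function.Injective j := IsFractionRing.injective _ _
    let f : MvPolynomial (Fin n) R →+* k := j.comp (MvPolynomial.map (algebraMap R L))
    have hf : Function.Injective f := hj.comp hinj
    have hc : f F1.leadingCoeff ≠ 0 := by
      rw [Ne, map_eq_zero_iff f hf]; simpa using hF10
    have h2 := Polynomial.integralNormalization_eval₂_leadingCoeff_mul (p := F1)
      (by omega) f (f Q / f F1.leadingCoeff)
    rw [mul_div_cancel₀ _ hc, Polynomial.eval₂_at_apply, hQ, map_zero] at h2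
    have h3 : F1.eval₂ f (f Q / f F1.leadingCoeff) = 0 :=
      (mul_eq_zero.1 h2.symm).resolve_left (pow_ne_zero _ hc)
    rw [← Polynomial.eval₂_map, h1, Polynomial.eval₂_mul, Polynomial.eval₂_C] at h3
    have h4 := (mul_eq_zero.1 h3).resolve_left (fun h => hCb ((map_eq_zero_iff j hj).1 h))
    rw [← Polynomial.eval_map] at h4
    let := UniqueFactorizationMonoid.normalizationMonoid (α := MvPolynomial (Fin n) L)
    let := UniqueFactorizationMonoid.toNormalizedGCDMonoid (MvPolynomial (Fin n) L)
    have hprim := hF.isPrimitive (by omega)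
    have hirr : Irreducible (F.map j) :=
      (hprim.irreducible_iff_irreducible_map_fraction_map (K := k)).1 hF
    have h5 := Polynomial.degree_eq_one_of_irreducible_of_root hirr h4
    have h6 : (F.map j).natDegree = 1 := Polynomial.natDegree_eq_of_degree_eq_some h5
    rw [Polynomial.natDegree_map_eq_of_injective hj] at h6
    omega
  · rintro τ ⟨ρ, hρ⟩
    let f := (algebraMap R L).comp (MvPolynomial.eval τ)
    refine ⟨f F1.leadingCoeff * ρ, ?_⟩
    rw [Polynomial.integralNormalization_eval₂_leadingCoeff_mul (by omega)]
    have hf : f = (MvPolynomial.eval (fun i => algebraMap R L (τ i))).comp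
        (MvPolynomial.map (algebraMap R L)) := by
      apply MvPolynomial.ringHom_ext <;> intros <;> simp [f]
    have : F1.eval₂ f ρ = 0 := by
      rw [hf, ← Polynomial.eval₂_map, h1, Polynomial.eval₂_mul, ← Polynomial.eval_map _ ρ,
        ← Polynomial.eval_map _ ρ, hρ, mul_zero]
    rw [show F1.eval₂ ((algebraMap R L).comp (MvPolynomial.eval τ)) ρ = 0 from this, mul_zero]

theorem natDegree_root_le {K : Type*} [Field K] (g : Polynomial (Polynomial K)) (hg : g.Monic)
    (D : ℕ) (hD : ∀ i, (g.coeff i).natDegree ≤ D) (ρ : Polynomial K) (h : g.eval ρ = 0) :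
    ρ.natDegree ≤ D := by
  by_contra! hlt
  have hd : g.natDegree ≠ 0 := by
    intro h0
    rw [hg.natDegree_eq_zero.1 h0] at h
    simp at h
  rw [Polynomial.eval_eq_sum_range, Finset.sum_range_succ, hg.coeff_natDegree, one_mul] at h
  have h1 : ρ ^ g.natDegree = -∑ i ∈ Finset.range g.natDegree, g.coeff i * ρ ^ i := by
    linear_combination h
  have h2 : (ρ ^ g.natDegree).natDegree ≤ D + (g.natDegree - 1) * ρ.natDegree := by
    rw [h1, Polynomial.natDegree_neg]
    refine Polynomial.natDegree_sum_le_of_forall_le _ _ ?_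
    intro i hi
    refine Polynomial.natDegree_mul_le.trans (add_le_add (hD i) ?_)
    refine Polynomial.natDegree_pow_le.trans (Nat.mul_le_mul_right _ ?_)
    have := Finset.mem_range.1 hi
    omega
  rw [Polynomial.natDegree_pow] at h2
  obtain ⟨d, hd'⟩ := Nat.exists_eq_succ_of_ne_zero hd
  rw [hd'] at h2
  simp only [Nat.succ_sub_one, Nat.succ_mul] at h2
  omega

theorem exists_natDegree_bound {K : Type*} [Field K] {n : ℕ}
    (h : MvPolynomial (Fin n) (Polynomial K)) :
    ∃ D, ∀ τ : Fin n → K,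
      (MvPolynomial.eval (fun i => Polynomial.C (τ i)) h).natDegree ≤ D := by
  refine ⟨h.support.sup fun m => (h.coeff m).natDegree, fun τ => ?_⟩
  rw [MvPolynomial.eval_eq]
  refine Polynomial.natDegree_sum_le_of_forall_le _ _ ?_
  intro m hm
  have : (∏ i ∈ m.support, (Polynomial.C (τ i)) ^ m i)
        = Polynomial.C (∏ i ∈ m.support, τ i ^ m i) := by simp
  rw [this]
  refine (Polynomial.natDegree_mul_C_le _ _).trans ?_
  exact Finset.le_sup (f := fun m => (h.coeff m).natDegree) hm

theorem thin_polynomial_core {K : Type*} [Field K] [CharZero K] {n : ℕ}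
    (G : Polynomial (MvPolynomial (Fin n) (Polynomial K))) (hG : G.Monic)
    (hr : ∀ Q, G.eval Q ≠ 0) :
    IsThin K n {τ | ∃ ρ : Polynomial K,
      G.eval₂ (MvPolynomial.eval (fun i => Polynomial.C (τ i))) ρ = 0} := by
  classical
  obtain ⟨D, hD⟩ : ∃ D, ∀ i, ∀ τ : Fin n → K,
      (MvPolynomial.eval (fun i => Polynomial.C (τ i)) (G.coeff i)).natDegree ≤ D := by
    choose d hd using fun i => exists_natDegree_bound (G.coeff i)
    refine ⟨G.support.sup d, fun i τ => ?_⟩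
    by_cases hi : i ∈ G.support
    · exact (hd i τ).trans (Finset.le_sup hi)
    · simp [Polynomial.notMem_support_iff.1 hi]
  let v : Fin (D + 1) → K := fun i => (i : ℕ)
  have hv : Function.Injective v := fun a b hab => by
    simpa [v, Fin.ext_iff] using hab
  let sp : K → MvPolynomial (Fin n) (Polynomial K) →+* MvPolynomial (Fin n) K :=
    fun c => MvPolynomial.map (Polynomial.evalRingHom c)
  choose Z hZ hZ' using fun i => exists_thin_of_monic (G.map (sp (v i))) (hG.map _)
  let lift : (Fin (D + 1) → MvPolynomial (Fin n) K) → MvPolynomial (Fin n) (Polynomial K) :=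
    fun r => ∑ i, MvPolynomial.map Polynomial.C (r i) *
      MvPolynomial.C (Lagrange.basis Finset.univ v i)
  let I := ∀ i, {r // r ∈ (G.map (sp (v i))).roots.toFinset}
  have hmain : IsThin K n ((⋃ i, Z i) ∪ ⋃ r : I,
      {τ | MvPolynomial.eval (fun i => algebraMap K (Polynomial K) (τ i))
        (G.eval (lift fun i => (r i).1)) = 0}) :=
    (IsThin.iUnion hZ).union (IsThin.iUnion fun r => IsThin.zeros _ (hr _))
  refine hmain.mono ?_
  rintro τ ⟨ρ, hρ⟩
  by_cases hτ : τ ∈ ⋃ i, Z i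
  · exact Or.inl hτ
  right
  let e : MvPolynomial (Fin n) (Polynomial K) →+* Polynomial K :=
    MvPolynomial.eval (fun i => Polynomial.C (τ i))
  have hcomp : ∀ c, (Polynomial.evalRingHom c).comp e = (MvPolynomial.eval τ).comp (sp c) := by
    intro c
    apply MvPolynomial.ringHom_ext <;> intros <;> simp [e, sp]
  have hdeg : ρ.natDegree ≤ D := by
    refine natDegree_root_le (G.map e) (hG.map _) D (fun i => ?_) ρ ?_
    · rw [Polynomial.coeff_map]; exact hD i τ
    · rw [Polynomial.eval_map]; exact hρ
  have hex : ∀ i, ∃ r, (G.map (sp (v i))).eval r = 0 ∧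
      MvPolynomial.eval τ r = ρ.eval (v i) := by
    intro i
    refine (hZ' i τ (ρ.eval (v i)) ?_).resolve_left fun h => hτ (Set.mem_iUnion.2 ⟨i, h⟩)
    rw [Polynomial.map_map, ← hcomp, Polynomial.eval_map]
    have := Polynomial.hom_eval₂ G e (Polynomial.evalRingHom (v i)) ρ
    rw [show G.eval₂ e ρ = 0 from hρ, map_zero] at this
    exact this.symm
  choose r hr1 hr2 using hex
  refine Set.mem_iUnion.2 ⟨fun i => ⟨r i, ?_⟩, ?_⟩
  · rw [Multiset.mem_toFinset, Polynomial.mem_roots (hG.map _).ne_zero]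
    exact hr1 i
  · have hlift : e (lift r) = ρ := by
      have h1 : ρ = Lagrange.interpolate Finset.univ v (fun i => ρ.eval (v i)) := by
        apply Lagrange.eq_interpolate hv.injOn
        simp only [Finset.card_univ, Fintype.card_fin]
        exact Polynomial.degree_le_natDegree.trans_lt (by exact_mod_cast Nat.lt_succ_of_le hdeg)
      rw [Lagrange.interpolate_apply] at h1
      conv_rhs => rw [h1]
      simp only [lift, map_sum, map_mul]
      refine Finset.sum_congr rfl fun i _ => ?_
      congr 1
      · rw [← hr2 i]
        have : e.comp (MvPolynomial.map Polynomial.C) = Polynomial.C.comp (MvPolynomial.eval τ) := by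
          apply MvPolynomial.ringHom_ext <;> intros <;> simp [e]
        exact congrArg (fun f => f (r i)) this
      · simp [e]
    show e (G.eval (lift r)) = 0
    rw [← Polynomial.eval₂_at_apply, hlift]
    exact hρ

theorem thin_two_ratfunc (K L : Type*) [Field K] [CharZero K] [Field L]
    [Algebra (Polynomial K) L] [IsFractionRing (Polynomial K) L] {n : ℕ}
    (F : Polynomial (MvPolynomial (Fin n) L)) (hF : Irreducible F) (hd : 2 ≤ F.natDegree) :
    IsThin K n {τ | ∃ ρ : L, (F.map (MvPolynomial.eval
      (fun i => algebraMap (Polynomial K) L (Polynomial.C (τ i))))).eval ρ = 0} := by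
  obtain ⟨G, hG, hr, hG2⟩ := monic_reduction (Polynomial K) L F hF hd
  refine (thin_polynomial_core G hG hr).mono ?_
  intro τ hτ
  obtain ⟨ρ, hρ⟩ := hG2 (fun i => Polynomial.C (τ i)) hτ
  rw [← Polynomial.eval₂_map] at hρ
  obtain ⟨ρ', h1, -⟩ := exists_integer_of_is_root_of_monic (K := L) (r := ρ)
    (hG.map (MvPolynomial.eval fun i => Polynomial.C (τ i))) hρ
  refine ⟨ρ', ?_⟩
  rw [h1, Polynomial.eval₂_at_apply, Polynomial.eval_map] at hρ
  exact (map_eq_zero_iff _ (IsFractionRing.injective (Polynomial K) L)).1 hρ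

theorem minpoly_coeff_zero_ne_zero {A B : Type*} [CommRing A] [IsDomain A] [CommRing B]
    [IsDomain B] [Algebra A B] {x : B} (hx : IsIntegral A x) (h0 : x ≠ 0) :
    (minpoly A x).coeff 0 ≠ 0 := by
  intro h
  obtain ⟨q, hq⟩ := Polynomial.X_dvd_iff.2 h
  have hp := minpoly.monic hx
  have hqm : q.Monic := by
    rw [hq] at hp
    exact Polynomial.monic_X.of_mul_monic_left hp
  have h1 := minpoly.aeval A x
  rw [hq, map_mul, Polynomial.aeval_X] at h1
  have h2 := minpoly.min A x hqm ((mul_eq_zero.1 h1).resolve_left h0)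
  have h3 := Polynomial.natDegree_le_natDegree h2
  rw [hq, Polynomial.natDegree_X_mul hqm.ne_zero] at h3
  omega

section
attribute [local instance] Ideal.Quotient.field
open scoped Pointwise

theorem exists_sub_mem_of_stabilizer_fixed {A B : Type*} [CommRing A] [CommRing B] [Algebra A B]
    [Finite (B ≃ₐ[A] B)] [Algebra.IsInvariant A B (B ≃ₐ[A] B)]
    (P : Ideal A) (Q : Ideal B) [P.IsMaximal] [Q.IsMaximal] [Q.LiesOver P] [CharZero (A ⧸ P)]
    (η : B) (hη : ∀ g ∈ MulAction.stabilizer (B ≃ₐ[A] B) Q, g η = η) :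
    ∃ a : A, η - algebraMap A B a ∈ Q := by
  have hn : Normal (A ⧸ P) (B ⧸ Q) := Ideal.Quotient.normal (B ≃ₐ[A] B) P Q
  have hg : IsGalois (A ⧸ P) (B ⧸ Q) := ⟨⟩
  have hx : (Ideal.Quotient.mk Q η) ∈ Set.range (algebraMap (A ⧸ P) (B ⧸ Q)) := by
    rw [InfiniteGalois.mem_range_algebraMap_iff_fixed]
    intro f
    obtain ⟨g, rfl⟩ := Ideal.Quotient.stabilizerHom_surjective (B ≃ₐ[A] B) P Q f
    have h1 := Ideal.Quotient.stabilizerHom_apply Q P (B ≃ₐ[A] B) g η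
    refine h1.trans ?_
    exact congrArg (Ideal.Quotient.mk Q) (hη g.1 g.2)
  obtain ⟨a', ha'⟩ := hx
  obtain ⟨a, rfl⟩ := Ideal.Quotient.mk_surjective a'
  refine ⟨a, ?_⟩
  rw [← Ideal.Quotient.eq, ← ha']
  rfl

theorem thin_galois_core {K L B : Type*} [Field K] [CharZero K] [Field L] [Algebra K L]
    {n : ℕ} [CommRing B] [IsDomain B] [Algebra (MvPolynomial (Fin n) K) B]
    [Finite (B ≃ₐ[MvPolynomial (Fin n) K] B)]
    [Algebra.IsInvariant (MvPolynomial (Fin n) K) B (B ≃ₐ[MvPolynomial (Fin n) K] B)]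
    (hinj : Function.Injective (algebraMap (MvPolynomial (Fin n) K) B))
    (hH : ∀ H : Subgroup (B ≃ₐ[MvPolynomial (Fin n) K] B), H ≠ ⊤ →
      ∃ η : B, (∀ g ∈ H, g η = η) ∧ η ∉ (algebraMap (MvPolynomial (Fin n) K) B).range)
    (φ : MvPolynomial (Fin n) L →+* B)
    (hφ : φ.comp (MvPolynomial.map (algebraMap K L)) = algebraMap _ B)
    (F : Polynomial (MvPolynomial (Fin n) L)) (s : Multiset B)
    (hs : F.map φ = (s.map fun θ => Polynomial.X - Polynomial.C θ).prod)
    (hσ : ∀ θ ∈ s, ∃ σ : B ≃ₐ[MvPolynomial (Fin n) K] B, (∀ c, σ (φ c) = φ c) ∧ σ θ ≠ θ) :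
    IsThin K n {τ | ∃ ρ : L,
      F.eval₂ (MvPolynomial.eval (fun i => algebraMap K L (τ i))) ρ = 0} := by
  classical
  have hint : Algebra.IsIntegral (MvPolynomial (Fin n) K) B :=
    Algebra.IsInvariant.isIntegral _ _ (B ≃ₐ[MvPolynomial (Fin n) K] B)
  choose η hη1 hη2 using hH
  choose σ hσ1 hσ2 using hσ
  have hmain : IsThin K n
      ((⋃ H : {H : Subgroup (B ≃ₐ[MvPolynomial (Fin n) K] B) // H ≠ ⊤},
        {τ | ∃ r : K, ((minpoly (MvPolynomial (Fin n) K) (η H.1 H.2)).map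
          (MvPolynomial.eval τ)).eval r = 0}) ∪
      ⋃ θ : {θ // θ ∈ s.toFinset}, {τ | MvPolynomial.eval τ
        ((minpoly (MvPolynomial (Fin n) K)
          (σ θ.1 (Multiset.mem_toFinset.1 θ.2) θ.1 - θ.1)).coeff 0) = 0}) := by
    refine IsThin.union (IsThin.iUnion fun H => ?_) (IsThin.iUnion fun θ => ?_)
    · refine IsThin.of_basic (Or.inr ⟨_, minpoly.irreducible (hint.isIntegral _), ?_, rfl⟩)
      rw [minpoly.two_le_natDegree_iff (hint.isIntegral _)]
      exact hη2 _ _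
    · refine IsThin.of_basic (Or.inl ⟨_, ?_, rfl⟩)
      exact minpoly_coeff_zero_ne_zero (hint.isIntegral _) (sub_ne_zero.2 (hσ2 _ _))
  refine hmain.mono ?_
  rintro τ ⟨ρ, hρ⟩
  let P : Ideal (MvPolynomial (Fin n) K) := RingHom.ker (MvPolynomial.eval τ)
  have hsurj : Function.Surjective (MvPolynomial.eval τ : MvPolynomial (Fin n) K →+* K) :=
    fun a => ⟨MvPolynomial.C a, by simp⟩
  have hP : P.IsMaximal := RingHom.ker_isMaximal_of_surjective _ hsurj
  have hP0 : CharZero (MvPolynomial (Fin n) K ⧸ P) :=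
    charZero_of_injective_algebraMap (R := K) (algebraMap K _).injective
  obtain ⟨Q, hQ, hQP⟩ : ∃ Q : Ideal B, Q.IsMaximal ∧ Q.LiesOver P := by
    obtain ⟨Q, hQ, hQP⟩ := Ideal.exists_ideal_over_maximal_of_isIntegral (S := B) P (by
      rw [(RingHom.injective_iff_ker_eq_bot _).1 hinj]; exact bot_le)
    exact ⟨Q, hQ, ⟨hQP.symm⟩⟩
  have hmem : ∀ a, algebraMap _ B a ∈ Q ↔ MvPolynomial.eval τ a = 0 := by
    intro a
    have h1 : P = Q.comap (algebraMap _ B) := hQP.over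
    rw [← Ideal.mem_comap, ← h1]
    exact RingHom.mem_ker
  by_cases hD : MulAction.stabilizer (B ≃ₐ[MvPolynomial (Fin n) K] B) Q = ⊤
  · right
    -- reduction modulo `Q` agrees with evaluation at `τ`
    have hred : (Ideal.Quotient.mk Q).comp φ =
        ((Ideal.Quotient.mk Q).comp (φ.comp MvPolynomial.C)).comp
          (MvPolynomial.eval (fun i => algebraMap K L (τ i))) := by
      apply MvPolynomial.ringHom_ext
      · intro r; simp
      · intro i
        simp only [RingHom.comp_apply, MvPolynomial.eval_X]
        rw [Ideal.Quotient.eq]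
        have h1 : φ (MvPolynomial.X i) - φ (MvPolynomial.C (algebraMap K L (τ i)))
            = algebraMap _ B (MvPolynomial.X i - MvPolynomial.C (τ i)) := by
          rw [← hφ]; simp
        rw [h1, hmem]; simp
    have h1 : φ (F.eval (MvPolynomial.C ρ)) ∈ Q := by
      rw [← Ideal.Quotient.eq_zero_iff_mem]
      have h2 := congrArg (fun f => f (F.eval (MvPolynomial.C ρ))) hred
      refine h2.trans ?_
      rw [RingHom.comp_apply, ← Polynomial.eval₂_at_apply, MvPolynomial.eval_C, hρ, map_zero]
    have h2 : ∃ θ ∈ s, φ (MvPolynomial.C ρ) - θ ∈ Q := by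
      rw [← Polynomial.eval₂_at_apply, ← Polynomial.eval_map, hs,
        Polynomial.eval_multiset_prod, Multiset.map_map] at h1
      obtain ⟨x, hx, hxQ⟩ := (hQ.isPrime.multiset_prod_mem_iff_exists_mem _).1 h1
      obtain ⟨θ, hθ, rfl⟩ := Multiset.mem_map.1 hx
      exact ⟨θ, hθ, by simpa using hxQ⟩
    obtain ⟨θ, hθ, hθQ⟩ := h2
    refine Set.mem_iUnion.2 ⟨⟨θ, Multiset.mem_toFinset.2 hθ⟩, ?_⟩
    have h3 : φ (MvPolynomial.C ρ) - σ θ hθ θ ∈ Q := by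
      have h4 : σ θ hθ ∈ MulAction.stabilizer (B ≃ₐ[MvPolynomial (Fin n) K] B) Q := by
        rw [hD]; trivial
      have h5 := Ideal.smul_mem_pointwise_smul (σ θ hθ) _ Q hθQ
      rw [MulAction.mem_stabilizer_iff.1 h4] at h5
      simpa [AlgEquiv.smul_def, hσ1] using h5
    have h6 : σ θ hθ θ - θ ∈ Q := by
      have := Q.sub_mem hθQ h3
      simpa using this
    show MvPolynomial.eval τ _ = 0
    rw [← hmem]
    exact Ideal.coeff_zero_mem_comap_of_root_mem h6 (minpoly.aeval _ _)
  · left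
    refine Set.mem_iUnion.2 ⟨⟨_, hD⟩, ?_⟩
    obtain ⟨a, ha⟩ := exists_sub_mem_of_stabilizer_fixed P Q _ (hη1 _ hD)
    refine ⟨MvPolynomial.eval τ a, ?_⟩
    rw [Polynomial.eval_map, Polynomial.eval₂_at_apply, ← hmem]
    have h1 := minpoly.aeval (MvPolynomial (Fin n) K) (η _ hD)
    rw [← Ideal.Quotient.eq_zero_iff_mem]
    have h2 : Ideal.Quotient.mk Q (η _ hD) = Ideal.Quotient.mk Q (algebraMap _ B a) :=
      (Ideal.Quotient.eq).2 ha
    have h3 := congrArg (Ideal.Quotient.mk Q) h1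
    rw [Polynomial.aeval_def, Polynomial.hom_eval₂, h2, ← Polynomial.hom_eval₂,
      Polynomial.eval₂_at_apply, map_zero] at h3
    exact h3
end

theorem exists_galois_split.{u, v} {E : Type u} {M : Type v} [Field E] [Field M] [CharZero E] [Algebra E M]
    [FiniteDimensional E M] (p : Polynomial M) :
    ∃ (Ω : Type v) (_ : Field Ω) (_ : Algebra E Ω) (_ : Algebra M Ω) (_ : IsScalarTower E M Ω),
      FiniteDimensional E Ω ∧ IsGalois E Ω ∧ (p.map (algebraMap M Ω)).Splits := by
  let N := p.SplittingField
  have : FiniteDimensional E N := FiniteDimensional.trans E M N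
  have : Algebra.IsAlgebraic E (AlgebraicClosure N) := Algebra.IsAlgebraic.trans E N _
  have : IsAlgClosure E (AlgebraicClosure N) := ⟨inferInstance, inferInstance⟩
  have : Normal E (AlgebraicClosure N) := IsAlgClosure.normal E _
  let Ω := IntermediateField.normalClosure E N (AlgebraicClosure N)
  let : Algebra M Ω := ((algebraMap N Ω).comp (algebraMap M N)).toAlgebra
  have : IsScalarTower M N Ω := .of_algebraMap_eq fun _ => rfl
  have : IsScalarTower E M Ω := .of_algebraMap_eq fun x => by
    rw [IsScalarTower.algebraMap_apply E N Ω, IsScalarTower.algebraMap_apply E M N]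
    rfl
  refine ⟨Ω, inferInstance, inferInstance, inferInstance, this, inferInstance, ⟨⟩, ?_⟩
  rw [IsScalarTower.algebraMap_eq M N Ω, ← Polynomial.map_map]
  exact (Polynomial.SplittingField.splits p).map _

theorem exists_galois_model.{u, v} (A : Type u) (C : Type v) [CommRing A] [IsDomain A] [IsIntegrallyClosed A]
    [CharZero A] [CommRing C] [IsDomain C] [IsIntegrallyClosed C] [Algebra A C]
    [Module.Finite A C] [FaithfulSMul A C] (p : Polynomial C) (hp : p.Monic)
    (hr : ∀ Q, p.eval Q ≠ 0) :
    ∃ (B : Type v) (_ : CommRing B) (_ : IsDomain B) (_ : Algebra A B) (φ : C →ₐ[A] B)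
      (s : Multiset B), Function.Injective (algebraMap A B) ∧ Finite (B ≃ₐ[A] B) ∧
      Algebra.IsInvariant A B (B ≃ₐ[A] B) ∧
      (∀ H : Subgroup (B ≃ₐ[A] B), H ≠ ⊤ →
        ∃ η : B, (∀ g ∈ H, g η = η) ∧ η ∉ (algebraMap A B).range) ∧
      p.map (φ : C →+* B) = (s.map fun θ => Polynomial.X - Polynomial.C θ).prod ∧
      ∀ θ ∈ s, ∃ σ : B ≃ₐ[A] B, (∀ c, σ (φ c) = φ c) ∧ σ θ ≠ θ := by
  let E := FractionRing A
  let M := FractionRing C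
  let : Algebra E M := FractionRing.liftAlgebra A M
  have : IsScalarTower A E M := FractionRing.isScalarTower_liftAlgebra A M
  have : CharZero E := charZero_of_injective_algebraMap (IsFractionRing.injective A E)
  have : FiniteDimensional E M := .of_isLocalization A C (nonZeroDivisors A)
  obtain ⟨Ω, _, _, _, _, hfin, hgal, hsplit⟩ :=
    exists_galois_split (E := E) (p.map (algebraMap C M))
  let : Algebra A Ω := ((algebraMap E Ω).comp (algebraMap A E)).toAlgebra
  have : IsScalarTower A E Ω := .of_algebraMap_eq fun _ => rfl
  let : Algebra C Ω := ((algebraMap M Ω).comp (algebraMap C M)).toAlgebra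
  have : IsScalarTower C M Ω := .of_algebraMap_eq fun _ => rfl
  have : IsScalarTower A C Ω := .of_algebraMap_eq fun x => by
    rw [IsScalarTower.algebraMap_apply A E Ω, IsScalarTower.algebraMap_apply C M Ω,
      ← IsScalarTower.algebraMap_apply A C M, IsScalarTower.algebraMap_apply A E M,
      ← IsScalarTower.algebraMap_apply E M Ω]
  have hEΩ : Algebra.IsAlgebraic E Ω := Algebra.IsAlgebraic.of_finite E Ω
  let B := integralClosure A Ω
  have : IsFractionRing B Ω := integralClosure.isFractionRing_of_finite_extension E Ω
  have hAΩ : Function.Injective (algebraMap A Ω) :=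
    (algebraMap E Ω).injective.comp (IsFractionRing.injective A E)
  have hBΩ : Function.Injective (algebraMap B Ω) := Subtype.val_injective
  have hCint : Algebra.IsIntegral A C := inferInstance
  let φ : C →ₐ[A] B := (IsScalarTower.toAlgHom A C Ω).codRestrict B
    (fun c => (hCint.isIntegral c).map (IsScalarTower.toAlgHom A C Ω))
  have hφ : ∀ c, algebraMap B Ω (φ c) = algebraMap C Ω c := fun c => rfl
  have hsplit' : (p.map (algebraMap C Ω)).Splits := by
    rw [IsScalarTower.algebraMap_eq C M Ω, ← Polynomial.map_map]; exact hsplit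
  have hpm : (p.map (algebraMap C Ω)).Monic := hp.map _
  have hroot : ∀ θ ∈ (p.map (algebraMap C Ω)).roots, IsIntegral A θ := by
    intro θ hθ
    have h1 : IsIntegral C θ := ⟨p, hp, by
      rw [← Polynomial.eval_map]; exact Polynomial.isRoot_of_mem_roots hθ⟩
    exact isIntegral_trans θ h1
  obtain ⟨s, hs⟩ : ∃ s : Multiset B, s.map (algebraMap B Ω) = (p.map (algebraMap C Ω)).roots := by
    refine ⟨(p.map (algebraMap C Ω)).roots.attach.map fun θ => ⟨θ.1, hroot θ.1 θ.2⟩, ?_⟩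
    rw [Multiset.map_map]
    exact Multiset.attach_map_val _
  have galr : ∀ (σ : Ω ≃ₐ[E] Ω) (b : B), algebraMap B Ω (galRestrict A E Ω B σ b)
      = σ (algebraMap B Ω b) := fun σ b => algebraMap_galRestrict_apply A σ b
  refine ⟨B, inferInstance, inferInstance, inferInstance, φ, s, ?_, ?_, ?_, ?_, ?_, ?_⟩
  · exact Function.Injective.of_comp (f := algebraMap B Ω) (by
      rw [← RingHom.coe_comp, ← IsScalarTower.algebraMap_eq]; exact hAΩ)
  · exact Finite.of_equiv _ (galRestrict A E Ω B).toEquiv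
  · exact Algebra.isInvariant_of_isGalois' A E Ω B
  · intro H hH
    by_contra! hc
    apply hH
    let H' : Subgroup (Ω ≃ₐ[E] Ω) := H.comap (galRestrict A E Ω B).toMonoidHom
    have hfix : IntermediateField.fixedField H' = ⊥ := by
      rw [eq_bot_iff]
      intro y hy
      obtain ⟨x, a, ha, hxa⟩ : ∃ (x : B) (a : A), a ≠ 0 ∧
          algebraMap B Ω x = algebraMap A Ω a * y := by
        have hy' : IsAlgebraic A y :=
          (IsFractionRing.isAlgebraic_iff A E Ω).2 (Algebra.IsAlgebraic.isAlgebraic y)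
        obtain ⟨a, ha, h⟩ := hy'.exists_integral_multiple
        exact ⟨⟨_, h⟩, a, ha, Algebra.smul_def a y⟩
      obtain ⟨a', ha'⟩ := hc x (by
        intro g hg
        obtain ⟨σ, rfl⟩ := (galRestrict A E Ω B).surjective g
        apply hBΩ
        rw [galr, hxa, map_mul]
        have h1 : σ y = y := hy ⟨σ, hg⟩
        rw [h1, IsScalarTower.algebraMap_apply A E Ω, AlgEquiv.commutes])
      rw [IntermediateField.mem_bot]
      refine ⟨algebraMap A E a' / algebraMap A E a, ?_⟩
      have ha0 : algebraMap A Ω a ≠ 0 := by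
        rwa [Ne, map_eq_zero_iff _ hAΩ]
      rw [map_div₀, ← IsScalarTower.algebraMap_apply, ← IsScalarTower.algebraMap_apply,
        div_eq_iff ha0, mul_comm, ← hxa, ← ha', ← IsScalarTower.algebraMap_apply]
    have hH' : H' = ⊤ := by
      rw [← IntermediateField.fixingSubgroup_fixedField H', hfix,
        IntermediateField.fixingSubgroup_bot]
    rw [eq_top_iff]
    intro g _
    obtain ⟨σ, rfl⟩ := (galRestrict A E Ω B).surjective g
    have : σ ∈ H' := by rw [hH']; trivial
    exact this
  · apply Polynomial.map_injective _ hBΩ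
    rw [Polynomial.map_map, show (algebraMap B Ω).comp (φ : C →+* B) = algebraMap C Ω from rfl]
    rw [Polynomial.map_multiset_prod, Multiset.map_map]
    conv_lhs => rw [hsplit'.eq_prod_roots_of_monic hpm, ← hs, Multiset.map_map]
    simp
    rfl
  · intro θ hθ
    have hθr : algebraMap B Ω θ ∈ (p.map (algebraMap C Ω)).roots := by
      rw [← hs]; exact Multiset.mem_map_of_mem _ hθ
    have hθ0 : p.eval₂ (algebraMap C Ω) (algebraMap B Ω θ) = 0 := by
      rw [← Polynomial.eval_map]; exact Polynomial.isRoot_of_mem_roots hθr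
    have : FiniteDimensional M Ω := FiniteDimensional.right E M Ω
    have : IsGalois M Ω := IsGalois.tower_top_of_isGalois E M Ω
    have hnot : algebraMap B Ω θ ∉ Set.range (algebraMap M Ω) := by
      rintro ⟨m, hm⟩
      have h1 : Polynomial.aeval m p = 0 := by
        rw [← hm, IsScalarTower.algebraMap_eq C M Ω, ← Polynomial.hom_eval₂] at hθ0
        exact (map_eq_zero_iff _ (algebraMap M Ω).injective).1 hθ0
      obtain ⟨c, hc⟩ := IsIntegrallyClosed.algebraMap_eq_of_integral (R := C) (K := M)
        (x := m) ⟨p, hp, h1⟩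
      apply hr c
      rw [← hc, Polynomial.aeval_def, Polynomial.eval₂_at_apply] at h1
      exact (map_eq_zero_iff _ (IsFractionRing.injective C M)).1 h1
    rw [IsGalois.mem_range_algebraMap_iff_fixed] at hnot
    push Not at hnot
    obtain ⟨σ, hσ⟩ := hnot
    refine ⟨galRestrict A E Ω B (σ.restrictScalars E), ?_, ?_⟩
    · intro c
      apply hBΩ
      rw [galr, hφ, IsScalarTower.algebraMap_apply C M Ω]
      exact σ.commutes _
    · intro h
      apply hσ
      have := congrArg (algebraMap B Ω) h
      rw [galr] at this
      exact this

theorem mvPolynomial_finite (K L : Type*) [Field K] [Field L] [Algebra K L]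
    [FiniteDimensional K L] (n : ℕ) :
    letI : Algebra (MvPolynomial (Fin n) K) (MvPolynomial (Fin n) L) :=
      MvPolynomial.algebraMvPolynomial
    Module.Finite (MvPolynomial (Fin n) K) (MvPolynomial (Fin n) L) := by
  letI : Algebra (MvPolynomial (Fin n) K) (MvPolynomial (Fin n) L) :=
    MvPolynomial.algebraMvPolynomial
  have h : Algebra.IsPushout K (MvPolynomial (Fin n) K) L (MvPolynomial (Fin n) L) :=
    inferInstance
  exact Module.Finite.equiv h.1.equiv

theorem thin_two_finite (K L : Type*) [Field K] [CharZero K] [Field L] [Algebra K L]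
    [FiniteDimensional K L] {n : ℕ} (F : Polynomial (MvPolynomial (Fin n) L))
    (hF : Irreducible F) (hd : 2 ≤ F.natDegree) :
    IsThin K n {τ | ∃ ρ : L,
      (F.map (MvPolynomial.eval (fun i => algebraMap K L (τ i)))).eval ρ = 0} := by
  obtain ⟨G, hG, hGr, hGτ⟩ := monic_reduction L L F hF hd
  letI : Algebra (MvPolynomial (Fin n) K) (MvPolynomial (Fin n) L) :=
    MvPolynomial.algebraMvPolynomial
  have : Module.Finite (MvPolynomial (Fin n) K) (MvPolynomial (Fin n) L) :=
    mvPolynomial_finite K L n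
  have : FaithfulSMul (MvPolynomial (Fin n) K) (MvPolynomial (Fin n) L) := by
    rw [faithfulSMul_iff_algebraMap_injective]
    exact MvPolynomial.map_injective _ (algebraMap K L).injective
  have : CharZero (MvPolynomial (Fin n) K) := inferInstance
  obtain ⟨B, _, _, _, φ, s, hinj, hfin, hinv, hH, hs, hσ⟩ :=
    exists_galois_model (MvPolynomial (Fin n) K) (MvPolynomial (Fin n) L) G hG hGr
  refine (thin_galois_core hinj hH (φ : MvPolynomial (Fin n) L →+* B) ?_ G s hs hσ).mono ?_
  · exact φ.comp_algebraMap
  · intro τ hτ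
    exact hGτ (fun i => algebraMap K L (τ i)) hτ

theorem descent_of_two (K L : Type*) [Field K] [Field L] [CharZero K] [Algebra K L] {n : ℕ}
    (h : ∀ F : Polynomial (MvPolynomial (Fin n) L), Irreducible F → 2 ≤ F.natDegree →
      IsThin K n {τ | ∃ ρ : L,
        (F.map (MvPolynomial.eval (fun i => algebraMap K L (τ i)))).eval ρ = 0})
    (Υ : Set (Fin n → L)) (hΥ : IsThin L n Υ) :
    IsThin K n {τ : Fin n → K | (fun i => algebraMap K L (τ i)) ∈ Υ} := by
  obtain ⟨m, S, hS, hΥS⟩ := hΥ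
  refine IsThin.mono (T := ⋃ i, {τ : Fin n → K | (fun i => algebraMap K L (τ i)) ∈ S i})
    (IsThin.iUnion fun i => ?_) ?_
  · rcases hS i with ⟨F, hF, hE⟩ | ⟨F, hF, hd, hE⟩
    · rw [hE]; exact IsThin.zeros F hF
    · rw [hE]; exact h F hF hd
  · intro τ hτ
    obtain ⟨i, hi⟩ := Set.mem_iUnion.1 (hΥS hτ)
    exact Set.mem_iUnion.2 ⟨i, hi⟩

theorem descent_finite (K L : Type*) [Field K] [Field L] [CharZero K] [Algebra K L]
    [FiniteDimensional K L] {n : ℕ} (Υ : Set (Fin n → L)) (hΥ : IsThin L n Υ) :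
    IsThin K n {τ : Fin n → K | (fun i => algebraMap K L (τ i)) ∈ Υ} :=
  descent_of_two K L (fun F hF hd => thin_two_finite K L F hF hd) Υ hΥ

theorem descent_transcendental {E M : Type*} [Field E] [CharZero E] [Field M] [Algebra E M]
    (x : M) (hx : Transcendental E x) {n : ℕ}
    (Υ : Set (Fin n → IntermediateField.adjoin E {x}))
    (hΥ : IsThin (IntermediateField.adjoin E {x}) n Υ) :
    IsThin E n {τ : Fin n → E |
      (fun i => algebraMap E (IntermediateField.adjoin E {x}) (τ i)) ∈ Υ} := by
  refine descent_of_two E _ (fun F hF hd => ?_) Υ hΥ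
  let f := RatFunc.algEquivOfTranscendental x hx
  letI : Algebra (Polynomial E) (IntermediateField.adjoin E {x}) :=
    ((f : RatFunc E →+* _).comp (algebraMap (Polynomial E) (RatFunc E))).toAlgebra
  let f' : RatFunc E ≃ₐ[Polynomial E] IntermediateField.adjoin E {x} :=
    { f with commutes' := fun r => rfl }
  have : IsFractionRing (Polynomial E) (IntermediateField.adjoin E {x}) :=
    IsLocalization.isLocalization_of_algEquiv _ f'
  have h := thin_two_ratfunc E (IntermediateField.adjoin E {x}) F hF hd
  have hc : ∀ e : E, algebraMap (Polynomial E) (IntermediateField.adjoin E {x})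
      (Polynomial.C e) = algebraMap E _ e := by
    intro e
    change f (algebraMap (Polynomial E) (RatFunc E) (Polynomial.C e)) = _
    rw [RatFunc.algebraMap_C, ← RatFunc.algebraMap_eq_C]
    exact f.commutes e
  simpa only [hc] using h

theorem thin_inter_base_field (K L : Type*) [Field K] [Field L] [CharZero K]
    [Algebra K L] (hfg : (⊤ : IntermediateField K L).FG)
    (n : ℕ) (hn : 1 ≤ n) (Υ : Set (Fin n → L)) (hΥ : IsThin L n Υ) :
    IsThin K n {τ : Fin n → K | (fun i => algebraMap K L (τ i)) ∈ Υ} := by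
  have key : ∀ Υ : Set (Fin n → (⊤ : IntermediateField K L)),
      IsThin (⊤ : IntermediateField K L) n Υ →
      IsThin K n {τ : Fin n → K | (fun i => algebraMap K (⊤ : IntermediateField K L) (τ i)) ∈ Υ} := by
    refine IntermediateField.induction_on_adjoin_fg
      (fun E => ∀ Υ : Set (Fin n → E), IsThin E n Υ →
        IsThin K n {τ : Fin n → K | (fun i => algebraMap K E (τ i)) ∈ Υ}) ?_ ?_ ⊤ hfg
    · intro Υ hΥ
      have : FiniteDimensional K (⊥ : IntermediateField K L) := inferInstance
      exact descent_finite K _ Υ hΥ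
    · intro E x ih Υ hΥ
      have : CharZero E := charZero_of_injective_algebraMap (algebraMap K E).injective
      by_cases hx : IsAlgebraic E x
      · have : FiniteDimensional E (IntermediateField.adjoin E {x}) :=
          IntermediateField.adjoin.finiteDimensional hx.isIntegral
        exact ih _ (descent_finite E (IntermediateField.adjoin E {x}) Υ hΥ)
      · exact ih _ (descent_transcendental x hx Υ hΥ)
  have : CharZero (⊤ : IntermediateField K L) :=
    charZero_of_injective_algebraMap (algebraMap K (⊤ : IntermediateField K L)).injective
  have : FiniteDimensional (⊤ : IntermediateField K L) L :=
    Module.Finite.of_surjective (Algebra.linearMap (⊤ : IntermediateField K L) L)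
      (fun y => ⟨⟨y, IntermediateField.mem_top⟩, rfl⟩)
  exact key _ (descent_finite (⊤ : IntermediateField K L) L Υ hΥ)
end
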